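/- For each even natural number k, Σ'_{|d| ≤ X} L(1/2, χ_d)^k ≫_k X (log X)^{k(k+1)/2}, where the sum is over fundamental discriminants d with |d| ≤ X and χ_d is the associated real primitive quadratic character. -/

import Mathlib

open Filter
open scoped Classical

/-- `d` is a fundamental discriminant: either `d ≡ 1 (mod 4)` and `d` is squarefree,
or `d = 4m` with `m` squarefree and `m ≡ 2, 3 (mod 4)`; we exclude the trivial
discriminant `d = 1`. -/
def IsFundamentalDiscriminant (d : ℤ) : Prop :=
  d ≠ 1 ∧ ((d % 4 = 1 ∧ Squarefree d) ∨
    (d % 4 = 0 ∧ Squarefree (d / 4) ∧ (d / 4 % 4 = 2 ∨ d / 4 % 4 = 3)))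

theorem IsFundamentalDiscriminant.natAbs_ne_zero {d : ℤ}
    (h : IsFundamentalDiscriminant d) : NeZero d.natAbs := by
  constructor
  intro h0
  have hd0 : d = 0 := Int.natAbs_eq_zero.mp h0
  subst hd0
  rcases h with ⟨-, ⟨h3, -⟩ | ⟨-, h4, -⟩⟩
  · norm_num at h3
  · norm_num at h4

namespace LBSM
lemma hsc {ι : Type*} {f g : ι → ℂ} {a : ℂ} (h : ∀ i, f i = g i) : HasSum f a ↔ HasSum g a := by
  rw [funext h]

open Complex in
lemma theta_class (N : ℕ) (hN : 0 < N) (x : ℕ) (w : ℂ) (hw : 0 < w.im) :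
    HasSum (fun j : ℤ => cexp (Real.pi * I * ((j * N + x : ℤ) : ℂ) ^ 2 * w))
      (1 / (-I * (N ^ 2 * w)) ^ (1 / 2 : ℂ) * jacobiTheta₂ (x / N) (-1 / (N ^ 2 * w))) := by
  have hN0 : (N : ℂ) ≠ 0 := by exact_mod_cast hN.ne'
  have hw0 : w ≠ 0 := by rintro rfl; simp at hw
  have hW : 0 < ((N : ℂ) ^ 2 * w).im := by
    have : ((N : ℂ) ^ 2 * w).im = (N : ℝ) ^ 2 * w.im := by
      rw [show ((N : ℂ) ^ 2 * w) = (((N : ℝ) ^ 2 : ℝ) : ℂ) * w by push_cast; rfl, Complex.im_ofReal_mul]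
    rw [this]; positivity
  have h := (hasSum_jacobiTheta₂_term ((x / N : ℂ) * (N ^ 2 * w)) hW).mul_left
    (cexp (Real.pi * I * (x / N : ℂ) ^ 2 * (N ^ 2 * w)))
  rw [jacobiTheta₂_functional_equation] at h
  have e2 : (cexp (Real.pi * I * (x / N : ℂ) ^ 2 * (N ^ 2 * w))) *
      (1 / (-I * (N ^ 2 * w)) ^ (1 / 2 : ℂ) * cexp (-Real.pi * I * ((x / N : ℂ) * (N ^ 2 * w)) ^ 2 / (N ^ 2 * w)) *
        jacobiTheta₂ ((x / N : ℂ) * (N ^ 2 * w) / (N ^ 2 * w)) (-1 / (N ^ 2 * w))) =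
      (1 / (-I * (N ^ 2 * w)) ^ (1 / 2 : ℂ) * jacobiTheta₂ (x / N) (-1 / (N ^ 2 * w))) := by
    rw [mul_div_assoc (x / N : ℂ), div_self (mul_ne_zero (pow_ne_zero _ hN0) hw0), mul_one]
    rw [mul_comm (1 / _) (cexp _), mul_assoc (cexp _), ← mul_assoc, ← Complex.exp_add]
    have : (Real.pi * I * (x / N : ℂ) ^ 2 * (N ^ 2 * w)) + -Real.pi * I * ((x / N : ℂ) * (N ^ 2 * w)) ^ 2 / (N ^ 2 * w) = 0 := by
      field_simp
      ring
    rw [this, Complex.exp_zero, one_mul]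
  rw [e2] at h
  refine (hsc (fun j => ?_)).mp h
  rw [jacobiTheta₂_term, ← Complex.exp_add]
  congr 1
  push_cast
  field_simp
  ring

open Complex in
lemma theta_periodic (N : ℕ) (hN : 0 < N) (c : ℤ → ℂ) (hc : ∀ j x : ℤ, c (j * N + x) = c x)
    (w : ℂ) (hw : 0 < w.im) :
    HasSum (fun n : ℤ => c n * cexp (Real.pi * I * (n : ℂ) ^ 2 * w))
      (1 / (-I * (N ^ 2 * w)) ^ (1 / 2 : ℂ) *
        ∑ x ∈ Finset.range N, c x * jacobiTheta₂ (x / N) (-1 / (N ^ 2 * w))) := by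
  have hNz : (N : ℤ) ≠ 0 := by exact_mod_cast hN.ne'
  have key : ∀ x ∈ Finset.range N, HasSum (fun n : ℤ => if n % N = x then
      c n * cexp (Real.pi * I * (n : ℂ) ^ 2 * w) else 0)
      (c x * (1 / (-I * (N ^ 2 * w)) ^ (1 / 2 : ℂ) * jacobiTheta₂ (x / N) (-1 / (N ^ 2 * w)))) := by
    intro x hx
    have hinj : Function.Injective (fun j : ℤ => j * N + (x : ℤ)) := by
      intro a b hab
      simpa [hN.ne'] using hab
    rw [← hinj.hasSum_iff]
    · refine (hsc (fun j => ?_)).mp ((theta_class N hN x w hw).mul_left (c x))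
      have hmod : (j * N + (x : ℤ)) % N = x := by
        rw [Int.add_comm, Int.add_mul_emod_self_right]
        exact Int.emod_eq_of_lt (by positivity) (by exact_mod_cast Finset.mem_range.mp hx)
      simp only [Function.comp, hmod, if_true, hc]
    · intro n hn
      rw [if_neg]
      intro h
      apply hn
      refine ⟨n / N, ?_⟩
      simp only
      rw [← h]
      exact Int.ediv_mul_add_emod n N
  have := hasSum_sum key
  have e3 : ∑ x ∈ Finset.range N, (c x * (1 / (-I * (N ^ 2 * w)) ^ (1 / 2 : ℂ) * jacobiTheta₂ (x / N) (-1 / (N ^ 2 * w)))) = (1 / (-I * (N ^ 2 * w)) ^ (1 / 2 : ℂ) *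
        ∑ x ∈ Finset.range N, c x * jacobiTheta₂ (x / N) (-1 / (N ^ 2 * w))) := by
    rw [Finset.mul_sum]
    refine Finset.sum_congr rfl fun x _ => by ring
  rw [e3] at this
  · refine (hsc (fun n => ?_)).mp this
    have h0 := Int.emod_nonneg n hNz
    have h1 := Int.emod_lt_of_pos n (show (0 : ℤ) < N by exact_mod_cast hN)
    rw [Finset.sum_eq_single (n % N).toNat]
    · rw [if_pos]; omega
    · intro b _ hb
      rw [if_neg]; omega
    · intro h
      exfalso; apply h
      rw [Finset.mem_range]; omega

open Complex in
lemma theta_tendsto {α : Type*} {l : Filter α} (a : ℝ) (τ : α → ℂ)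
    (hτ : Tendsto (fun t => (τ t).im) l atTop) :
    Tendsto (fun t => jacobiTheta₂ a (τ t)) l (nhds 1) := by
  have hb := summable_pow_mul_jacobiTheta₂_term_bound 0 one_pos 0
  have h := tendsto_tsum_of_dominated_convergence (𝓕 := l)
    (f := fun t (n : ℤ) => jacobiTheta₂_term n a (τ t)) (g := fun n : ℤ => if n = 0 then 1 else 0)
    hb ?_ ?_
  · rw [tsum_ite_eq] at h
    exact h
  · intro n
    by_cases hn : n = 0
    · simp [hn, jacobiTheta₂_term, tendsto_const_nhds]
    · simp only [hn, if_false]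
      rw [tendsto_zero_iff_norm_tendsto_zero]
      simp only [norm_jacobiTheta₂_term]
      apply Real.tendsto_exp_atBot.comp
      have : (fun t => -Real.pi * (n:ℝ) ^ 2 * (τ t).im - 2 * Real.pi * n * (a : ℂ).im) =
        fun t => -(Real.pi * (n:ℝ) ^ 2 * (τ t).im) := by ext; simp
      rw [this]
      apply tendsto_neg_atTop_atBot.comp
      apply Tendsto.const_mul_atTop _ hτ
      have : (n : ℝ) ≠ 0 := by exact_mod_cast hn
      have := Real.pi_pos
      positivity
  · filter_upwards [hτ.eventually_ge_atTop 1] with t ht n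
    have := norm_jacobiTheta₂_term_le one_pos (z := (a : ℂ)) (S := 0) (by simp) ht n
    simpa using this
end LBSM

namespace LBSM
open Complex in
lemma gauss_aux (d : ℕ) (hd : d % 4 = 1) (ε : ℝ) (hε : 0 < ε) :
    ∑ x ∈ Finset.range d, cexp (2 * Real.pi * I * (x : ℂ) ^ 2 / d) *
        jacobiTheta₂ ((x / d : ℝ) : ℂ) (I / (d ^ 2 * ε)) =
      1 / ((ε + -I * (2 / d)) ^ (1 / 2 : ℂ) * (1 / (1 + I * (d * ε / 2))) ^ (1 / 2 : ℂ)) *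
       (jacobiTheta₂ ((0 : ℝ) : ℂ) (I / (d ^ 2 * ε) - 1 / (2 * d)) -
        I * jacobiTheta₂ ((1 / 2 : ℝ) : ℂ) (I / (d ^ 2 * ε) - 1 / (2 * d))) := by
  have hd0 : 0 < d := by omega
  have hdC : (d : ℂ) ≠ 0 := by exact_mod_cast hd0.ne'
  have hεC : (ε : ℂ) ≠ 0 := by exact_mod_cast hε.ne'
  set w : ℂ := I * ε with hw
  have hwim : 0 < w.im := by simp [hw, hε]
  have hw0 : w ≠ 0 := by simp [hw, hε.ne']
  set τ : ℂ := 2 / d + w with hτ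
  have hτim : 0 < τ.im := by
    have : τ.im = w.im := by
      rw [hτ, Complex.add_im]
      have : (2 / d : ℂ) = ((2 / d : ℝ) : ℂ) := by push_cast; rfl
      rw [this, Complex.ofReal_im, zero_add]
    rw [this]; exact hwim
  have hτ0 : τ ≠ 0 := by intro h; rw [h] at hτim; simp at hτim
  have hone : (1 + I * (d * ε / 2) : ℂ) ≠ 0 := by
    intro h
    have := congrArg Complex.re h
    simp at this
  set w' : ℂ := (d ^ 2 * w / 4) / (1 + I * (d * ε / 2)) with hw'
  have hinv : -1 / τ = -(d : ℂ) / 2 + w' := by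
    have e : τ = (2 / d) * (1 + I * (d * ε / 2)) := by
      rw [hτ, hw]; field_simp
    rw [e, hw', hw]
    generalize hPd : (1 + I * (d * ε / 2) : ℂ) = P at hone
    have hI : I * d * ε = 2 * (P - 1) := by rw [← hPd]; ring
    field_simp
    linear_combination (-2) * hI
  have hw'im : 0 < w'.im := by
    have h1 : 0 < (-1 / τ).im := by
      rw [neg_div, neg_im, one_div, inv_im, neg_div, neg_neg]
      exact div_pos hτim (Complex.normSq_pos.mpr hτ0)
    rw [hinv] at h1
    have : (-(d : ℂ) / 2) = ((-d / 2 : ℝ) : ℂ) := by push_cast; rfl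
    rwa [this, Complex.add_im, Complex.ofReal_im, zero_add] at h1
  -- first evaluation
  have A := theta_periodic d hd0 (fun n : ℤ => cexp (2 * Real.pi * I * (n : ℂ) ^ 2 / d)) (by
    intro j x
    rw [Complex.exp_eq_exp_iff_exists_int]
    refine ⟨j ^ 2 * d + 2 * j * x, ?_⟩
    push_cast
    field_simp
    ring) w hwim
  have A' : HasSum (fun n : ℤ => jacobiTheta₂_term n 0 τ) _ := (hsc (fun n => by
    rw [jacobiTheta₂_term, ← Complex.exp_add]
    congr 1
    rw [hτ]
    field_simp
    ring)).mp A
  have A2 := A'.unique (hasSum_jacobiTheta₂_term 0 hτim)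
  have B := theta_periodic 2 two_pos (fun n : ℤ => cexp (-Real.pi * I * (n : ℂ) ^ 2 * d / 2)) (by
    intro j x
    rw [Complex.exp_eq_exp_iff_exists_int]
    refine ⟨- (j ^ 2 * d + j * x * d), ?_⟩
    push_cast
    field_simp
    ring) w' hw'im
  have hinvim : 0 < (-1 / τ).im := by
    rw [neg_div, neg_im, one_div, inv_im, neg_div, neg_neg]
    exact div_pos hτim (Complex.normSq_pos.mpr hτ0)
  have B' : HasSum (fun n : ℤ => jacobiTheta₂_term n 0 (-1 / τ)) _ := (hsc (fun n => by
    rw [jacobiTheta₂_term, ← Complex.exp_add]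
    congr 1
    rw [hinv]
    ring)).mp B
  have B2 := B'.unique (hasSum_jacobiTheta₂_term 0 hinvim)
  rw [jacobiTheta₂_functional_equation 0 τ] at A2
  simp only [ne_eq, OfNat.ofNat_ne_zero, not_false_eq_true, zero_pow, mul_zero, zero_div,
    Complex.exp_zero, mul_one] at A2
  rw [← B2] at A2
  have hr1 : -I * ((d : ℂ) ^ 2 * w) = ((d ^ 2 * ε : ℝ) : ℂ) := by
    rw [hw]; push_cast; linear_combination (- (d : ℂ) ^ 2 * ε) * I_mul_I
  have hr2 : -1 / ((d : ℂ) ^ 2 * w) = I / (d ^ 2 * ε) := by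
    rw [hw]; field_simp; linear_combination - I_mul_I
  have hr3 : -I * (((2 : ℕ) : ℂ) ^ 2 * w') = ((d ^ 2 * ε : ℝ) : ℂ) * (1 / (1 + I * (d * ε / 2))) := by
    rw [hw', hw]; push_cast
    generalize (1 + I * (d * ε / 2) : ℂ) = P at hone
    field_simp; linear_combination (-4) * I_mul_I
  have hr4 : -1 / (((2 : ℕ) : ℂ) ^ 2 * w') = I / (d ^ 2 * ε) - 1 / (2 * d) := by
    rw [hw', hw]; push_cast
    generalize hPd : (1 + I * (d * ε / 2) : ℂ) = P at hone
    have hI : I * d * ε = 2 * (P - 1) := by rw [← hPd]; ring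
    field_simp
    linear_combination 2 * hI - 4 * I_mul_I
  have hr5 : -I * τ = ε + -I * (2 / d) := by
    rw [hτ, hw]; linear_combination (-(ε : ℂ)) * I_mul_I
  have hpos : (0 : ℝ) < d ^ 2 * ε := by positivity
  have hcp : (((d ^ 2 * ε : ℝ) : ℂ) * (1 / (1 + I * (d * ε / 2)))) ^ (1 / 2 : ℂ) =
      ((d ^ 2 * ε : ℝ) : ℂ) ^ (1 / 2 : ℂ) * (1 / (1 + I * (d * ε / 2))) ^ (1 / 2 : ℂ) := by
    have h1 : (1 / (1 + I * (d * ε / 2)) : ℂ) ≠ 0 := one_div_ne_zero hone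
    have h2 : ((d ^ 2 * ε : ℝ) : ℂ) ≠ 0 := by exact_mod_cast hpos.ne'
    rw [Complex.cpow_def_of_ne_zero (mul_ne_zero h2 h1), Complex.cpow_def_of_ne_zero h2,
      Complex.cpow_def_of_ne_zero h1, ← Complex.exp_add, Complex.log_ofReal_mul hpos h1,
      Complex.ofReal_log hpos.le, add_mul]
  rw [hr1, hr2, hr3, hr4, hr5, hcp] at A2
  have hP : ((d ^ 2 * ε : ℝ) : ℂ) ^ (1 / 2 : ℂ) ≠ 0 := by
    rw [Ne, Complex.cpow_eq_zero_iff]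
    rintro ⟨h, -⟩
    exact hpos.ne' (by exact_mod_cast h)
  have hQ : cexp (-Real.pi * I * d / 2) = -I := by
    obtain ⟨m, hm⟩ : ∃ m, d = 4 * m + 1 := ⟨d / 4, by omega⟩
    have : (-Real.pi * I * d / 2 : ℂ) = -(Real.pi / 2 * I) + (-m : ℤ) * (2 * Real.pi * I) := by
      rw [hm]; push_cast; ring
    rw [this, Complex.exp_add, Complex.exp_int_mul_two_pi_mul_I, mul_one, Complex.exp_neg,
      Complex.exp_pi_div_two_mul_I, inv_I]
  simp only [Finset.sum_range_succ, Finset.sum_range_zero] at A2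
  push_cast at A2 ⊢
  simp only [ne_eq, OfNat.ofNat_ne_zero, not_false_eq_true, zero_pow, mul_zero, zero_div, zero_mul,
    Complex.exp_zero, one_mul, one_pow, mul_one, zero_add, hQ] at A2
  push_cast at hP
  have A3 := congrArg (fun z => ((d ^ 2 * ε : ℂ)) ^ (1 / 2 : ℂ) * z) A2
  rw [← mul_assoc, mul_one_div_cancel hP, one_mul] at A3
  rw [A3]
  simp only [one_div, mul_inv] at hP ⊢
  generalize ((d ^ 2 * ε : ℂ)) ^ (2⁻¹ : ℂ) = P at hP ⊢
  rw [neg_mul, ← sub_eq_add_neg]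
  have : P * P⁻¹ = 1 := mul_inv_cancel₀ hP
  rw [show ∀ a b c : ℂ, P * (a * (P⁻¹ * b * c)) = (P * P⁻¹) * (a * b * c) by intros; ring, this,
    one_mul, neg_mul, ← sub_eq_add_neg]

open Complex in
lemma gauss_sum_sq (d : ℕ) (hd : d % 4 = 1) :
    ∑ x ∈ Finset.range d, cexp (2 * Real.pi * I * (x : ℂ) ^ 2 / d) = (Real.sqrt d : ℂ) := by
  have hd0 : 0 < d := by omega
  have hdR : (0 : ℝ) < d := by exact_mod_cast hd0
  have hdC : (d : ℂ) ≠ 0 := by exact_mod_cast hd0.ne'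
  have him : Tendsto (fun ε : ℝ => (I / (d ^ 2 * ε) : ℂ).im) (nhdsWithin 0 (Set.Ioi 0)) atTop := by
    have e : (fun ε : ℝ => (I / (d ^ 2 * ε) : ℂ).im) = fun ε => (1 / (d : ℝ) ^ 2) * ε⁻¹ := by
      ext ε
      rw [show (I / (d ^ 2 * ε) : ℂ) = ((1 / (d : ℝ) ^ 2) * ε⁻¹ : ℝ) * I by
        push_cast; rw [div_eq_mul_inv, mul_inv]; ring, Complex.im_ofReal_mul, I_im, mul_one]
    rw [e]
    exact Tendsto.const_mul_atTop (by positivity) tendsto_inv_nhdsGT_zero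
  have him2 : Tendsto (fun ε : ℝ => (I / (d ^ 2 * ε) - 1 / (2 * d) : ℂ).im)
      (nhdsWithin 0 (Set.Ioi 0)) atTop := by
    have e : (fun ε : ℝ => (I / (d ^ 2 * ε) - 1 / (2 * d) : ℂ).im) =
        fun ε : ℝ => (I / (d ^ 2 * ε) : ℂ).im := by
      ext ε
      rw [show (1 / (2 * d) : ℂ) = ((1 / (2 * d) : ℝ) : ℂ) by push_cast; rfl, Complex.sub_im,
        Complex.ofReal_im, sub_zero]
    rw [e]; exact him
  have T1 : Tendsto (fun ε : ℝ => ∑ x ∈ Finset.range d, cexp (2 * Real.pi * I * (x : ℂ) ^ 2 / d) *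
        jacobiTheta₂ ((x / d : ℝ) : ℂ) (I / (d ^ 2 * ε))) (nhdsWithin 0 (Set.Ioi 0))
        (nhds (∑ x ∈ Finset.range d, cexp (2 * Real.pi * I * (x : ℂ) ^ 2 / d) * 1)) := by
    refine tendsto_finsetSum _ fun x _ => ?_
    exact (theta_tendsto _ _ him).const_mul _
  have hsl : ((0 : ℝ) + -I * (2 / d) : ℂ) ∈ slitPlane := by
    right
    rw [show ((0 : ℝ) + -I * (2 / d) : ℂ) = ((-(2 / d) : ℝ) : ℂ) * I by push_cast; ring,
      Complex.im_ofReal_mul, I_im, mul_one]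
    have : (0 : ℝ) < 2 / d := by positivity
    linarith
  have C1 : Tendsto (fun ε : ℝ => (ε + -I * (2 / d) : ℂ) ^ (1 / 2 : ℂ)) (nhdsWithin 0 (Set.Ioi 0))
      (nhds (((0 : ℝ) + -I * (2 / d) : ℂ) ^ (1 / 2 : ℂ))) := by
    refine Tendsto.mono_left ?_ nhdsWithin_le_nhds
    have : ContinuousAt (fun ε : ℝ => (ε + -I * (2 / d) : ℂ) ^ (1 / 2 : ℂ)) 0 := by
      refine ContinuousAt.cpow ?_ continuousAt_const hsl
      fun_prop
    exact this
  have C2 : Tendsto (fun ε : ℝ => (1 / (1 + I * (d * ε / 2)) : ℂ) ^ (1 / 2 : ℂ))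
      (nhdsWithin 0 (Set.Ioi 0)) (nhds 1) := by
    refine Tendsto.mono_left ?_ nhdsWithin_le_nhds
    have : ContinuousAt (fun ε : ℝ => (1 / (1 + I * (d * ε / 2)) : ℂ) ^ (1 / 2 : ℂ)) 0 := by
      refine ContinuousAt.cpow ?_ continuousAt_const (by simp)
      refine ContinuousAt.div continuousAt_const (by fun_prop) (by simp)
    simpa [ContinuousAt] using this
  have hne : ((0 : ℝ) + -I * (2 / d) : ℂ) ^ (1 / 2 : ℂ) ≠ 0 := by
    rw [Ne, Complex.cpow_eq_zero_iff]
    rintro ⟨h, -⟩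
    exact Complex.slitPlane_ne_zero hsl h
  have T2 : Tendsto (fun ε : ℝ => 1 / ((ε + -I * (2 / d)) ^ (1 / 2 : ℂ) * (1 / (1 + I * (d * ε / 2))) ^ (1 / 2 : ℂ)) *
       (jacobiTheta₂ ((0 : ℝ) : ℂ) (I / (d ^ 2 * ε) - 1 / (2 * d)) -
        I * jacobiTheta₂ ((1 / 2 : ℝ) : ℂ) (I / (d ^ 2 * ε) - 1 / (2 * d)))) (nhdsWithin 0 (Set.Ioi 0))
      (nhds (1 / (((0 : ℝ) + -I * (2 / d) : ℂ) ^ (1 / 2 : ℂ) * 1) * (1 - I * 1))) := by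
    refine Tendsto.mul (Tendsto.div tendsto_const_nhds (C1.mul C2) (by simpa using hne)) ?_
    exact (theta_tendsto _ _ him2).sub ((theta_tendsto _ _ him2).const_mul _)
  have T1' := T2.congr' (by
    filter_upwards [self_mem_nhdsWithin] with ε hε
    exact (gauss_aux d hd ε hε).symm)
  have := tendsto_nhds_unique T1 T1'
  simp only [mul_one] at this
  rw [this]
  have hsq : (0 : ℝ) < Real.sqrt d := Real.sqrt_pos.mpr hdR
  have hsqC : (Real.sqrt d : ℂ) ≠ 0 := by exact_mod_cast hsq.ne'
  have hss : (Real.sqrt d : ℂ) ^ 2 = d := by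
    exact_mod_cast Real.sq_sqrt hdR.le
  have e1 : ((0 : ℝ) + -I * (2 / d) : ℂ) = ((1 - I) / Real.sqrt d) ^ 2 := by
    rw [div_pow, hss]
    push_cast
    field_simp
    ring_nf
    simp only [I_sq]; ring
  have e2 : ((0 : ℝ) + -I * (2 / d) : ℂ) ^ (1 / 2 : ℂ) = (1 - I) / Real.sqrt d := by
    rw [e1]
    have hre : 0 < ((1 - I) / Real.sqrt d : ℂ).re := by
      rw [Complex.div_ofReal_re]; simp [hd0]
    have harg := Complex.abs_arg_lt_pi_div_two_iff.mpr (Or.inl hre)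
    rw [abs_lt] at harg
    have := Complex.pow_cpow_nat_inv (x := ((1 - I) / Real.sqrt d : ℂ)) (n := 2) two_ne_zero
      (by push_cast; exact harg.1) (by push_cast; exact harg.2.le)
    convert this using 2
    norm_num
  rw [e2]
  have h1I : (1 - I : ℂ) ≠ 0 := by
    intro h; have := congrArg Complex.re h; simp at this
  field_simp
end LBSM

namespace LBSM

/-- The Jacobi symbol as a Dirichlet character. -/
noncomputable def jchar (r : ℕ) [NeZero r] : DirichletCharacter ℂ r where
  toFun a := ((jacobiSym (a.val : ℤ) r : ℤ) : ℂ)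
  map_one' := by
    have : jacobiSym (((1 : ZMod r).val : ℕ) : ℤ) r = jacobiSym 1 r := by
      rw [jacobiSym.mod_left 1 r]
      have := ZMod.val_intCast (n := r) 1
      rw [← this]; simp
    rw [this, jacobiSym.one_left]; simp
  map_mul' a b := by
    rw [ZMod.val_mul, ← Int.cast_mul, ← jacobiSym.mul_left]
    congr 1
    rw [jacobiSym.mod_left ((a.val : ℤ) * b.val) r]
    push_cast; rfl
  map_nonunit' a ha := by
    have h : ¬ a.val.Coprime r := by
      rw [← ZMod.isUnit_iff_coprime, ZMod.natCast_zmod_val]; exact ha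
    have : jacobiSym (a.val : ℤ) r = 0 := by
      rw [jacobiSym.eq_zero_iff_not_coprime]
      rw [Int.gcd_natCast_natCast]; exact h
    rw [this]; simp

lemma jchar_intCast (r : ℕ) [NeZero r] (n : ℤ) : jchar r (n : ZMod r) = (jacobiSym n r : ℂ) := by
  change (((jacobiSym (((n : ZMod r).val : ℕ) : ℤ) r : ℤ)) : ℂ) = _
  rw [ZMod.val_intCast, ← jacobiSym.mod_left]

lemma jchar_natCast (r : ℕ) [NeZero r] (n : ℕ) : jchar r (n : ZMod r) = (jacobiSym n r : ℂ) := by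
  have := jchar_intCast r n
  simpa using this

lemma jchar_sq (r : ℕ) [NeZero r] : (jchar r) ^ 2 = 1 := by
  ext u
  rw [MulChar.pow_apply_coe, MulChar.one_apply_coe]
  have : ((u : ZMod r)) = (((u : ZMod r).val : ℕ) : ZMod r) := by simp
  rw [this, jchar_natCast, ← Int.cast_pow, jacobiSym.sq_one]
  · simp
  · rw [Int.gcd_natCast_natCast]
    have := u.isUnit
    rw [← ZMod.natCast_zmod_val (u : ZMod r), ZMod.isUnit_iff_coprime] at this
    exact this

lemma jchar_primitive (r : ℕ) [NeZero r] (ho : r % 2 = 1) (hs : Squarefree r) :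
    (jchar r).IsPrimitive := by
  rw [DirichletCharacter.isPrimitive_def]
  by_contra hne
  have hdvd := (jchar r).conductor_dvd_level
  obtain ⟨e, he⟩ := hdvd
  have he1 : e ≠ 1 := by
    rintro rfl; apply hne; omega
  obtain ⟨p, hp, e', rfl⟩ := Nat.exists_prime_and_dvd he1
  set m := (jchar r).conductor * e' with hm
  have hr : r = p * m := by rw [he, hm]; ring
  have hr0 : r ≠ 0 := NeZero.ne r
  have : NeZero m := ⟨by rintro h; rw [h] at hr; omega⟩
  have : Fact p.Prime := ⟨hp⟩
  have hF : (jchar r).FactorsThrough m := by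
    refine (DirichletCharacter.mem_conductorSet_iff_conductor_dvd _ ⟨p, by rw [hr]; ring⟩).mpr ⟨e', hm⟩
  have hmr : m ∣ r := ⟨p, by rw [hr]; ring⟩
  have hcop : p.Coprime m := by
    rw [hr] at hs; exact Nat.coprime_of_squarefree_mul hs
  have hp2 : p ≠ 2 := by rintro rfl; omega
  obtain ⟨b, hb⟩ := quadraticChar_exists_neg_one (F := ZMod p) (by rwa [ZMod.ringChar_zmod_n])
  obtain ⟨a, ha1, ha2⟩ := Nat.chineseRemainder hcop b.val 1
  have hJp : jacobiSym a p = -1 := by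
    rw [← jacobiSym.legendreSym.to_jacobiSym, legendreSym]
    have : ((a : ℤ) : ZMod p) = b := by
      have := (ZMod.natCast_eq_natCast_iff _ _ _).mpr ha1
      simpa using this
    rw [this, hb]
  have hJm : jacobiSym a m = 1 := by
    have : jacobiSym a m = jacobiSym 1 m := jacobiSym.mod_left' (by
      have : ((a % m : ℕ) : ℤ) = ((1 % m : ℕ) : ℤ) := by rw [ha2]
      exact_mod_cast this)
    rw [this, jacobiSym.one_left]
  have hJ : jacobiSym a r = -1 := by
    rw [hr, jacobiSym.mul_right, hJp, hJm]; simp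
  have hco : a.Coprime r := by
    by_contra hc
    have : jacobiSym a r = 0 := by
      rw [jacobiSym.eq_zero_iff_not_coprime]; simpa [Int.gcd_natCast_natCast] using hc
    rw [hJ] at this; norm_num at this
  have hker := (DirichletCharacter.factorsThrough_iff_ker_unitsMap hmr).mp hF
  have hu : ZMod.unitOfCoprime a hco ∈ (ZMod.unitsMap hmr).ker := by
    rw [MonoidHom.mem_ker]
    ext
    rw [ZMod.unitsMap_val]
    simp only [ZMod.coe_unitOfCoprime, Units.val_one]
    rw [ZMod.cast_natCast hmr]
    have := (ZMod.natCast_eq_natCast_iff _ _ _).mpr ha2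
    simpa using this
  have := hker hu
  rw [MonoidHom.mem_ker] at this
  have h2 := congrArg Units.val this
  rw [MulChar.coe_toUnitHom, ZMod.coe_unitOfCoprime, jchar_natCast, hJ] at h2
  norm_num at h2

lemma eq_of_primitive {N : ℕ} [NeZero N] (hs : Squarefree N) (χ ψ : DirichletCharacter ℂ N)
    (h1 : χ.IsPrimitive) (h2 : ψ.IsPrimitive) (hχ : χ ^ 2 = 1) (hψ : ψ ^ 2 = 1) : χ = ψ := by
  have key : ∀ p : ℕ, p.Prime → p ∣ N → (χ * ψ).conductor ∣ N / p := by
    intro p hp hpN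
    obtain ⟨m, hm⟩ := hpN
    have hN0 : N ≠ 0 := NeZero.ne N
    have hNp : N / p = m := by rw [hm, Nat.mul_div_cancel_left _ hp.pos]
    rw [hNp]
    have hmN : m ∣ N := ⟨p, by rw [hm]; ring⟩
    have : Fact p.Prime := ⟨hp⟩
    have hpN : p ∣ N := ⟨m, hm⟩
    have hcop : p.Coprime m := by
      rw [hm] at hs; exact Nat.coprime_of_squarefree_mul hs
    have hmlt : m < N := by
      rw [hm]
      have := hp.two_le
      have : 0 < m := Nat.pos_of_ne_zero (by rintro rfl; omega)
      nlinarith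
    let K := (ZMod.unitsMap hmN).ker
    have hinj : Function.Injective ((ZMod.unitsMap hpN).comp K.subtype) := by
      rw [injective_iff_map_eq_one]
      rintro ⟨u, hu⟩ h
      have hu' : ZMod.unitsMap hmN u = 1 := hu
      have h' : ZMod.unitsMap hpN u = 1 := h
      ext
      have e1 := congrArg Units.val hu'
      have e2 := congrArg Units.val h'
      rw [ZMod.unitsMap_val] at e1 e2
      simp only [Units.val_one] at e1 e2
      simp only [OneMemClass.coe_one, Units.val_one]
      obtain ⟨a, ha⟩ := ZMod.natCast_zmod_surjective (u : ZMod N)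
      rw [← ha] at e1 e2 ⊢
      rw [ZMod.cast_natCast hmN] at e1
      rw [ZMod.cast_natCast hpN] at e2
      have e1' : a ≡ 1 [MOD m] := (ZMod.natCast_eq_natCast_iff _ _ _).mp (by simpa using e1)
      have e2' : a ≡ 1 [MOD p] := (ZMod.natCast_eq_natCast_iff _ _ _).mp (by simpa using e2)
      have := (Nat.modEq_and_modEq_iff_modEq_mul hcop).mp ⟨e2', e1'⟩
      rw [← hm] at this
      have := (ZMod.natCast_eq_natCast_iff _ _ _).mpr this
      simpa using this
    have hcyc : IsCyclic K := isCyclic_of_injective _ hinj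
    obtain ⟨g, hg⟩ := hcyc.exists_generator
    have hval : ∀ φ : DirichletCharacter ℂ N, φ.IsPrimitive → φ ^ 2 = 1 →
        φ.toUnitHom (g : (ZMod N)ˣ) = -1 := by
      intro φ hφ hφ2
      have hsq : (φ (g : (ZMod N)ˣ)) ^ 2 = 1 := by
        rw [← MulChar.pow_apply_coe, hφ2, MulChar.one_apply_coe]
      rcases (sq_eq_sq_iff_eq_or_eq_neg.mp (hsq.trans (one_pow 2).symm)) with h | h
      · exfalso
        have hk : (ZMod.unitsMap hmN).ker ≤ φ.toUnitHom.ker := by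
          intro u hu
          obtain ⟨k, hk⟩ := hg ⟨u, hu⟩
          have : u = (g : (ZMod N)ˣ) ^ k := by
            have := congrArg Subtype.val hk
            simpa using this.symm
          rw [MonoidHom.mem_ker, this, map_zpow]
          have : φ.toUnitHom (g : (ZMod N)ˣ) = 1 := by
            ext; rw [MulChar.coe_toUnitHom, h]; simp
          rw [this, one_zpow]
        have hF := (DirichletCharacter.factorsThrough_iff_ker_unitsMap hmN).mpr hk
        have := DirichletCharacter.conductor_dvd_of_mem_conductorSet (χ := φ) hF
        rw [(DirichletCharacter.isPrimitive_def _).mp hφ] at this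
        have := Nat.le_of_dvd (Nat.pos_of_ne_zero (by rintro rfl; omega)) this
        omega
      · ext; rw [MulChar.coe_toUnitHom, h]; simp
    refine DirichletCharacter.conductor_dvd_of_mem_conductorSet _ ?_
    refine (DirichletCharacter.factorsThrough_iff_ker_unitsMap hmN).mpr ?_
    intro u hu
    obtain ⟨k, hk⟩ := hg ⟨u, hu⟩
    have : u = (g : (ZMod N)ˣ) ^ k := by
      have := congrArg Subtype.val hk
      simpa using this.symm
    rw [MonoidHom.mem_ker, this, map_zpow]
    have h3 : (χ * ψ).toUnitHom (g : (ZMod N)ˣ) = 1 := by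
      ext
      rw [MulChar.coe_toUnitHom, MulChar.mul_apply, ← MulChar.coe_toUnitHom, ← MulChar.coe_toUnitHom,
        hval χ h1 hχ, hval ψ h2 hψ]
      simp
    rw [h3, one_zpow]
  have hc : (χ * ψ).conductor = 1 := by
    by_contra hne
    obtain ⟨p, hp, hpc⟩ := Nat.exists_prime_and_dvd hne
    have hpN := hpc.trans (χ * ψ).conductor_dvd_level
    have := hpc.trans (key p hp hpN)
    have h3 : p * p ∣ N := by
      have := Nat.mul_dvd_mul_left p this
      rwa [Nat.mul_div_cancel' hpN] at this
    exact hp.not_isUnit (hs p h3)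
  have h1' : χ * ψ = 1 := DirichletCharacter.eq_one_iff_conductor_eq_one.mpr hc
  calc χ = χ * (ψ ^ 2) := by rw [hψ, mul_one]
    _ = (χ * ψ) * ψ := by rw [sq, mul_assoc]
    _ = ψ := by rw [h1', one_mul]

end LBSM

namespace LBSM

noncomputable def jarith (a : ℤ) : ArithmeticFunction ℤ :=
  ⟨fun r => if r = 0 then 0 else jacobiSym a r, by simp⟩

lemma jarith_mult (a : ℤ) : (jarith a).IsMultiplicative := by
  rw [ArithmeticFunction.IsMultiplicative.iff_ne_zero]
  refine ⟨by simp [jarith], ?_⟩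
  intro m n hm hn _
  simp only [jarith, ArithmeticFunction.coe_mk, mul_eq_zero, hm, hn, or_self, if_false]
  exact jacobiSym.mul_right' a hm hn

lemma card_sqrt (d : ℕ) : d % 2 = 1 → Squarefree d → ∀ a : ℤ,
    (Nat.card {x : ZMod d // x ^ 2 = (a : ZMod d)} : ℤ) = ∑ r ∈ d.divisors, jacobiSym a r := by
  induction d using induction_on_primes with
  | zero => intro h; omega
  | one =>
    intro _ _ a
    have : Nat.card {x : ZMod 1 // x ^ 2 = (a : ZMod 1)} = 1 := by
      rw [Nat.card_eq_one_iff_unique]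
      refine ⟨⟨fun x y => Subtype.ext (Subsingleton.elim _ _)⟩, ⟨⟨0, Subsingleton.elim _ _⟩⟩⟩
    rw [this]; simp
  | prime_mul p n hp ih =>
    intro ho hs a
    have hcop : p.Coprime n := Nat.coprime_of_squarefree_mul hs
    have hn2 : n % 2 = 1 := by
      rcases Nat.even_or_odd n with h | h
      · exfalso
        have : Even (p * n) := h.mul_left p
        rw [Nat.even_iff] at this; omega
      · exact Nat.odd_iff.mp h
    have hp2 : p ≠ 2 := by rintro rfl; omega
    have hn0 : n ≠ 0 := by rintro rfl; omega
    have ihn := ih hn2 (hs.of_mul_right) a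
    have : Fact p.Prime := ⟨hp⟩
    let e := ZMod.chineseRemainder hcop
    have E : {x : ZMod (p * n) // x ^ 2 = (a : ZMod (p * n))} ≃
        {x : ZMod p // x ^ 2 = (a : ZMod p)} × {x : ZMod n // x ^ 2 = (a : ZMod n)} := by
      refine (e.toEquiv.subtypeEquiv (q := fun y : ZMod p × ZMod n =>
        y.1 ^ 2 = (a : ZMod p) ∧ y.2 ^ 2 = (a : ZMod n)) ?_).trans
        (Equiv.subtypeProdEquivProd (p := fun x : ZMod p => x ^ 2 = (a : ZMod p))
          (q := fun x : ZMod n => x ^ 2 = (a : ZMod n)))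
      intro x
      have h1 : x ^ 2 = (a : ZMod (p * n)) ↔ e (x ^ 2) = e (a : ZMod (p * n)) :=
        e.injective.eq_iff.symm
      rw [h1, map_pow, map_intCast, Prod.ext_iff]
      rfl
    rw [Nat.card_congr E, Nat.card_prod]
    push_cast
    rw [ihn]
    have hpc : (Nat.card {x : ZMod p // x ^ 2 = (a : ZMod p)} : ℤ) = 1 + jacobiSym a p := by
      have h := legendreSym.card_sqrts p hp2 a
      rw [Set.toFinset_card, ← Nat.card_eq_fintype_card, jacobiSym.legendreSym.to_jacobiSym] at h
      rw [add_comm, ← h]; rfl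
    rw [hpc]
    have hsum : ∀ m : ℕ, ∑ r ∈ m.divisors, jacobiSym a r = (jarith a * ArithmeticFunction.zeta) m := by
      intro m
      rw [ArithmeticFunction.coe_mul_zeta_apply]
      refine Finset.sum_congr rfl fun r hr => ?_
      have : r ≠ 0 := (Nat.pos_of_mem_divisors hr).ne'
      simp [jarith, this]
    have hmul := ((jarith_mult a).mul ArithmeticFunction.isMultiplicative_zeta.natCast).map_mul_of_coprime hcop
    rw [← hsum, ← hsum, ← hsum, hp.sum_divisors] at hmul
    rw [hmul]; simp [add_comm]

lemma stdAddChar_nat (d : ℕ) [NeZero d] (n : ℕ) : (ZMod.stdAddChar (n : ZMod d) : ℂ) =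
    Complex.exp (2 * Real.pi * Complex.I * n / d) := by
  have := ZMod.stdAddChar_coe (N := d) n
  push_cast at this
  exact this

lemma sum_range_zmod {M : Type*} [AddCommMonoid M] (d : ℕ) [NeZero d] (f : ZMod d → M) :
    ∑ x ∈ Finset.range d, f (x : ZMod d) = ∑ x : ZMod d, f x := by
  refine Finset.sum_bij' (fun x _ => (x : ZMod d)) (fun x _ => x.val) ?_ ?_ ?_ ?_ ?_
  · simp
  · intro a _; simpa using ZMod.val_lt a
  · intro a ha; exact ZMod.val_cast_of_lt (by simpa using ha)
  · intro a _; simp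
  · simp

lemma sum_jac_divisor (d : ℕ) [NeZero d] (r : ℕ) (hr : r ∣ d) (hrd : r ≠ d) :
    ∑ a : ZMod d, ((jacobiSym (a.val : ℤ) r : ℤ) : ℂ) * ZMod.stdAddChar a = 0 := by
  have hd0 : d ≠ 0 := NeZero.ne d
  have hr0 : r ≠ 0 := by rintro rfl; simp at hr; omega
  have : NeZero r := ⟨hr0⟩
  have hf : ∀ a : ZMod d, ((jacobiSym (a.val : ℤ) r : ℤ) : ℂ) = jchar r (ZMod.castHom hr (ZMod r) a) := by
    intro a
    rw [← jchar_natCast]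
    congr 1
    simp [ZMod.natCast_val]
  simp_rw [hf]
  set S := ∑ a : ZMod d, jchar r (ZMod.castHom hr (ZMod r) a) * ZMod.stdAddChar a with hS
  have h1 : S = ZMod.stdAddChar ((r : ℕ) : ZMod d) * S := by
    nth_rewrite 1 [hS]
    rw [← Equiv.sum_comp (Equiv.addRight ((r : ℕ) : ZMod d)), hS, Finset.mul_sum]
    refine Finset.sum_congr rfl fun a _ => ?_
    rw [Equiv.coe_addRight, map_add, map_natCast, ZMod.natCast_self, add_zero,
      AddChar.map_add_eq_mul]
    ring
  have h2 : ZMod.stdAddChar ((r : ℕ) : ZMod d) ≠ 1 := by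
    intro h
    have h3 : ZMod.stdAddChar ((r : ℕ) : ZMod d) = ZMod.stdAddChar (0 : ZMod d) := by
      rw [h, AddChar.map_zero_eq_one]
    have h4 := ZMod.injective_stdAddChar h3
    rw [ZMod.natCast_eq_zero_iff] at h4
    exact hrd (Nat.dvd_antisymm hr h4)
  have h5 : (ZMod.stdAddChar ((r : ℕ) : ZMod d) - 1) * S = 0 := by
    rw [sub_mul, one_mul, ← h1, sub_self]
  rcases mul_eq_zero.mp h5 with h | h
  · exact absurd (sub_eq_zero.mp h) h2
  · exact h

lemma gauss_jchar (d : ℕ) [NeZero d] (hd : d % 4 = 1) (hs : Squarefree d) :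
    gaussSum (jchar d) ZMod.stdAddChar = (Real.sqrt d : ℂ) := by
  rw [← gauss_sum_sq d hd]
  have e1 : ∑ x ∈ Finset.range d, Complex.exp (2 * Real.pi * Complex.I * (x : ℂ) ^ 2 / d) =
      ∑ x : ZMod d, ZMod.stdAddChar (x ^ 2) := by
    rw [← sum_range_zmod d (fun x => (ZMod.stdAddChar (x ^ 2) : ℂ))]
    refine Finset.sum_congr rfl fun x _ => ?_
    have := stdAddChar_nat d (x ^ 2)
    push_cast at this
    exact this.symm
  rw [e1, ← Finset.sum_fiberwise (s := Finset.univ) (g := fun x : ZMod d => x ^ 2)]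
  have e2 : ∀ a : ZMod d, ∑ x : ZMod d with x ^ 2 = a, (ZMod.stdAddChar (x ^ 2) : ℂ) =
      ∑ r ∈ d.divisors, ((jacobiSym (a.val : ℤ) r : ℤ) : ℂ) * ZMod.stdAddChar a := by
    intro a
    rw [← Finset.sum_mul, Finset.sum_congr rfl (g := fun _ => (ZMod.stdAddChar a : ℂ)),
      Finset.sum_const, nsmul_eq_mul]
    · congr 1
      have := card_sqrt d (by omega) hs (a.val : ℤ)
      rw [← Int.cast_sum, ← this, Nat.card_eq_fintype_card, Fintype.card_subtype]
      simp
    · intro x hx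
      rw [(Finset.mem_filter.mp hx).2]
  simp_rw [e2]
  rw [Finset.sum_comm, Finset.sum_eq_single d]
  · rfl
  · intro r hr hrd
    exact sum_jac_divisor d r (Nat.dvd_of_mem_divisors hr) hrd
  · intro h
    exact absurd (Nat.mem_divisors_self d (NeZero.ne d)) h

end LBSM

namespace LBSM

open Complex

/-- theta kernel of `jchar d` -/
noncomputable def phi (d : ℕ) [NeZero d] (t : ℝ) : ℂ :=
  ∑' n : ℤ, jchar d (n : ZMod d) * cexp (-Real.pi * (n : ℂ) ^ 2 * t / d)

lemma jchar_inv (d : ℕ) [NeZero d] : (jchar d)⁻¹ = jchar d := by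
  rw [inv_eq_iff_mul_eq_one, ← sq, jchar_sq]

lemma gauss_twist (d : ℕ) [NeZero d] (hd : d % 4 = 1) (hs : Squarefree d) (n : ℤ) :
    ∑ x ∈ Finset.range d, jchar d (x : ZMod d) * cexp (2 * Real.pi * I * n * (x / d)) =
      jchar d (n : ZMod d) * (Real.sqrt d : ℂ) := by
  have h := gaussSum_mulShift_of_isPrimitive (e := ZMod.stdAddChar (N := d))
    (jchar_primitive d (by omega) hs) (n : ZMod d)
  rw [jchar_inv, gauss_jchar d hd hs] at h
  rw [← h, gaussSum, ← sum_range_zmod d (fun x => jchar d x * (ZMod.stdAddChar.mulShift (n : ZMod d)) x)]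
  refine Finset.sum_congr rfl fun x _ => ?_
  congr 1
  rw [AddChar.mulShift_apply]
  have := ZMod.stdAddChar_coe (N := d) (n * x)
  push_cast at this
  rw [this]
  congr 1; ring

lemma phi_hasSum (d : ℕ) [NeZero d] (hd : d % 4 = 1) (hs : Squarefree d) (t : ℝ) (ht : 0 < t) :
    HasSum (fun n : ℤ => jchar d (n : ZMod d) * cexp (-Real.pi * (n : ℂ) ^ 2 * t / d)) (phi d t) ∧
    phi d t = 1 / ((d * t : ℝ) : ℂ) ^ (1 / 2 : ℂ) *
        ∑ x ∈ Finset.range d, jchar d (x : ZMod d) * jacobiTheta₂ (x / d) (I / (d * t)) := by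
  have hd0 : 0 < d := by omega
  have hdR : (0 : ℝ) < d := by exact_mod_cast hd0
  have hdC : (d : ℂ) ≠ 0 := by exact_mod_cast hd0.ne'
  have htC : (t : ℂ) ≠ 0 := by exact_mod_cast ht.ne'
  have hw : 0 < (((t / d : ℝ) : ℂ) * I).im := by
    rw [im_ofReal_mul, I_im, mul_one]; positivity
  have A := theta_periodic d hd0 (fun n : ℤ => jchar d (n : ZMod d)) (by
    intro j x; congr 1; push_cast; simp) (((t / d : ℝ) : ℂ) * I) hw
  have A' := (hsc (g := fun n : ℤ => jchar d (n : ZMod d) * cexp (-Real.pi * (n : ℂ) ^ 2 * t / d))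
    (fun n => by
      congr 2
      push_cast
      field_simp
      linear_combination (n : ℂ) ^ 2 * I_mul_I)).mp A
  have h1 := A'.tsum_eq
  refine ⟨A'.summable.hasSum, ?_⟩
  rw [phi, h1]
  congr 3
  · push_cast; field_simp; linear_combination -I_mul_I
  · ext x
    congr 2
    · push_cast; simp
    · push_cast; field_simp; linear_combination -I_mul_I

lemma phi_feq (d : ℕ) [NeZero d] (hd : d % 4 = 1) (hs : Squarefree d) (t : ℝ) (ht : 0 < t) :
    phi d (1 / t) = (((t ^ (1 / 2 : ℝ) : ℝ)) : ℂ) * phi d t := by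
  have hd0 : 0 < d := by omega
  have hdR : (0 : ℝ) < d := by exact_mod_cast hd0
  have hdC : (d : ℂ) ≠ 0 := by exact_mod_cast hd0.ne'
  have htC : (t : ℂ) ≠ 0 := by exact_mod_cast ht.ne'
  have hτ : 0 < (I / (d * t) : ℂ).im := by
    rw [show (I / (d * t) : ℂ) = ((1 / (d * t) : ℝ) : ℂ) * I by push_cast; ring, im_ofReal_mul, I_im, mul_one]
    positivity
  have hsum : ∑ x ∈ Finset.range d, jchar d (x : ZMod d) * jacobiTheta₂ (x / d) (I / (d * t)) =
      (Real.sqrt d : ℂ) * phi d (1 / t) := by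
    have h1 : HasSum (fun n : ℤ => ∑ x ∈ Finset.range d, jchar d (x : ZMod d) *
        jacobiTheta₂_term n (x / d) (I / (d * t)))
        (∑ x ∈ Finset.range d, jchar d (x : ZMod d) * jacobiTheta₂ (x / d) (I / (d * t))) :=
      hasSum_sum fun x _ => (hasSum_jacobiTheta₂_term _ hτ).mul_left _
    have h2 := (phi_hasSum d hd hs (1 / t) (by positivity)).1.mul_left (Real.sqrt d : ℂ)
    refine h1.unique ((hsc fun n => ?_).mp h2)
    simp only [jacobiTheta₂_term, Complex.exp_add]
    have := gauss_twist d hd hs n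
    simp_rw [← mul_assoc, ← Finset.sum_mul]
    rw [this, mul_comm (Real.sqrt d : ℂ)]
    congr 2
    push_cast
    field_simp
    linear_combination (-(n : ℂ) ^ 2) * I_mul_I
  have h3 := (phi_hasSum d hd hs t ht).2
  rw [hsum] at h3
  rw [h3]
  have e1 : ((d * t : ℝ) : ℂ) ^ (1 / 2 : ℂ) = ((Real.sqrt d * Real.sqrt t : ℝ) : ℂ) := by
    rw [← Real.sqrt_mul hdR.le, Real.sqrt_eq_rpow, Complex.ofReal_cpow (by positivity)]
    push_cast; rfl
  rw [e1, ← Real.sqrt_eq_rpow]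
  have h4 : (Real.sqrt d : ℂ) ≠ 0 := by exact_mod_cast (Real.sqrt_pos.mpr hdR).ne'
  have h5 : (Real.sqrt t : ℂ) ≠ 0 := by exact_mod_cast (Real.sqrt_pos.mpr ht).ne'
  push_cast
  field_simp

lemma phi_continuousOn (d : ℕ) [NeZero d] (hd : d % 4 = 1) (hs : Squarefree d) :
    ContinuousOn (phi d) (Set.Ioi 0) := by
  have hd0 : 0 < d := by omega
  have hdR : (0 : ℝ) < d := by exact_mod_cast hd0
  have hdC : (d : ℂ) ≠ 0 := by exact_mod_cast hd0.ne'
  have : ContinuousOn (fun t : ℝ => 1 / ((d * t : ℝ) : ℂ) ^ (1 / 2 : ℂ) *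
        ∑ x ∈ Finset.range d, jchar d (x : ZMod d) * jacobiTheta₂ (x / d) (I / (d * t))) (Set.Ioi 0) := by
    intro t ht
    have ht : 0 < t := ht
    have htC : (t : ℂ) ≠ 0 := by exact_mod_cast ht.ne'
    have hτ : 0 < (I / (d * t) : ℂ).im := by
      rw [show (I / (d * t) : ℂ) = ((1 / (d * t) : ℝ) : ℂ) * I by push_cast; ring, im_ofReal_mul, I_im, mul_one]
      positivity
    refine ContinuousAt.continuousWithinAt ?_
    have hmem : ((d * t : ℝ) : ℂ) ∈ slitPlane := by
      rw [ofReal_mem_slitPlane]; positivity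
    refine ContinuousAt.mul (ContinuousAt.div continuousAt_const (ContinuousAt.cpow (by fun_prop)
      continuousAt_const hmem) ?_) ?_
    · rw [Ne, Complex.cpow_eq_zero_iff]
      rintro ⟨h, -⟩
      exact Complex.slitPlane_ne_zero hmem h
    · refine tendsto_finsetSum _ fun x _ => ?_
      refine Tendsto.const_mul _ ?_
      have hc := continuousAt_jacobiTheta₂ (x / d : ℂ) hτ
      have hg : ContinuousAt (fun t : ℝ => ((x / d : ℂ), (I / (d * t) : ℂ))) t := by
        refine ContinuousAt.prodMk continuousAt_const ?_
        refine ContinuousAt.div continuousAt_const (by fun_prop) (mul_ne_zero hdC htC)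
      exact ContinuousAt.comp (f := fun t : ℝ => ((x / d : ℂ), (I / (d * t) : ℂ)))
        (g := fun p : ℂ × ℂ => jacobiTheta₂ p.1 p.2) hc hg
  exact this.congr fun t ht => (phi_hasSum d hd hs t ht).2

lemma jchar_zero (d : ℕ) [NeZero d] (hd : 1 < d) : jchar d 0 = 0 := by
  have := jchar_intCast d 0
  rw [jacobiSym.zero_left hd] at this
  simpa using this

lemma phi_bound (d : ℕ) [NeZero d] (hd : d % 4 = 1) (hs : Squarefree d) (hd1 : 1 < d) :
    ∃ C : ℝ, ∀ t : ℝ, 1 ≤ t → ‖phi d t‖ ≤ C * Real.exp (-(Real.pi / d) * t) := by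
  have hdR : (0 : ℝ) < d := by exact_mod_cast (by omega : 0 < d)
  have hsum : Summable (fun n : ℤ => Real.exp (-Real.pi * (n : ℝ) ^ 2 / d)) := by
    have := summable_pow_mul_jacobiTheta₂_term_bound 0 (T := 1 / d) (by positivity) 0
    refine this.congr fun n => ?_
    simp; ring
  refine ⟨Real.exp (Real.pi / d) * ∑' n : ℤ, Real.exp (-Real.pi * (n : ℝ) ^ 2 / d), fun t ht => ?_⟩
  have h1 := (phi_hasSum d hd hs t (by linarith)).1
  rw [← h1.tsum_eq]
  have hb : HasSum (fun n : ℤ => (Real.exp (Real.pi / d) * Real.exp (-(Real.pi / d) * t)) *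
     Real.exp (-Real.pi * (n : ℝ) ^ 2 / d)) ((Real.exp (Real.pi / d) * Real.exp (-(Real.pi / d) * t)) *
      ∑' n : ℤ, Real.exp (-Real.pi * (n : ℝ) ^ 2 / d)) := hsum.hasSum.mul_left _
  have := tsum_of_norm_bounded hb (f := fun n : ℤ => jchar d (n : ZMod d) * cexp (-Real.pi * (n : ℂ) ^ 2 * t / d)) ?_
  · calc _ ≤ _ := this
      _ = _ := by ring
  · intro n
    by_cases hn : n = 0
    · subst hn; simp only [Int.cast_zero, jchar_zero d hd1, zero_mul, norm_zero]; positivity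
    · rw [norm_mul, Complex.norm_exp]
      have hre : (-Real.pi * (n : ℂ) ^ 2 * t / d : ℂ).re = -Real.pi * (n : ℝ) ^ 2 * t / d := by
        rw [show (-Real.pi * (n : ℂ) ^ 2 * t / d : ℂ) = ((-Real.pi * (n : ℝ) ^ 2 * t / d : ℝ) : ℂ) by
          push_cast; rfl, ofReal_re]
      rw [hre, ← Real.exp_add, ← Real.exp_add]
      have hle := (jchar d).norm_le_one (n : ZMod d)
      refine (mul_le_of_le_one_left (Real.exp_nonneg _) hle).trans ?_
      rw [Real.exp_le_exp]
      have hn1 : (1 : ℝ) ≤ (n : ℝ) ^ 2 := by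
        have : 1 ≤ n ^ 2 := by have := sq_pos_of_ne_zero hn; omega
        exact_mod_cast this
      have hk : 0 ≤ Real.pi / d * (((n : ℝ) ^ 2 - 1) * (t - 1)) :=
        mul_nonneg (by positivity) (mul_nonneg (by linarith) (by linarith))
      have : Real.pi / d + -(Real.pi / d) * t + -Real.pi * (n : ℝ) ^ 2 / d - (-Real.pi * (n : ℝ) ^ 2 * t / d)
        = Real.pi / d * (((n : ℝ) ^ 2 - 1) * (t - 1)) := by field_simp; ring
      linarith

/-- The (strong) functional equation pair. -/
noncomputable def fe (d : ℕ) [NeZero d] (hd : d % 4 = 1) (hs : Squarefree d) (hd1 : 1 < d) :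
    WeakFEPair ℂ where
  f := phi d
  g := phi d
  k := 1 / 2
  ε := 1
  f₀ := 0
  g₀ := 0
  hf_int := (phi_continuousOn d hd hs).locallyIntegrableOn measurableSet_Ioi
  hg_int := (phi_continuousOn d hd hs).locallyIntegrableOn measurableSet_Ioi
  hk := by norm_num
  hε := one_ne_zero
  h_feq := fun x hx => by rw [one_mul, smul_eq_mul]; exact phi_feq d hd hs x hx
  hf_top := fun r => by
    obtain ⟨C, hC⟩ := phi_bound d hd hs hd1
    have hdR : (0 : ℝ) < d := by exact_mod_cast (by omega : 0 < d)
    simp only [sub_zero]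
    refine Asymptotics.IsBigO.trans ?_ (isLittleO_exp_neg_mul_rpow_atTop (a := Real.pi / d) (by positivity) r).isBigO
    refine Asymptotics.IsBigO.of_bound C ?_
    filter_upwards [eventually_ge_atTop 1] with t ht
    rw [Real.norm_eq_abs, abs_of_pos (Real.exp_pos _)]
    exact hC t ht
  hg_top := fun r => by
    obtain ⟨C, hC⟩ := phi_bound d hd hs hd1
    have hdR : (0 : ℝ) < d := by exact_mod_cast (by omega : 0 < d)
    simp only [sub_zero]
    refine Asymptotics.IsBigO.trans ?_ (isLittleO_exp_neg_mul_rpow_atTop (a := Real.pi / d) (by positivity) r).isBigO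
    refine Asymptotics.IsBigO.of_bound C ?_
    filter_upwards [eventually_ge_atTop 1] with t ht
    rw [Real.norm_eq_abs, abs_of_pos (Real.exp_pos _)]
    exact hC t ht

end LBSM

namespace LBSM

open Complex

lemma jchar_neg (d : ℕ) [NeZero d] (hd : d % 4 = 1) (n : ℤ) :
    jchar d ((-n : ℤ) : ZMod d) = jchar d (n : ZMod d) := by
  rw [jchar_intCast, jchar_intCast, jacobiSym.neg _ (Nat.odd_iff.mpr (by omega))]
  rw [ZMod.χ₄_nat_one_mod_four hd, one_mul]

lemma phi_hasSum_nat (d : ℕ) [NeZero d] (hd : d % 4 = 1) (hs : Squarefree d) (hd1 : 1 < d)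
    (t : ℝ) (ht : 0 < t) :
    HasSum (fun n : ℕ => 2 * jchar d (n : ZMod d) * (Real.exp (-Real.pi * (n : ℝ) ^ 2 * t / d) : ℂ))
      (phi d t) := by
  have h := (phi_hasSum d hd hs t ht).1.nat_add_neg
  simp only [Int.cast_zero, jchar_zero d hd1, zero_mul, add_zero] at h
  refine (hsc fun n => ?_).mp h
  rw [jchar_neg d hd]
  push_cast
  rw [neg_sq]
  ring

lemma mellin_phi (d : ℕ) [NeZero d] (hd : d % 4 = 1) (hs : Squarefree d) (hd1 : 1 < d)
    (s : ℂ) (hre : 1 < s.re) :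
    mellin (phi d) (s / 2) = 2 * Gammaℝ s * (Real.sqrt d : ℂ) ^ s * (jchar d).LFunction s := by
  have hdR : (0 : ℝ) < d := by exact_mod_cast (by omega : 0 < d)
  have hsq : 0 < Real.sqrt d := Real.sqrt_pos.mpr hdR
  have H := hasSum_mellin_pi_mul_sq (a := fun n : ℕ => 2 * jchar d (n : ZMod d))
    (r := fun n : ℕ => (n : ℝ) / Real.sqrt d) (F := phi d) (s := s) (by linarith) (by
      intro t ht
      refine (hsc fun n => ?_).mp (phi_hasSum_nat d hd hs hd1 t ht)
      by_cases hn : n = 0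
      · subst hn; simp [jchar_zero d hd1]
      · rw [if_neg (by positivity), div_pow, Real.sq_sqrt hdR.le]
        congr 3; ring) (by
      have h1 : Summable (fun n : ℕ => 2 * (Real.sqrt d) ^ s.re * (1 / (n : ℝ) ^ s.re)) :=
        (Real.summable_one_div_nat_rpow.mpr hre).mul_left _
      refine Summable.of_nonneg_of_le (fun n => by positivity) (fun n => ?_) h1
      rw [abs_of_nonneg (by positivity), Real.div_rpow (by positivity) hsq.le, norm_mul]
      have hle := (jchar d).norm_le_one (n : ZMod d)
      rw [div_div_eq_mul_div, mul_one_div]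
      gcongr
      simpa using hle)
  rw [DirichletCharacter.LFunction_eq_LSeries _ hre, LSeries, ← tsum_mul_left]
  rw [← H.tsum_eq]
  refine tsum_congr fun n => ?_
  by_cases hn : n = 0
  · subst hn; simp [jchar_zero d hd1]
  · rw [LSeries.term_of_ne_zero hn]
    have hn' : (0 : ℝ) < n := by positivity
    rw [abs_of_nonneg (by positivity)]
    have := Complex.div_cpow_ofReal_nonneg hn'.le hsq.le s
    push_cast at this ⊢
    rw [this]
    field_simp


lemma jchar_ne_one (d : ℕ) [NeZero d] (hd : d % 4 = 1) (hs : Squarefree d) (hd1 : 1 < d) :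
    jchar d ≠ 1 := by
  intro h
  have := jchar_primitive d (by omega) hs
  rw [h, DirichletCharacter.isPrimitive_def, DirichletCharacter.conductor_one] at this
  omega

lemma L_half_mellin (d : ℕ) [NeZero d] (hd : d % 4 = 1) (hs : Squarefree d) (hd1 : 1 < d) :
    mellin (phi d) (1 / 4) = 2 * Gammaℝ (1 / 2) * (Real.sqrt d : ℂ) ^ (1 / 2 : ℂ) *
      (jchar d).LFunction (1 / 2) := by
  have hdR : (0 : ℝ) < d := by exact_mod_cast (by omega : 0 < d)
  have hsq : 0 < Real.sqrt d := Real.sqrt_pos.mpr hdR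
  have hsqC : (Real.sqrt d : ℂ) ≠ 0 := by exact_mod_cast hsq.ne'
  have hstrong : IsStrongFEPair (fe d hd hs hd1) := ⟨rfl, rfl⟩
  have hdiff : Differentiable ℂ (mellin (phi d)) := by
    have h1 := hstrong.Λ_eq
    have h2 := hstrong.differentiable_Λ
    rw [h1] at h2
    exact h2
  let F : ℂ → ℂ := fun s => mellin (phi d) (s / 2) * (Gammaℝ s)⁻¹
  let G : ℂ → ℂ := fun s => 2 * (Real.sqrt d : ℂ) ^ s * (jchar d).LFunction s
  have hF : Differentiable ℂ F :=
    (hdiff.comp (differentiable_id.div_const 2)).mul differentiable_Gammaℝ_inv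
  have hG : Differentiable ℂ G := by
    refine Differentiable.mul (Differentiable.const_mul ?_ _)
      (DirichletCharacter.differentiable_LFunction (jchar_ne_one d hd hs hd1))
    intro s
    exact (differentiableAt_id.const_cpow (Or.inl hsqC))
  have hFG : F = G := by
    refine AnalyticOnNhd.eq_of_eventuallyEq (z₀ := 2) (hF.differentiableOn.analyticOnNhd isOpen_univ |>.mono (Set.subset_univ _))
      (hG.differentiableOn.analyticOnNhd isOpen_univ |>.mono (Set.subset_univ _)) ?_
    have : {s : ℂ | 1 < s.re} ∈ nhds (2 : ℂ) :=
      (isOpen_lt continuous_const continuous_re).mem_nhds (by simp)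
    filter_upwards [this] with s hs'
    have hs' : 1 < s.re := hs'
    simp only [F, G]
    rw [mellin_phi d hd hs hd1 s hs']
    have : Gammaℝ s ≠ 0 := Gammaℝ_ne_zero_of_re_pos (by linarith)
    field_simp
  have h := congrFun hFG (1 / 2)
  simp only [F, G] at h
  have h0 : Gammaℝ (1 / 2) ≠ 0 := Gammaℝ_ne_zero_of_re_pos (by norm_num)
  rw [show (1 / 2 / 2 : ℂ) = 1 / 4 by norm_num] at h
  field_simp at h
  rw [h]

lemma mellin_half (d : ℕ) [NeZero d] (hd : d % 4 = 1) (hs : Squarefree d) (hd1 : 1 < d) :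
    mellin (phi d) (1 / 4) = 2 * ∫ t in Set.Ioi (1 : ℝ), (t : ℂ) ^ (1 / 4 - 1 : ℂ) * phi d t := by
  have hstrong : IsStrongFEPair (fe d hd hs hd1) := ⟨rfl, rfl⟩
  have hIntg : MeasureTheory.IntegrableOn (fun t : ℝ => (t : ℂ) ^ (1 / 4 - 1 : ℂ) • phi d t) (Set.Ioi 0) :=
    (hstrong.hasMellin (1 / 4)).1
  let f : ℝ → ℂ := (Set.Ioi 1).indicator (phi d)
  let g : ℝ → ℂ := (Set.Iio 1).indicator (phi d)
  have hgf : ∀ t ∈ Set.Ioi (0 : ℝ), g t = (t : ℂ) ^ (-(1 / 2) : ℂ) • f t⁻¹ := by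
    intro t ht
    have ht : 0 < t := ht
    by_cases h1 : t < 1
    · have h2 : 1 < t⁻¹ := (one_lt_inv₀ ht).mpr h1
      simp only [f, g]
      rw [Set.indicator_of_mem (by exact h1), Set.indicator_of_mem (by exact h2)]
      have := phi_feq d hd hs t ht
      rw [one_div] at this
      rw [this, smul_eq_mul, ← mul_assoc, Complex.ofReal_cpow ht.le, Complex.cpow_neg]
      have h3 : (t : ℂ) ^ (1 / 2 : ℂ) ≠ 0 := by
        rw [Ne, Complex.cpow_eq_zero_iff]; rintro ⟨h, -⟩; exact ht.ne' (by exact_mod_cast h)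
      push_cast
      rw [inv_mul_cancel₀ h3, one_mul]
    · have h2 : ¬ (1 < t⁻¹) := by rw [one_lt_inv₀ ht]; exact h1
      simp only [f, g]
      rw [Set.indicator_of_notMem (by exact h1), Set.indicator_of_notMem (by exact h2), smul_zero]
  have hf : mellin f (1 / 4) = ∫ t in Set.Ioi (1 : ℝ), (t : ℂ) ^ (1 / 4 - 1 : ℂ) * phi d t := by
    rw [mellin]
    have : ∀ t : ℝ, (t : ℂ) ^ (1 / 4 - 1 : ℂ) • f t =
        (Set.Ioi 1).indicator (fun t : ℝ => (t : ℂ) ^ (1 / 4 - 1 : ℂ) * phi d t) t := by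
      intro t
      simp only [f, Set.indicator]
      split_ifs <;> simp
    simp_rw [this]
    rw [MeasureTheory.setIntegral_indicator measurableSet_Ioi]
    congr 2
    ext t; simp
  have hg : mellin g (1 / 4) = mellin f (1 / 4) := by
    have h1 : mellin g (1 / 4) = mellin (fun t : ℝ => (t : ℂ) ^ (-(1 / 2) : ℂ) • f t⁻¹) (1 / 4) := by
      rw [mellin, mellin]
      refine MeasureTheory.setIntegral_congr_fun measurableSet_Ioi fun t ht => ?_
      simp only [hgf t ht]
    rw [h1, mellin_cpow_smul (fun t => f t⁻¹), mellin_comp_inv]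
    norm_num
  have hg' : mellin g (1 / 4) = ∫ t in Set.Ioo (0 : ℝ) 1, (t : ℂ) ^ (1 / 4 - 1 : ℂ) • phi d t := by
    rw [mellin]
    have : ∀ t : ℝ, (t : ℂ) ^ (1 / 4 - 1 : ℂ) • g t =
        (Set.Iio 1).indicator (fun t : ℝ => (t : ℂ) ^ (1 / 4 - 1 : ℂ) • phi d t) t := by
      intro t
      simp only [g, Set.indicator]
      split_ifs <;> simp
    simp_rw [this]
    rw [MeasureTheory.setIntegral_indicator measurableSet_Iio]
    rfl
  have hsplit : mellin (phi d) (1 / 4) = mellin g (1 / 4) +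
      ∫ t in Set.Ioi (1 : ℝ), (t : ℂ) ^ (1 / 4 - 1 : ℂ) * phi d t := by
    rw [hg', mellin, ← Set.Ioc_union_Ioi_eq_Ioi (zero_le_one' ℝ),
      MeasureTheory.setIntegral_union (Set.Ioc_disjoint_Ioi le_rfl) measurableSet_Ioi
      (hIntg.mono_set (fun t ht => Set.mem_Ioi.mpr (Set.mem_Ioc.mp ht).1)) (hIntg.mono_set (fun t ht => lt_trans one_pos (Set.mem_Ioi.mp ht))),
      MeasureTheory.integral_Ioc_eq_integral_Ioo]
    rfl
  rw [hsplit, hg, hf]; ring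

end LBSM

namespace LBSM

open Complex

/-- The smooth weight in the approximate functional equation. -/
noncomputable def U (Y : ℝ) (n : ℕ) : ℝ :=
  ∫ u in Set.Ioi (1 / Y), u ^ (-(3 / 4) : ℝ) * Real.exp (-(Real.pi * n ^ 2) * u)

lemma U_int0 (s : ℝ) (hs : -1 < s) (n : ℕ) (hn : 1 ≤ n) :
    MeasureTheory.IntegrableOn (fun u : ℝ => u ^ s * Real.exp (-(Real.pi * n ^ 2) * u)) (Set.Ioi 0) := by
  have hn' : (0 : ℝ) < n := by exact_mod_cast hn
  have := integrableOn_rpow_mul_exp_neg_mul_rpow (p := 1) (s := s) (b := Real.pi * n ^ 2) hs one_pos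
    (by positivity)
  simpa using this

lemma U_int (Y : ℝ) (hY : 0 < Y) (n : ℕ) (hn : 1 ≤ n) :
    MeasureTheory.IntegrableOn (fun u : ℝ => u ^ (-(3 / 4) : ℝ) * Real.exp (-(Real.pi * n ^ 2) * u))
      (Set.Ioi (1 / Y)) :=
  (U_int0 _ (by norm_num) n hn).mono_set (Set.Ioi_subset_Ioi (by positivity))

lemma U_nonneg (Y : ℝ) (hY : 0 < Y) (n : ℕ) : 0 ≤ U Y n := by
  refine MeasureTheory.setIntegral_nonneg measurableSet_Ioi fun u hu => ?_
  have : 0 < u := lt_trans (by positivity) (Set.mem_Ioi.mp hu)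
  positivity

lemma U_mono (Y Y' : ℝ) (hY : 0 < Y) (h : Y ≤ Y') (n : ℕ) (hn : 1 ≤ n) : U Y n ≤ U Y' n := by
  have hY' : 0 < Y' := by linarith
  refine MeasureTheory.setIntegral_mono_set (U_int Y' hY' n hn) ?_ ?_
  · filter_upwards [MeasureTheory.ae_restrict_mem measurableSet_Ioi] with u hu
    have : 0 < u := lt_trans (by positivity) (Set.mem_Ioi.mp hu)
    simp only [Pi.zero_apply]; positivity
  · exact (Set.Ioi_subset_Ioi (one_div_le_one_div_of_le hY h)).eventuallyLE

lemma U_upper (s : ℝ) (hs : 0 ≤ s) (Y : ℝ) (hY : 0 < Y) (n : ℕ) (hn : 1 ≤ n) :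
    U Y n ≤ Real.Gamma (1 / 4 + s) * Y ^ s * (n : ℝ) ^ (-(1 / 2 + 2 * s)) := by
  have hn' : (1 : ℝ) ≤ n := by exact_mod_cast hn
  have hn0 : (0 : ℝ) < n := by linarith
  have h1 : U Y n ≤ ∫ u in Set.Ioi (1 / Y), Y ^ s * (u ^ (1 / 4 + s - 1) * Real.exp (-(Real.pi * n ^ 2) * u)) := by
    refine MeasureTheory.setIntegral_mono_on (U_int Y hY n hn) ?_ measurableSet_Ioi ?_
    · exact ((U_int0 _ (by linarith) n hn).mono_set (Set.Ioi_subset_Ioi (by positivity))).const_mul _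
    · intro u hu
      have hu' : 1 / Y < u := hu
      have hu0 : 0 < u := lt_trans (by positivity) hu'
      rw [← mul_assoc]
      refine mul_le_mul_of_nonneg_right ?_ (Real.exp_nonneg _)
      rw [show (1 / 4 + s - 1 : ℝ) = s + -(3 / 4) by ring, Real.rpow_add hu0, ← mul_assoc,
        ← Real.mul_rpow hY.le hu0.le]
      refine le_mul_of_one_le_left (by positivity) (Real.one_le_rpow ?_ hs)
      rw [div_lt_iff₀ hY] at hu'
      linarith
  refine h1.trans ?_
  have h2 : ∫ u in Set.Ioi (1 / Y), Y ^ s * (u ^ (1 / 4 + s - 1) * Real.exp (-(Real.pi * n ^ 2) * u)) ≤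
      ∫ u in Set.Ioi 0, Y ^ s * (u ^ (1 / 4 + s - 1) * Real.exp (-(Real.pi * n ^ 2) * u)) := by
    refine MeasureTheory.setIntegral_mono_set ((U_int0 _ (by linarith) n hn).const_mul _) ?_
      (Set.Ioi_subset_Ioi (by positivity)).eventuallyLE
    filter_upwards [MeasureTheory.ae_restrict_mem measurableSet_Ioi] with u hu
    have : 0 < u := Set.mem_Ioi.mp hu
    simp only [Pi.zero_apply]; positivity
  refine h2.trans ?_
  have h3 := Real.integral_rpow_mul_exp_neg_mul_Ioi (a := 1 / 4 + s) (r := Real.pi * n ^ 2) (by linarith)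
    (by positivity)
  have h3' : ∫ a in Set.Ioi (0 : ℝ), a ^ (1 / 4 + s - 1) * Real.exp (-(Real.pi * n ^ 2) * a) =
      (1 / (Real.pi * n ^ 2)) ^ (1 / 4 + s) * Real.Gamma (1 / 4 + s) := by
    rw [← h3]
    simp only [neg_mul]
  rw [MeasureTheory.integral_const_mul, h3']
  have h4 : (1 / (Real.pi * n ^ 2)) ^ (1 / 4 + s) ≤ (n : ℝ) ^ (-(1 / 2 + 2 * s)) := by
    have : (n : ℝ) ^ (-(1 / 2 + 2 * s)) = (1 / (n : ℝ) ^ 2) ^ (1 / 4 + s) := by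
      rw [one_div ((n : ℝ) ^ 2), Real.inv_rpow (by positivity), ← Real.rpow_natCast, ← Real.rpow_mul hn0.le,
        ← Real.rpow_neg hn0.le]
      congr 1; push_cast; ring
    rw [this]
    refine Real.rpow_le_rpow (by positivity) ?_ (by linarith)
    refine one_div_le_one_div_of_le (by positivity) ?_
    have := Real.pi_gt_three
    nlinarith [sq_nonneg (n : ℝ)]
  have hG : 0 ≤ Real.Gamma (1 / 4 + s) := (Real.Gamma_pos_of_pos (by linarith)).le
  calc _ ≤ Y ^ s * ((n : ℝ) ^ (-(1 / 2 + 2 * s)) * Real.Gamma (1 / 4 + s)) := by gcongr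
    _ = _ := by ring

lemma U_lower : ∃ c : ℝ, 0 < c ∧ ∀ (Y : ℝ) (n : ℕ), 1 ≤ n → (n : ℝ) ^ 2 ≤ Y →
    c * (n : ℝ) ^ (-(1 / 2) : ℝ) ≤ U Y n := by
  refine ⟨2 ^ (-(3 / 4) : ℝ) * Real.exp (-(2 * Real.pi)), by positivity, fun Y n hn hY => ?_⟩
  have hn' : (1 : ℝ) ≤ n := by exact_mod_cast hn
  have hn0 : (0 : ℝ) < n := by linarith
  have hY0 : 0 < Y := lt_of_lt_of_le (by positivity) hY
  have hsub : Set.Ioc (1 / (n : ℝ) ^ 2) (2 / (n : ℝ) ^ 2) ⊆ Set.Ioi (1 / Y) := by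
    intro u hu
    exact lt_of_le_of_lt (one_div_le_one_div_of_le (by positivity) hY) hu.1
  have h1 : ∫ u in Set.Ioc (1 / (n : ℝ) ^ 2) (2 / (n : ℝ) ^ 2), u ^ (-(3 / 4) : ℝ) * Real.exp (-(Real.pi * n ^ 2) * u)
      ≤ U Y n := by
    refine MeasureTheory.setIntegral_mono_set (U_int Y hY0 n hn) ?_ hsub.eventuallyLE
    filter_upwards [MeasureTheory.ae_restrict_mem measurableSet_Ioi] with u hu
    have : 0 < u := lt_trans (by positivity) (Set.mem_Ioi.mp hu)
    simp only [Pi.zero_apply]; positivity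
  refine le_trans ?_ h1
  have h2 : ∫ u in Set.Ioc (1 / (n : ℝ) ^ 2) (2 / (n : ℝ) ^ 2), (2 / (n : ℝ) ^ 2) ^ (-(3 / 4) : ℝ) * Real.exp (-(2 * Real.pi)) ≤
    ∫ u in Set.Ioc (1 / (n : ℝ) ^ 2) (2 / (n : ℝ) ^ 2), u ^ (-(3 / 4) : ℝ) * Real.exp (-(Real.pi * n ^ 2) * u) := by
    refine MeasureTheory.setIntegral_mono_on (MeasureTheory.integrableOn_const (by simp)) ((U_int Y hY0 n hn).mono_set hsub) measurableSet_Ioc ?_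
    intro u hu
    have hu0 : 0 < u := lt_trans (by positivity) hu.1
    refine mul_le_mul ?_ ?_ (Real.exp_nonneg _) (by positivity)
    · exact Real.rpow_le_rpow_of_nonpos hu0 hu.2 (by norm_num)
    · rw [Real.exp_le_exp]
      have := hu.2
      rw [le_div_iff₀ (by positivity)] at this
      nlinarith [Real.pi_pos]
  refine le_trans (le_of_eq ?_) h2
  rw [MeasureTheory.setIntegral_const]
  have : (MeasureTheory.volume.real (Set.Ioc (1 / (n : ℝ) ^ 2) (2 / (n : ℝ) ^ 2))) = 1 / (n : ℝ) ^ 2 := by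
    rw [Real.volume_real_Ioc_of_le (by gcongr; norm_num)]; ring
  rw [this, smul_eq_mul, Real.div_rpow (by norm_num) (by positivity)]
  have e : ((n : ℝ) ^ 2) ^ (-(3 / 4) : ℝ) = (n : ℝ) ^ (-(3 / 2) : ℝ) := by
    rw [← Real.rpow_natCast, ← Real.rpow_mul hn0.le]; norm_num
  rw [e]
  have e2 : (n : ℝ) ^ (-(1 / 2) : ℝ) = 1 / (n : ℝ) ^ 2 / (n : ℝ) ^ (-(3 / 2) : ℝ) := by
    rw [one_div ((n : ℝ) ^ 2), ← Real.rpow_natCast, ← Real.rpow_neg hn0.le, ← Real.rpow_sub hn0]; norm_num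
  rw [e2]; ring

lemma U_summable (Y : ℝ) (hY : 0 < Y) : Summable (fun n : ℕ => U Y n) := by
  have h1 : Summable (fun n : ℕ => Real.Gamma (1 / 4 + 1 / 2) * Y ^ (1 / 2 : ℝ) * (n : ℝ) ^ (-(1 / 2 + 2 * (1 / 2)) : ℝ)) :=
    (Real.summable_nat_rpow.mpr (by norm_num)).mul_left _
  rw [← summable_nat_add_iff 1] at h1 ⊢
  refine Summable.of_nonneg_of_le (fun n => U_nonneg Y hY _) (fun n => ?_) h1
  exact U_upper (1 / 2) (by norm_num) Y hY (n + 1) (by omega)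

noncomputable def c0 : ℝ := 2 / (Real.pi ^ (-(1 / 4) : ℝ) * Real.Gamma (1 / 4))

lemma c0_pos : 0 < c0 := by
  have := Real.Gamma_pos_of_pos (s := 1 / 4) (by norm_num)
  unfold c0; positivity

lemma U_V (d : ℕ) (hd : 0 < d) (n : ℕ) :
    ∫ t in Set.Ioi (1 : ℝ), t ^ (-(3 / 4) : ℝ) * Real.exp (-Real.pi * (n : ℝ) ^ 2 * t / d) =
      (d : ℝ) ^ (1 / 4 : ℝ) * U d n := by
  have hdR : (0 : ℝ) < d := by exact_mod_cast hd
  have h := MeasureTheory.integral_comp_mul_left_Ioi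
    (fun u : ℝ => u ^ (-(3 / 4) : ℝ) * Real.exp (-(Real.pi * n ^ 2) * u)) 1 (b := 1 / d) (by positivity)
  rw [mul_one] at h
  rw [U]
  have e : ∀ t ∈ Set.Ioi (1 : ℝ), t ^ (-(3 / 4) : ℝ) * Real.exp (-Real.pi * (n : ℝ) ^ 2 * t / d) =
      (d : ℝ) ^ (-(3 / 4) : ℝ) * ((1 / d * t) ^ (-(3 / 4) : ℝ) * Real.exp (-(Real.pi * n ^ 2) * (1 / d * t))) := by
    intro t ht
    have ht : 0 < t := lt_trans one_pos (Set.mem_Ioi.mp ht)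
    rw [← mul_assoc, ← Real.mul_rpow hdR.le (by positivity)]
    congr 2
    · field_simp
    · ring
  rw [MeasureTheory.setIntegral_congr_fun measurableSet_Ioi e, MeasureTheory.integral_const_mul, h,
    smul_eq_mul, ← mul_assoc]
  congr 1
  rw [one_div, inv_inv, ← Real.rpow_add_one hdR.ne']
  norm_num

theorem L_formula (d : ℕ) [NeZero d] (hd : d % 4 = 1) (hs : Squarefree d) (hd1 : 1 < d) :
    (jchar d).LFunction (1 / 2) = ((c0 * ∑' n : ℕ, (jacobiSym n d : ℝ) * U d n : ℝ) : ℂ) := by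
  have hdR : (0 : ℝ) < d := by exact_mod_cast (by omega : 0 < d)
  have h1 := L_half_mellin d hd hs hd1
  rw [mellin_half d hd hs hd1] at h1
  have hF : ∀ n : ℕ, ∀ t ∈ Set.Ioi (1 : ℝ), (t : ℂ) ^ (1 / 4 - 1 : ℂ) * (2 * jchar d (n : ZMod d) *
        (Real.exp (-Real.pi * (n : ℝ) ^ 2 * t / d) : ℂ)) = ((2 * jacobiSym n d * (t ^ (-(3 / 4) : ℝ) *
          Real.exp (-Real.pi * (n : ℝ) ^ 2 * t / d)) : ℝ) : ℂ) := by
    intro n t ht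
    have ht : 0 < t := lt_trans one_pos (Set.mem_Ioi.mp ht)
    rw [jchar_natCast, show (1 / 4 - 1 : ℂ) = ((-(3 / 4) : ℝ) : ℂ) by push_cast; norm_num,
      ← Complex.ofReal_cpow ht.le]
    push_cast
    ring
  have hIntg : ∀ n : ℕ, 1 ≤ n → MeasureTheory.IntegrableOn (fun t : ℝ => t ^ (-(3 / 4) : ℝ) *
          Real.exp (-Real.pi * (n : ℝ) ^ 2 * t / d)) (Set.Ioi 1) := by
    intro n hn
    have hn' : (0 : ℝ) < n := by exact_mod_cast hn
    have := integrableOn_rpow_mul_exp_neg_mul_rpow (p := 1) (s := -(3 / 4)) (b := Real.pi * n ^ 2 / d) (by norm_num) one_pos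
      (by positivity)
    refine (this.mono_set (Set.Ioi_subset_Ioi zero_le_one)).congr_fun (fun t _ => ?_) measurableSet_Ioi
    simp only [Real.rpow_one]; congr 2; ring
  have hJ0 : jacobiSym ((0 : ℕ) : ℤ) d = 0 := jacobiSym.zero_left hd1
  have hex := MeasureTheory.hasSum_integral_of_summable_integral_norm
    (μ := MeasureTheory.volume.restrict (Set.Ioi (1 : ℝ)))
    (F := fun (n : ℕ) (t : ℝ) => (((2 * jacobiSym n d * (t ^ (-(3 / 4) : ℝ) *
          Real.exp (-Real.pi * (n : ℝ) ^ 2 * t / d)) : ℝ)) : ℂ)) ?_ ?_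
  · have e1 : ∫ t in Set.Ioi (1 : ℝ), (t : ℂ) ^ (1 / 4 - 1 : ℂ) * phi d t =
        ∫ t in Set.Ioi (1 : ℝ), ∑' n : ℕ, (((2 * jacobiSym n d * (t ^ (-(3 / 4) : ℝ) *
          Real.exp (-Real.pi * (n : ℝ) ^ 2 * t / d)) : ℝ)) : ℂ) := by
      refine MeasureTheory.setIntegral_congr_fun measurableSet_Ioi fun t ht => ?_
      have ht' : 0 < t := lt_trans one_pos (Set.mem_Ioi.mp ht)
      rw [← (phi_hasSum_nat d hd hs hd1 t ht').tsum_eq, ← tsum_mul_left]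
      exact tsum_congr fun n => hF n t ht
    rw [e1, ← hex.tsum_eq] at h1
    have e2 : ∀ n : ℕ, ∫ t in Set.Ioi (1 : ℝ), (((2 * jacobiSym n d * (t ^ (-(3 / 4) : ℝ) *
          Real.exp (-Real.pi * (n : ℝ) ^ 2 * t / d)) : ℝ)) : ℂ) =
          ((2 * (d : ℝ) ^ (1 / 4 : ℝ) * (jacobiSym n d * U d n) : ℝ) : ℂ) := by
      intro n
      rw [integral_complex_ofReal, MeasureTheory.integral_const_mul, U_V d (by omega)]
      congr 1; ring
    simp_rw [e2] at h1
    rw [← Complex.ofReal_tsum, tsum_mul_left] at h1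
    have e3 : (Real.sqrt d : ℂ) ^ (1 / 2 : ℂ) = (((d : ℝ) ^ (1 / 4 : ℝ) : ℝ) : ℂ) := by
      rw [show (1 / 2 : ℂ) = ((1 / 2 : ℝ) : ℂ) by push_cast; rfl, ← Complex.ofReal_cpow (Real.sqrt_nonneg _),
        Real.sqrt_eq_rpow, ← Real.rpow_mul hdR.le]
      norm_num
    have e4 : Gammaℝ (1 / 2) = ((Real.pi ^ (-(1 / 4) : ℝ) * Real.Gamma (1 / 4) : ℝ) : ℂ) := by
      rw [Gammaℝ_def]
      push_cast
      rw [Complex.ofReal_cpow Real.pi_pos.le, ← Complex.Gamma_ofReal]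
      push_cast
      norm_num
    rw [e3, e4] at h1
    have hG := Real.Gamma_pos_of_pos (s := 1 / 4) (by norm_num)
    have hp1 : (Real.pi ^ (-(1 / 4) : ℝ) * Real.Gamma (1 / 4)) ≠ 0 := by positivity
    have hp2 : ((d : ℝ) ^ (1 / 4 : ℝ)) ≠ 0 := by positivity
    rw [c0]
    generalize Real.pi ^ (-(1 / 4) : ℝ) * Real.Gamma (1 / 4) = P at *
    generalize (d : ℝ) ^ (1 / 4 : ℝ) = Q at *
    generalize (∑' n : ℕ, (jacobiSym n d : ℝ) * U d n) = S at *
    have hp1' : (P : ℂ) ≠ 0 := by exact_mod_cast hp1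
    have hp2' : (Q : ℂ) ≠ 0 := by exact_mod_cast hp2
    push_cast at h1 ⊢
    field_simp
    have : 2 * (Q : ℂ) * ((jchar d).LFunction (1 / 2) * P) = 2 * Q * (2 * S) := by
      rw [← mul_assoc]; linear_combination (-1) * h1
    exact mul_left_cancel₀ (mul_ne_zero two_ne_zero hp2') this
  · intro n
    rcases Nat.eq_zero_or_pos n with rfl | hn
    · simp only [hJ0, Int.cast_zero, mul_zero, zero_mul, ofReal_zero]; exact MeasureTheory.integrable_zero _ _ _
    · exact ((hIntg n hn).const_mul _).ofReal
  · have hb := ((U_summable d hdR).mul_left (2 * (d : ℝ) ^ (1 / 4 : ℝ)))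
    refine Summable.of_nonneg_of_le (fun n => MeasureTheory.integral_nonneg fun t => norm_nonneg _) (fun n => ?_) hb
    rcases Nat.eq_zero_or_pos n with rfl | hn
    · simp only [hJ0, Int.cast_zero, mul_zero, zero_mul, ofReal_zero, norm_zero, MeasureTheory.integral_zero]
      have := U_nonneg d hdR 0
      positivity
    · rw [mul_assoc, ← U_V d (by omega), ← MeasureTheory.integral_const_mul]
      refine MeasureTheory.setIntegral_mono_on (((hIntg n hn).const_mul _).ofReal.norm) ((hIntg n hn).const_mul _) measurableSet_Ioi ?_
      intro t ht
      have ht' : 0 < t := lt_trans one_pos (Set.mem_Ioi.mp ht)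
      rw [Complex.norm_real, Real.norm_eq_abs, abs_mul, abs_mul, abs_of_nonneg (a := _ * Real.exp _) (by positivity)]
      have : |(jacobiSym n d : ℝ)| ≤ 1 := by
        rcases jacobiSym.trichotomy n d with h | h | h <;> simp [h]
      rw [abs_two]
      refine mul_le_mul_of_nonneg_right (by linarith) (by positivity)

end LBSM

namespace LBSM

open Complex

lemma gauss_norm (r : ℕ) [NeZero r] (ho : r % 2 = 1) (hs : Squarefree r) :
    ‖gaussSum (jchar r) ZMod.stdAddChar‖ ^ 2 = r := by
  have hp := jchar_primitive r ho hs
  have hshift := fun a => gaussSum_mulShift_of_isPrimitive (ZMod.stdAddChar (N := r)) hp a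
  rw [jchar_inv] at hshift
  set G := gaussSum (jchar r) ZMod.stdAddChar with hG
  have hconjχ : ∀ a : ZMod r, (starRingEnd ℂ) (jchar r a) = jchar r a := by
    intro a
    have : jchar r a = (jacobiSym (a.val : ℕ) r : ℂ) := by
      rw [← jchar_natCast, ZMod.natCast_zmod_val]
    rw [this]; simp
  have hconje : ∀ a : ZMod r, (starRingEnd ℂ) (ZMod.stdAddChar a : ℂ) = ZMod.stdAddChar (-a) := by
    intro a
    exact (AddChar.map_neg_eq_conj _ _).symm
  have h1 : (starRingEnd ℂ) G * G = r := by
    calc (starRingEnd ℂ) G * G = ∑ h : ZMod r, ZMod.stdAddChar (-h) * (jchar r h * G) := by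
          conv_lhs => rw [hG, gaussSum, map_sum, Finset.sum_mul]
          refine Finset.sum_congr rfl fun h _ => ?_
          rw [map_mul, hconjχ, hconje, hG, gaussSum]; ring
      _ = ∑ h : ZMod r, ∑ y : ZMod r, jchar r y * ZMod.stdAddChar (h * (y - 1)) := by
          refine Finset.sum_congr rfl fun h _ => ?_
          rw [← hshift, gaussSum, Finset.mul_sum]
          refine Finset.sum_congr rfl fun y _ => ?_
          rw [AddChar.mulShift_apply, show h * (y - 1) = -h + h * y by ring, AddChar.map_add_eq_mul]
          ring
      _ = ∑ y : ZMod r, jchar r y * (if y - 1 = 0 then (Fintype.card (ZMod r) : ℂ) else 0) := by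
          rw [Finset.sum_comm]
          refine Finset.sum_congr rfl fun y _ => ?_
          rw [← Finset.mul_sum, AddChar.sum_mulShift _ (ZMod.isPrimitive_stdAddChar r)]
          norm_num
      _ = r := by
          rw [Finset.sum_eq_single 1]
          · simp [ZMod.card]
          · intro b _ hb
            rw [if_neg (sub_ne_zero.mpr hb), mul_zero]
          · simp
  rw [mul_comm, Complex.mul_conj, Complex.normSq_eq_norm_sq] at h1
  exact_mod_cast h1

lemma geom_bound (r : ℕ) (h : ℕ) (h0 : 0 < h) (hr : h < r) (I' : ℕ) :
    ‖∑ i ∈ Finset.range I', (cexp (2 * Real.pi * I * h / r)) ^ i‖ ≤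
      (r : ℝ) / 2 * (1 / h + 1 / (r - h : ℕ)) := by
  have hr0 : (0 : ℝ) < r := by exact_mod_cast (by omega : 0 < r)
  have hh0 : (0 : ℝ) < h := by exact_mod_cast h0
  have hhr : (0 : ℝ) < ((r - h : ℕ) : ℝ) := by exact_mod_cast (by omega : 0 < r - h)
  have hsub : ((r - h : ℕ) : ℝ) = r - h := by push_cast [hr.le]; ring
  set z := cexp (2 * Real.pi * I * h / r) with hz
  have hz1 : z = cexp (I * ((2 * Real.pi * h / r : ℝ) : ℂ)) := by
    rw [hz]; congr 1; push_cast; ring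
  have hzn : ‖z‖ = 1 := by rw [hz1]; rw [mul_comm]; exact Complex.norm_exp_ofReal_mul_I _
  have hsin : 2 * (((h : ℝ) / r) ⊓ ((r - h : ℕ) / r)) ≤ Real.sin (Real.pi * h / r) := by
    have hpi := Real.pi_pos
    rcases le_total ((h : ℝ) / r) (1 / 2) with hc | hc
    · have := Real.mul_le_sin (x := Real.pi * h / r) (by positivity) (by
        rw [mul_div_assoc]; nlinarith)
      refine le_trans ?_ this
      calc _ ≤ 2 * ((h : ℝ) / r) := by gcongr; exact inf_le_left
        _ = _ := by field_simp
    · have e : ((r - h : ℕ) : ℝ) / r = 1 - h / r := by rw [hsub]; field_simp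
      have := Real.mul_le_sin (x := Real.pi - Real.pi * h / r) (by
        rw [mul_div_assoc]
        have : (h : ℝ) / r ≤ 1 := by rw [div_le_one hr0]; exact_mod_cast hr.le
        nlinarith) (by rw [mul_div_assoc]; nlinarith)
      rw [Real.sin_pi_sub] at this
      refine le_trans ?_ this
      calc _ ≤ 2 * (((r - h : ℕ) : ℝ) / r) := by gcongr; exact inf_le_right
        _ = _ := by rw [e]; field_simp
  have hmin : 0 < ((h : ℝ) / r) ⊓ (((r - h : ℕ) : ℝ) / r) := lt_inf_iff.mpr ⟨by positivity, by positivity⟩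
  have hden : 4 * (((h : ℝ) / r) ⊓ ((r - h : ℕ) / r)) ≤ ‖z - 1‖ := by
    rw [hz1, Complex.norm_exp_I_mul_ofReal_sub_one, Real.norm_eq_abs,
      show 2 * Real.pi * h / r / 2 = Real.pi * h / r by ring]
    refine le_trans ?_ (le_abs_self _)
    linarith
  have hz2 : z ≠ 1 := by
    intro h; rw [h, sub_self, norm_zero] at hden; linarith
  rw [geom_sum_eq hz2, norm_div]
  have hnum : ‖z ^ I' - 1‖ ≤ 2 := by
    refine (norm_sub_le _ _).trans ?_
    rw [norm_pow, hzn]; norm_num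
  calc ‖z ^ I' - 1‖ / ‖z - 1‖ ≤ 2 / (4 * (((h : ℝ) / r) ⊓ ((r - h : ℕ) / r))) := by gcongr
    _ ≤ _ := by
      rcases le_total ((h : ℝ) / r) (((r - h : ℕ) : ℝ) / r) with hc | hc
      · rw [inf_eq_left.mpr hc]
        calc 2 / (4 * ((h : ℝ) / r)) = (r : ℝ) / 2 * (1 / h + 0) := by field_simp; norm_num
          _ ≤ _ := by gcongr; positivity
      · rw [inf_eq_right.mpr hc]
        calc 2 / (4 * (((r - h : ℕ) : ℝ) / r)) = (r : ℝ) / 2 * (0 + 1 / (r - h : ℕ)) := by field_simp; norm_num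
          _ ≤ _ := by gcongr; positivity

lemma one_add_log_le (r : ℝ) (hr : 1 ≤ r) : 1 + Real.log r ≤ 9 * r ^ (1 / 8 : ℝ) := by
  have h1 : Real.log r ≤ 8 * r ^ (1 / 8 : ℝ) := by
    have := Real.log_le_rpow_div (x := r) (ε := 1 / 8) (by linarith) (by norm_num)
    linarith
  have h2 : 1 ≤ r ^ (1 / 8 : ℝ) := Real.one_le_rpow hr (by norm_num)
  linarith

/-- Pólya–Vinogradov for Jacobi characters. -/
lemma pv (r : ℕ) [NeZero r] (ho : r % 2 = 1) (hs : Squarefree r) (h1 : 1 < r) (w : ZMod r) (I' : ℕ) :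
    ‖∑ i ∈ Finset.range I', jchar r (w + i)‖ ≤ 9 * (r : ℝ) ^ (5 / 8 : ℝ) := by
  have hr0 : (0 : ℝ) < r := by exact_mod_cast (by omega : 0 < r)
  have hp := jchar_primitive r ho hs
  have hshift := fun a => gaussSum_mulShift_of_isPrimitive (ZMod.stdAddChar (N := r)) hp a
  rw [jchar_inv] at hshift
  have hGn := gauss_norm r ho hs
  set G := gaussSum (jchar r) ZMod.stdAddChar with hG
  have hG1 : ‖G‖ = √(r : ℝ) := by rw [← hGn, Real.sqrt_sq (norm_nonneg _)]
  have key : (∑ i ∈ Finset.range I', jchar r (w + i)) * G =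
      ∑ h : ZMod r, jchar r h * ZMod.stdAddChar (w * h) * ∑ i ∈ Finset.range I', (ZMod.stdAddChar h : ℂ) ^ i := by
    rw [Finset.sum_mul]
    simp_rw [← hshift, gaussSum, Finset.mul_sum]
    rw [Finset.sum_comm]
    refine Finset.sum_congr rfl fun h _ => Finset.sum_congr rfl fun i _ => ?_
    rw [AddChar.mulShift_apply, add_mul, AddChar.map_add_eq_mul, ← AddChar.map_nsmul_eq_pow, nsmul_eq_mul]
    ring
  have hχ : ∀ a : ZMod r, ‖jchar r a‖ ≤ 1 := fun a => DirichletCharacter.norm_le_one _ _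
  have hb : ‖(∑ i ∈ Finset.range I', jchar r (w + i)) * G‖ ≤ r * (1 + Real.log r) := by
    rw [key, ← sum_range_zmod r (fun h => jchar r h * ZMod.stdAddChar (w * h) * ∑ i ∈ Finset.range I', (ZMod.stdAddChar h : ℂ) ^ i)]
    obtain ⟨r', rfl⟩ : ∃ r', r = r' + 1 := ⟨r - 1, by omega⟩
    rw [Finset.sum_range_succ']
    have h0 : jchar (r' + 1) ((0 : ℕ) : ZMod (r' + 1)) = 0 := by
      rw [Nat.cast_zero]
      exact jchar_zero _ h1
    rw [h0, zero_mul, zero_mul, add_zero]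
    calc _ ≤ ∑ h ∈ Finset.range r', ((r' + 1 : ℕ) : ℝ) / 2 * (1 / (h + 1 : ℕ) + 1 / (r' + 1 - (h + 1) : ℕ)) := by
          refine (norm_sum_le _ _).trans (Finset.sum_le_sum fun h hh => ?_)
          rw [norm_mul, norm_mul]
          have := geom_bound (r' + 1) (h + 1) (by omega) (by have := Finset.mem_range.mp hh; omega) I'
          rw [← stdAddChar_nat] at this
          exact le_trans (mul_le_mul_of_nonneg_right (mul_le_one₀ (hχ _) (norm_nonneg _)
            (by rw [AddChar.norm_apply])) (norm_nonneg _)) (by rw [one_mul]; exact this)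
      _ = ((r' + 1 : ℕ) : ℝ) * ∑ h ∈ Finset.range r', (1 : ℝ) / (h + 1 : ℕ) := by
          rw [← Finset.mul_sum, Finset.sum_add_distrib]
          have : ∑ h ∈ Finset.range r', (1 : ℝ) / (r' + 1 - (h + 1) : ℕ) = ∑ h ∈ Finset.range r', (1 : ℝ) / (h + 1 : ℕ) := by
            rw [← Finset.sum_range_reflect]
            refine Finset.sum_congr rfl fun h hh => ?_
            have := Finset.mem_range.mp hh
            rw [show r' + 1 - (r' - 1 - h + 1) = h + 1 by omega]
          rw [this]; ring
      _ ≤ _ := by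
          have := harmonic_le_one_add_log r'
          have e : ((harmonic r' : ℚ) : ℝ) = ∑ h ∈ Finset.range r', (1 : ℝ) / (h + 1 : ℕ) := by
            simp [harmonic]
          rw [e] at this
          have : Real.log r' ≤ Real.log (r' + 1 : ℕ) := by
            rcases Nat.eq_zero_or_pos r' with rfl | h
            · simp
            · apply Real.log_le_log (by positivity); push_cast; linarith
          gcongr
          linarith
  rw [norm_mul, hG1] at hb
  have hsq : 0 < √(r : ℝ) := by positivity
  have h3 : ‖∑ i ∈ Finset.range I', jchar r (w + i)‖ ≤ √(r : ℝ) * (1 + Real.log r) := by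
    rw [← mul_le_mul_iff_left₀ hsq]
    calc _ ≤ _ := hb
      _ = _ := by nth_rewrite 1 [← Real.mul_self_sqrt hr0.le]; ring
  refine h3.trans ?_
  have := one_add_log_le r (by exact_mod_cast h1.le)
  calc _ ≤ √(r : ℝ) * (9 * (r : ℝ) ^ (1 / 8 : ℝ)) := by gcongr
    _ = 9 * ((r : ℝ) ^ (1 / 2 : ℝ) * (r : ℝ) ^ (1 / 8 : ℝ)) := by rw [Real.sqrt_eq_rpow]; ring
    _ = _ := by rw [← Real.rpow_add hr0]; norm_num

end LBSM

namespace LBSM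

lemma ap_sum (f : ℕ → ℝ) (e i0 : ℕ) (h0 : i0 < e) (n : ℕ) :
    ∃ I', (n ≤ e * I' + i0 ∧ ∀ q, q < I' → e * q + i0 < n) ∧
    ∑ i ∈ (Finset.range n).filter (fun i => i % e = i0), f i = ∑ t ∈ Finset.range I', f (i0 + e * t) := by
  induction n with
  | zero => exact ⟨0, by simp, by simp⟩
  | succ n ih =>
    obtain ⟨I', ⟨h1, h2⟩, h3⟩ := ih
    rw [Finset.range_add_one, Finset.filter_insert]
    by_cases h : n % e = i0
    · rw [if_pos h, Finset.sum_insert (by simp), h3]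
      have hd := Nat.div_add_mod n e
      have hI : I' = n / e := by
        apply le_antisymm
        · by_contra hc
          have := h2 (n / e) (by omega)
          omega
        · by_contra hc
          have : e * (I' + 1) ≤ e * (n / e) := Nat.mul_le_mul_left _ (by omega)
          rw [mul_add] at this
          omega
      refine ⟨I' + 1, ⟨?_, ?_⟩, ?_⟩
      · rw [mul_add]; omega
      · intro q hq
        have : e * q ≤ e * (n / e) := Nat.mul_le_mul_left _ (by omega)
        omega
      · rw [Finset.sum_range_succ, add_comm]
        congr 2
        rw [hI]; omega
    · rw [if_neg h]
      refine ⟨I', ⟨?_, fun q hq => (h2 q hq).trans (by omega)⟩, h3⟩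
      rcases Nat.lt_or_ge n (e * I' + i0) with h4 | h4
      · omega
      · exfalso; apply h
        have : n = e * I' + i0 := by omega
        rw [this, Nat.mul_add_mod, Nat.mod_eq_of_lt h0]

lemma jac_zero_of_dvd (e x N : ℕ) (h : ¬ Nat.Coprime e N) (hN : N ≠ 0) (hx : e ∣ x) : jacobiSym (x : ℕ) N = 0 := by
  have : NeZero N := ⟨hN⟩
  rw [jacobiSym.eq_zero_iff_not_coprime]
  rw [Int.gcd_natCast_natCast]
  intro hc
  exact h (Nat.Coprime.coprime_dvd_left hx hc)

lemma pv_div (N : ℕ) (hN : N ≠ 0) (B : ℝ) (hB : 0 ≤ B)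
    (H : ∀ u v n : ℕ, v.Coprime N → |∑ i ∈ Finset.range n, (jacobiSym (u + v * i : ℕ) N : ℝ)| ≤ B)
    (u v n e : ℕ) (hv : v.Coprime N) (he : 0 < e) (hev : e.Coprime v) :
    |∑ i ∈ (Finset.range n).filter (fun i => e ∣ u + v * i), (jacobiSym (u + v * i : ℕ) N : ℝ)| ≤ B := by
  by_cases hc : Nat.Coprime e N
  · by_cases hex : ∃ i0, e ∣ u + v * i0
    · obtain ⟨i0, hi0⟩ := hex
      have hf : (Finset.range n).filter (fun i => e ∣ u + v * i) = (Finset.range n).filter (fun i => i % e = i0 % e) := by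
        apply Finset.filter_congr
        intro i _
        have h1 : (e ∣ u + v * i) ↔ u + v * i ≡ u + v * i0 [MOD e] := by
          unfold Nat.ModEq
          rw [Nat.mod_eq_zero_of_dvd hi0, Nat.dvd_iff_mod_eq_zero]
        rw [h1]
        constructor
        · intro h
          exact Nat.ModEq.cancel_left_of_coprime hev (Nat.ModEq.add_left_cancel' u h)
        · intro h
          exact Nat.ModEq.add_left u (Nat.ModEq.mul_left v h)
      rw [hf]
      obtain ⟨I', -, h3⟩ := ap_sum (fun i => (jacobiSym (u + v * i : ℕ) N : ℝ)) e (i0 % e) (Nat.mod_lt _ he) n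
      rw [h3]
      have := H (u + v * (i0 % e)) (v * e) I' (Nat.Coprime.mul_left hv hc)
      convert this using 6
      ring
    · rw [Finset.filter_false_of_mem]
      · simpa using hB
      · intro i _ h; exact hex ⟨i, h⟩
  · rw [Finset.sum_eq_zero]
    · simpa using hB
    · intro i hi
      rw [jac_zero_of_dvd e _ N hc hN (Finset.mem_filter.mp hi).2]
      simp

lemma pv_ap (r : ℕ) (ho : r % 2 = 1) (hs : Squarefree r) (h1 : 1 < r) (u v n : ℕ) (hv : v.Coprime r) :
    |∑ i ∈ Finset.range n, (jacobiSym (u + v * i : ℕ) r : ℝ)| ≤ 9 * (r : ℝ) ^ (5 / 8 : ℝ) := by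
  have : NeZero r := ⟨by omega⟩
  have hp := pv r ho hs h1 ((ZMod.unitOfCoprime v hv)⁻¹ * (u : ZMod r)) n
  have e : ((∑ i ∈ Finset.range n, (jacobiSym (u + v * i : ℕ) r : ℝ) : ℝ) : ℂ) =
      jchar r (v : ZMod r) * ∑ i ∈ Finset.range n, jchar r (((ZMod.unitOfCoprime v hv)⁻¹ : (ZMod r)ˣ) * (u : ZMod r) + i) := by
    push_cast
    rw [Finset.mul_sum]
    refine Finset.sum_congr rfl fun i _ => ?_
    rw [← map_mul, mul_add, ← mul_assoc]
    have : (v : ZMod r) * (((ZMod.unitOfCoprime v hv)⁻¹ : (ZMod r)ˣ) : ZMod r) = 1 := by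
      rw [← ZMod.coe_unitOfCoprime v hv]; exact Units.mul_inv _
    rw [this, one_mul]
    have := jchar_natCast r (u + v * i)
    push_cast at this
    exact this.symm
  have h2 : |∑ i ∈ Finset.range n, (jacobiSym (u + v * i : ℕ) r : ℝ)| = ‖((∑ i ∈ Finset.range n, (jacobiSym (u + v * i : ℕ) r : ℝ) : ℝ) : ℂ)‖ := by
    rw [Complex.norm_real, Real.norm_eq_abs]
  rw [h2, e, norm_mul]
  exact (mul_le_mul_of_nonneg_right (DirichletCharacter.norm_le_one (jchar r) _) (norm_nonneg _)).trans
    (by rw [one_mul]; exact hp)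

lemma coprime_ind (x s : ℕ) (hs : s ≠ 0) :
    ∑ e ∈ s.divisors.filter (fun e => e ∣ x), (ArithmeticFunction.moebius e : ℤ) = if x.Coprime s then 1 else 0 := by
  have : s.divisors.filter (fun e => e ∣ x) = (Nat.gcd x s).divisors := by
    ext e
    simp only [Finset.mem_filter, Nat.mem_divisors, Nat.dvd_gcd_iff, ne_eq, Nat.gcd_eq_zero_iff, not_and]
    tauto
  rw [this]
  rw [← ArithmeticFunction.coe_zeta_mul_apply, ArithmeticFunction.coe_zeta_mul_moebius,
    ArithmeticFunction.one_apply]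

lemma pv_N (N : ℕ) (ho : N % 2 = 1) (hsq : ¬ IsSquare N) (u v n : ℕ) (hv : v.Coprime N) :
    |∑ i ∈ Finset.range n, (jacobiSym (u + v * i : ℕ) N : ℝ)| ≤ 9 * (N : ℝ) ^ (5 / 8 : ℝ) := by
  obtain ⟨r, s, hr0, hs0, hN, hr⟩ := Nat.sq_mul_squarefree_of_pos (n := N) (by omega)
  have hr1 : 1 < r := by
    by_contra h
    have : r = 1 := by omega
    apply hsq
    exact ⟨s, by rw [← hN, this]; ring⟩
  have hro : r % 2 = 1 := by
    by_contra h
    have : 2 ∣ N := hN ▸ Dvd.dvd.mul_left (by omega) _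
    omega
  have hvr : v.Coprime r := Nat.Coprime.coprime_dvd_right ⟨s ^ 2, by rw [← hN]; ring⟩ hv
  have hvs : v.Coprime s := Nat.Coprime.coprime_dvd_right ⟨s * r, by rw [← hN]; ring⟩ hv
  have hJ : ∀ x : ℕ, (jacobiSym (x : ℕ) N : ℝ) =
      ∑ e ∈ s.divisors, if e ∣ x then (ArithmeticFunction.moebius e : ℝ) * jacobiSym (x : ℕ) r else 0 := by
    intro x
    have : NeZero s := ⟨by omega⟩
    have : NeZero r := ⟨by omega⟩
    rw [← Finset.sum_filter, ← Finset.sum_mul]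
    have := coprime_ind x s (by omega)
    have h2 : ∑ e ∈ s.divisors.filter (fun e => e ∣ x), ((ArithmeticFunction.moebius e : ℤ) : ℝ) = if x.Coprime s then 1 else 0 := by
      rw [← Int.cast_sum, this]; split_ifs <;> simp
    rw [h2, ← hN, jacobiSym.mul_right, jacobiSym.pow_right]
    by_cases hc : x.Coprime s
    · rw [if_pos hc, jacobiSym.sq_one (by rw [Int.gcd_natCast_natCast]; exact hc)]
      simp
    · rw [if_neg hc, (jacobiSym.eq_zero_iff_not_coprime (a := (x : ℤ)) (b := s)).mpr (by rw [Int.gcd_natCast_natCast]; exact hc)]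
      simp
  have h1 : ∑ i ∈ Finset.range n, (jacobiSym (u + v * i : ℕ) N : ℝ) = ∑ e ∈ s.divisors, (ArithmeticFunction.moebius e : ℝ) *
      ∑ i ∈ (Finset.range n).filter (fun i => e ∣ u + v * i), (jacobiSym (u + v * i : ℕ) r : ℝ) := by
    simp_rw [hJ]
    rw [Finset.sum_comm]
    refine Finset.sum_congr rfl fun e _ => ?_
    rw [Finset.mul_sum, Finset.sum_filter]
  rw [h1]
  have hr0 : (0 : ℝ) < r := by exact_mod_cast (by omega : 0 < r)
  have hs1 : (1 : ℝ) ≤ s := by exact_mod_cast (by omega : 1 ≤ s)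
  calc _ ≤ ∑ e ∈ s.divisors, 9 * (r : ℝ) ^ (5 / 8 : ℝ) := by
        refine (Finset.abs_sum_le_sum_abs _ _).trans (Finset.sum_le_sum fun e he => ?_)
        rw [abs_mul]
        have hμ : |((ArithmeticFunction.moebius e : ℤ) : ℝ)| ≤ 1 := by
          exact_mod_cast ArithmeticFunction.abs_moebius_le_one (n := e)
        have he0 : 0 < e := Nat.pos_of_mem_divisors he
        have hb := pv_div r (by omega) (9 * (r : ℝ) ^ (5 / 8 : ℝ)) (by positivity)
          (fun u v n hv => pv_ap r hro hr hr1 u v n hv) u v n e hvr he0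
          (Nat.Coprime.coprime_dvd_left (Nat.dvd_of_mem_divisors he) hvs.symm)
        calc _ ≤ 1 * (9 * (r : ℝ) ^ (5 / 8 : ℝ)) := mul_le_mul hμ hb (abs_nonneg _) zero_le_one
          _ = _ := one_mul _
    _ = (s.divisors.card : ℝ) * (9 * (r : ℝ) ^ (5 / 8 : ℝ)) := by rw [Finset.sum_const, nsmul_eq_mul]
    _ ≤ (s : ℝ) ^ (2 * (5 / 8) : ℝ) * (9 * (r : ℝ) ^ (5 / 8 : ℝ)) := by
        gcongr
        calc (s.divisors.card : ℝ) ≤ s := by exact_mod_cast Nat.card_divisors_le_self s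
          _ = (s : ℝ) ^ (1 : ℝ) := (Real.rpow_one _).symm
          _ ≤ _ := Real.rpow_le_rpow_of_exponent_le hs1 (by norm_num)
    _ = 9 * (N : ℝ) ^ (5 / 8 : ℝ) := by
        rw [← hN]; push_cast
        rw [Real.mul_rpow (by positivity) hr0.le, Real.rpow_mul (by positivity), Real.rpow_two]
        ring

end LBSM

namespace LBSM

lemma sq_dvd_iff (a b r : ℕ) (hb : b ≠ 0) (hr : Squarefree r) : a ^ 2 ∣ b ^ 2 * r ↔ a ∣ b := by
  constructor
  · intro h
    rcases Nat.eq_zero_or_pos a with rfl | ha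
    · simp at h
      rcases h with h | h
      · exact absurd h hb
      · exact absurd h hr.ne_zero
    obtain ⟨g, a', b', hg, hc, rfl, rfl⟩ := Nat.exists_coprime' (m := a) (n := b) (Nat.gcd_pos_of_pos_left _ ha)
    have h' : g ^ 2 * a' ^ 2 ∣ g ^ 2 * (b' ^ 2 * r) := by
      convert h using 1 <;> ring
    have h2 : a' ^ 2 ∣ b' ^ 2 * r := Nat.dvd_of_mul_dvd_mul_left (by positivity) h'
    have h3 : a' ^ 2 ∣ r := (Nat.Coprime.pow 2 2 hc).dvd_of_dvd_mul_left h2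
    have h4 : a' = 1 := Nat.isUnit_iff.mp (hr a' (by rw [← sq]; exact h3))
    rw [h4]; simp
  · intro h
    exact Dvd.dvd.mul_right (pow_dvd_pow_of_dvd h 2) _

lemma sqfree_ind (d M : ℕ) (hd : 0 < d) (hM : d ≤ M) :
    ∑ a ∈ (Finset.Icc 1 M).filter (fun a => a ^ 2 ∣ d), (ArithmeticFunction.moebius a : ℤ) =
      if Squarefree d then 1 else 0 := by
  obtain ⟨r, b, hr0, hb0, hN, hr⟩ := Nat.sq_mul_squarefree_of_pos (n := d) hd
  have h1 : (Finset.Icc 1 M).filter (fun a => a ^ 2 ∣ d) = b.divisors := by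
    ext a
    rw [Finset.mem_filter, Nat.mem_divisors, Finset.mem_Icc, ← hN, sq_dvd_iff a b r (by omega) hr]
    constructor
    · rintro ⟨-, h⟩; exact ⟨h, by omega⟩
    · rintro ⟨h, -⟩
      refine ⟨⟨Nat.pos_of_dvd_of_pos h hb0, ?_⟩, h⟩
      have := Nat.le_of_dvd hb0 h
      have : b ≤ d := by rw [← hN]; nlinarith
      omega
  rw [h1, ← ArithmeticFunction.coe_zeta_mul_apply, ArithmeticFunction.coe_zeta_mul_moebius,
    ArithmeticFunction.one_apply]
  congr 1
  apply propext
  constructor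
  · intro h; rw [← hN, h]; simpa using hr
  · intro h
    have := h b ⟨r, by rw [← hN]; ring⟩
    exact Nat.isUnit_iff.mp this

lemma count_sq (J a : ℕ) (ha : 0 < a) :
    (((Finset.range J).filter (fun j => a ^ 2 ∣ 1 + 8 * j)).card : ℝ) ≤ 8 * J / (a : ℝ) ^ 2 := by
  have ha2 : 0 < a ^ 2 := by positivity
  have h : ((Finset.range J).filter (fun j => a ^ 2 ∣ 1 + 8 * j)).card ≤ (Finset.Icc 1 (8 * J / a ^ 2)).card := by
    refine Finset.card_le_card_of_injOn (fun j => (1 + 8 * j) / a ^ 2) ?_ ?_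
    · intro j hj
      simp only [Finset.coe_filter, Finset.mem_range, Set.mem_ofPred_eq] at hj
      simp only [Finset.coe_Icc, Set.mem_Icc]
      refine ⟨Nat.div_pos (Nat.le_of_dvd (by omega) hj.2) ha2, Nat.div_le_div_right (by omega)⟩
    · intro j hj j' hj' h
      simp only [Finset.coe_filter, Finset.mem_range, Set.mem_ofPred_eq] at hj hj'
      simp only at h
      have h1 := Nat.div_mul_cancel hj.2
      have h2 := Nat.div_mul_cancel hj'.2
      rw [h] at h1
      omega
  rw [Nat.card_Icc] at h
  calc (((Finset.range J).filter (fun j => a ^ 2 ∣ 1 + 8 * j)).card : ℝ) ≤ ((8 * J / a ^ 2 : ℕ) : ℝ) := by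
        exact_mod_cast h
    _ ≤ _ := by
        refine Nat.cast_div_le.trans (le_of_eq ?_)
        push_cast; rfl

lemma min_interp (x B Y : ℝ) (hx : 0 ≤ x) (hB : x ≤ B) (hY : x ≤ Y) :
    x ≤ B ^ (2 / 5 : ℝ) * Y ^ (3 / 5 : ℝ) := by
  calc x = x ^ (2 / 5 : ℝ) * x ^ (3 / 5 : ℝ) := by
        rw [← Real.rpow_add_of_nonneg hx (by norm_num) (by norm_num)]; norm_num
    _ ≤ _ := by
      have : 0 ≤ B := hx.trans hB
      gcongr

lemma jac_abs_le (a : ℤ) (b : ℕ) : |(jacobiSym a b : ℝ)| ≤ 1 := by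
  rcases jacobiSym.trichotomy a b with h | h | h <;> rw [h] <;> norm_num

lemma sieve : ∃ C : ℝ, 0 < C ∧ ∀ N : ℕ, N % 2 = 1 → ¬ IsSquare N → ∀ J J' : ℕ, J' ≤ J →
    |∑ j ∈ (Finset.range J').filter (fun j => Squarefree (1 + 8 * j)), (jacobiSym (1 + 8 * j : ℕ) N : ℝ)| ≤
      C * (J : ℝ) ^ (3 / 5 : ℝ) * (N : ℝ) ^ (1 / 4 : ℝ) := by
  have hsum : Summable (fun a : ℕ => (a : ℝ) ^ (-(6 / 5) : ℝ)) := Real.summable_nat_rpow.mpr (by norm_num)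
  set Z := ∑' a : ℕ, (a : ℝ) ^ (-(6 / 5) : ℝ) with hZ
  have hZ0 : 0 ≤ Z := tsum_nonneg fun a => by positivity
  refine ⟨9 ^ (2 / 5 : ℝ) * 8 ^ (3 / 5 : ℝ) * (Z + 1), by positivity, fun N ho hsq J J' hJ => ?_⟩
  have hid : ∑ j ∈ (Finset.range J').filter (fun j => Squarefree (1 + 8 * j)), (jacobiSym (1 + 8 * j : ℕ) N : ℝ) =
      ∑ a ∈ Finset.Icc 1 (8 * J + 1), (ArithmeticFunction.moebius a : ℝ) *
        ∑ j ∈ (Finset.range J').filter (fun j => a ^ 2 ∣ 1 + 8 * j), (jacobiSym (1 + 8 * j : ℕ) N : ℝ) := by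
    simp_rw [Finset.mul_sum, Finset.sum_filter]
    rw [Finset.sum_comm]
    refine Finset.sum_congr rfl fun j hj => ?_
    have hj' := Finset.mem_range.mp hj
    have h1 := sqfree_ind (1 + 8 * j) (8 * J + 1) (by omega) (by omega)
    have h2 : ∑ a ∈ (Finset.Icc 1 (8 * J + 1)).filter (fun a => a ^ 2 ∣ 1 + 8 * j), ((ArithmeticFunction.moebius a : ℤ) : ℝ) =
      if Squarefree (1 + 8 * j) then 1 else 0 := by
      rw [← Int.cast_sum, h1]; split_ifs <;> simp
    rw [← Finset.sum_filter, ← Finset.sum_mul, h2]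
    split_ifs <;> simp
  rw [hid]
  calc _ ≤ ∑ a ∈ Finset.Icc 1 (8 * J + 1), 9 ^ (2 / 5 : ℝ) * 8 ^ (3 / 5 : ℝ) * (J : ℝ) ^ (3 / 5 : ℝ) * (N : ℝ) ^ (1 / 4 : ℝ) * (a : ℝ) ^ (-(6 / 5) : ℝ) := by
        refine (Finset.abs_sum_le_sum_abs _ _).trans (Finset.sum_le_sum fun a ha => ?_)
        have ha1 := (Finset.mem_Icc.mp ha).1
        rw [abs_mul]
        have hμ : |((ArithmeticFunction.moebius a : ℤ) : ℝ)| ≤ 1 := by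
          exact_mod_cast ArithmeticFunction.abs_moebius_le_one (n := a)
        refine (mul_le_of_le_one_left (abs_nonneg _) hμ).trans ?_
        have hb1 : |∑ j ∈ (Finset.range J').filter (fun j => a ^ 2 ∣ 1 + 8 * j), (jacobiSym (1 + 8 * j : ℕ) N : ℝ)| ≤
            9 * (N : ℝ) ^ (5 / 8 : ℝ) := by
          rcases Nat.even_or_odd a with he | hao
          · rw [Finset.filter_false_of_mem, Finset.sum_empty, abs_zero]
            · positivity
            · intro j _ hd
              have : 2 ∣ 1 + 8 * j := (he.two_dvd.trans (Dvd.intro _ (sq a).symm)).trans hd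
              omega
          · have h8 : Nat.Coprime 8 N := by
              rw [show 8 = 2 ^ 3 by norm_num]
              exact Nat.Coprime.pow_left _ ((Nat.coprime_two_left).mpr (Nat.odd_iff.mpr ho))
            have h8a : Nat.Coprime (a ^ 2) 8 := by
              rw [show 8 = 2 ^ 3 by norm_num]
              exact (Nat.Coprime.pow _ _ (Nat.coprime_two_left.mpr hao).symm)
            exact pv_div N (by omega) (9 * (N : ℝ) ^ (5 / 8 : ℝ)) (by positivity)
              (fun u v n hv => pv_N N ho hsq u v n hv) 1 8 J' (a ^ 2) h8 (by positivity) h8a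
        have hb2 : |∑ j ∈ (Finset.range J').filter (fun j => a ^ 2 ∣ 1 + 8 * j), (jacobiSym (1 + 8 * j : ℕ) N : ℝ)| ≤
            8 * J / (a : ℝ) ^ 2 := by
          refine (Finset.abs_sum_le_sum_abs _ _).trans ((Finset.sum_le_sum fun j _ => jac_abs_le _ _).trans ?_)
          rw [Finset.sum_const, nsmul_eq_mul, mul_one]
          refine (count_sq J' a ha1).trans ?_
          gcongr
        refine (min_interp _ _ _ (abs_nonneg _) hb1 hb2).trans (le_of_eq ?_)
        have ha0 : (0 : ℝ) < a := by exact_mod_cast ha1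
        rw [Real.mul_rpow (by positivity) (by positivity), Real.div_rpow (by positivity) (by positivity),
          Real.mul_rpow (by positivity) (by positivity), ← Real.rpow_mul (by positivity), ← Real.rpow_natCast (a : ℝ) 2,
          ← Real.rpow_mul ha0.le, div_eq_mul_inv (_ * _), ← Real.rpow_neg ha0.le]
        norm_num
        ring
    _ = 9 ^ (2 / 5 : ℝ) * 8 ^ (3 / 5 : ℝ) * (J : ℝ) ^ (3 / 5 : ℝ) * (N : ℝ) ^ (1 / 4 : ℝ) *
          ∑ a ∈ Finset.Icc 1 (8 * J + 1), (a : ℝ) ^ (-(6 / 5) : ℝ) := by rw [Finset.mul_sum]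
    _ ≤ 9 ^ (2 / 5 : ℝ) * 8 ^ (3 / 5 : ℝ) * (J : ℝ) ^ (3 / 5 : ℝ) * (N : ℝ) ^ (1 / 4 : ℝ) * (Z + 1) := by
        gcongr
        have := hsum.sum_le_tsum (Finset.Icc 1 (8 * J + 1)) (fun a _ => by positivity)
        linarith
    _ = _ := by ring

lemma abel (f w : ℕ → ℝ) (hw : Monotone w) (hw0 : 0 ≤ w 0) (J : ℕ) (E : ℝ)
    (h : ∀ J' ≤ J, |∑ j ∈ Finset.range J', f j| ≤ E) :
    |∑ j ∈ Finset.range J, f j * w j| ≤ 2 * E * w J := by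
  have hE : 0 ≤ E := (abs_nonneg _).trans (h 0 (by omega))
  have hid : ∀ J, ∑ j ∈ Finset.range J, f j * w j = (∑ j ∈ Finset.range J, f j) * w J -
      ∑ j ∈ Finset.range J, (∑ i ∈ Finset.range (j + 1), f i) * (w (j + 1) - w j) := by
    intro J
    induction J with
    | zero => simp
    | succ n ih =>
      rw [Finset.sum_range_succ, ih, Finset.sum_range_succ (fun j => (∑ i ∈ Finset.range (j + 1), f i) * (w (j + 1) - w j)),
        Finset.sum_range_succ f]
      ring
  have hwJ : 0 ≤ w J := hw0.trans (hw (by omega))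
  rw [hid]
  have h1 : |(∑ j ∈ Finset.range J, f j) * w J| ≤ E * w J := by
    rw [abs_mul, abs_of_nonneg hwJ]
    exact mul_le_mul_of_nonneg_right (h J le_rfl) hwJ
  have h2 : |∑ j ∈ Finset.range J, (∑ i ∈ Finset.range (j + 1), f i) * (w (j + 1) - w j)| ≤ E * (w J - w 0) := by
    rw [← Finset.sum_range_sub w, Finset.mul_sum]
    refine (Finset.abs_sum_le_sum_abs _ _).trans (Finset.sum_le_sum fun j hj => ?_)
    have hd : 0 ≤ w (j + 1) - w j := sub_nonneg.mpr (hw (by omega))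
    rw [abs_mul, abs_of_nonneg hd]
    exact mul_le_mul_of_nonneg_right (h _ (by have := Finset.mem_range.mp hj; omega)) hd
  have h3 := abs_sub _ _ |>.trans (add_le_add h1 h2)
  nlinarith

lemma jac_flip (n d : ℕ) (hn : 0 < n) (hd : d % 8 = 1) :
    jacobiSym n d = jacobiSym d (ordCompl[2] n) := by
  have h1 := Nat.ordProj_mul_ordCompl_eq_self n 2
  have ho : Odd (ordCompl[2] n) := by
    rw [← Nat.not_even_iff_odd, even_iff_two_dvd]
    exact Nat.not_dvd_ordCompl Nat.prime_two (by omega)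
  conv_lhs => rw [← h1]
  push_cast
  rw [jacobiSym.mul_left, jacobiSym.pow_left]
  have h2 : jacobiSym 2 d = 1 := by
    rw [jacobiSym.at_two (Nat.odd_iff.mpr (by omega)), ZMod.χ₈_nat_eq_if_mod_eight, if_neg (by omega), if_pos (by omega)]
  rw [h2, one_pow, one_mul]
  exact (jacobiSym.quadratic_reciprocity_one_mod_four (a := d) (by omega) ho).symm

/-- Off-diagonal error bound. -/
lemma err_bound : ∃ C : ℝ, 0 < C ∧ ∀ n m J : ℕ, 1 ≤ n → 1 ≤ m → 1 ≤ J → ¬ IsSquare (ordCompl[2] (n * m)) →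
    |∑ j ∈ (Finset.range J).filter (fun j => Squarefree (1 + 8 * j)),
      (jacobiSym (n * m : ℕ) (1 + 8 * j) : ℝ) * U ((1 + 8 * j : ℕ) : ℝ) n| ≤
      C * (J : ℝ) ^ (99 / 100 : ℝ) * (m : ℝ) ^ (1 / 4 : ℝ) * (n : ℝ) ^ (-(103 / 100) : ℝ) := by
  obtain ⟨C, hC, hs⟩ := sieve
  have hG : 0 < Real.Gamma (1 / 4 + 39 / 100) := Real.Gamma_pos_of_pos (by norm_num)
  refine ⟨2 * C * (Real.Gamma (1 / 4 + 39 / 100) * 9 ^ (39 / 100 : ℝ)), by positivity, fun n m J hn hm hJ hsq => ?_⟩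
  have hN0 : 0 < n * m := by positivity
  set N := ordCompl[2] (n * m) with hN
  have hNle : N ≤ n * m := Nat.div_le_self _ _
  have hNo : N % 2 = 1 := by
    have := Nat.not_dvd_ordCompl Nat.prime_two (n := n * m) (by omega)
    omega
  have h1 : ∑ j ∈ (Finset.range J).filter (fun j => Squarefree (1 + 8 * j)),
      (jacobiSym (n * m : ℕ) (1 + 8 * j) : ℝ) * U ((1 + 8 * j : ℕ) : ℝ) n =
      ∑ j ∈ Finset.range J, (if Squarefree (1 + 8 * j) then (jacobiSym (1 + 8 * j : ℕ) N : ℝ) else 0) * U ((1 + 8 * j : ℕ) : ℝ) n := by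
    rw [Finset.sum_filter]
    refine Finset.sum_congr rfl fun j _ => ?_
    rw [jac_flip (n * m) (1 + 8 * j) hN0 (by omega)]
    rw [← hN]
    split_ifs <;> simp
  rw [h1]
  have h2 := abel (fun j => if Squarefree (1 + 8 * j) then (jacobiSym (1 + 8 * j : ℕ) N : ℝ) else 0)
    (fun j => U ((1 + 8 * j : ℕ) : ℝ) n) (by
      intro i j hij
      refine U_mono _ _ (by positivity) ?_ n hn
      exact_mod_cast (by omega)) (U_nonneg _ (by positivity) n) J (C * (J : ℝ) ^ (3 / 5 : ℝ) * (N : ℝ) ^ (1 / 4 : ℝ)) (by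
      intro J' hJ'
      rw [← Finset.sum_filter]
      exact hs N hNo hsq J J' hJ')
  refine h2.trans ?_
  have hU := U_upper (39 / 100) (by norm_num) ((1 + 8 * J : ℕ) : ℝ) (by positivity) n hn
  have hn0 : (0 : ℝ) < n := by exact_mod_cast hn
  have hm0 : (0 : ℝ) < m := by exact_mod_cast hm
  have hJ0 : (0 : ℝ) < J := by exact_mod_cast hJ
  have hY : ((1 + 8 * J : ℕ) : ℝ) ≤ 9 * J := by exact_mod_cast (by omega)
  have hNR : (N : ℝ) ≤ n * m := by exact_mod_cast hNle
  calc _ ≤ 2 * (C * (J : ℝ) ^ (3 / 5 : ℝ) * ((n : ℝ) * m) ^ (1 / 4 : ℝ)) * (Real.Gamma (1 / 4 + 39 / 100) * (9 * J) ^ (39 / 100 : ℝ) *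
        (n : ℝ) ^ (-(1 / 2 + 2 * (39 / 100)) : ℝ)) := by
        have hU' : U ((1 + 8 * J : ℕ) : ℝ) n ≤ Real.Gamma (1 / 4 + 39 / 100) * (9 * J) ^ (39 / 100 : ℝ) *
          (n : ℝ) ^ (-(1 / 2 + 2 * (39 / 100)) : ℝ) := hU.trans (by gcongr)
        have := U_nonneg ((1 + 8 * J : ℕ) : ℝ) (by positivity) n
        gcongr
    _ = 2 * C * (Real.Gamma (1 / 4 + 39 / 100) * 9 ^ (39 / 100 : ℝ)) * ((J : ℝ) ^ (3 / 5 : ℝ) * (J : ℝ) ^ (39 / 100 : ℝ)) *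
        (m : ℝ) ^ (1 / 4 : ℝ) * ((n : ℝ) ^ (1 / 4 : ℝ) * (n : ℝ) ^ (-(1 / 2 + 2 * (39 / 100)) : ℝ)) := by
        rw [Real.mul_rpow hn0.le hm0.le, Real.mul_rpow (by norm_num) hJ0.le]; ring
    _ = _ := by
        rw [← Real.rpow_add hJ0, ← Real.rpow_add hn0]; norm_num

end LBSM

namespace LBSM

/-- integers up to `y` congruent to `1` mod `M` -/
noncomputable def Zs (M y : ℕ) : Finset ℕ := (Finset.Icc 1 y).filter (fun a => a % M = 1)

noncomputable def Hs (s : Finset ℕ) : ℝ := ∑ a ∈ s, (1 : ℝ) / a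

lemma Zs_div (M y q : ℕ) (hM : 2 ≤ M) (hq : 1 ≤ q) :
    ∑ a ∈ (Zs M y).filter (fun a => q ∣ a), (1 : ℝ) / a ≤ Hs (Zs M y) / q := by
  have hq0 : (0 : ℝ) < q := by exact_mod_cast hq
  have key : ∀ a ∈ (Zs M y).filter (fun a => q ∣ a), (a / q) * q % M = 1 ∧ 1 ≤ (a / q) % M ∧ 1 ≤ a ∧ a ≤ y ∧ (a / q) * q = a ∧ a / q ≤ a := by
    intro a ha
    simp only [Zs, Finset.mem_filter, Finset.mem_Icc] at ha
    obtain ⟨⟨⟨h1, h2⟩, h3⟩, h4⟩ := ha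
    have h5 := Nat.div_mul_cancel h4
    refine ⟨by rw [h5]; exact h3, ?_, h1, h2, h5, Nat.div_le_self _ _⟩
    by_contra hc
    have h6 : M ∣ a / q := Nat.dvd_of_mod_eq_zero (by omega)
    have h7 : M ∣ a := h5 ▸ Dvd.dvd.mul_right h6 _
    rw [Nat.mod_eq_zero_of_dvd h7] at h3
    omega
  have hinj : Set.InjOn (fun a => M * ((a / q) / M) + 1) ((Zs M y).filter (fun a => q ∣ a) : Finset ℕ) := by
    intro a ha a' ha' h
    obtain ⟨h1, h2, h3, h4, h5, _⟩ := key a ha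
    obtain ⟨h1', h2', h3', h4', h5', _⟩ := key a' ha'
    simp only [add_left_inj] at h
    have hcop : Nat.gcd M q = 1 := by
      have e1 : Nat.gcd M q ∣ (a / q) * q := Dvd.dvd.mul_left (Nat.gcd_dvd_right _ _) _
      have e2 : Nat.gcd M q ∣ (a / q) * q % M := (Nat.dvd_mod_iff (Nat.gcd_dvd_left _ _)).mpr e1
      rw [h1] at e2
      exact Nat.dvd_one.mp e2
    have hm : (a / q) * q ≡ (a' / q) * q [MOD M] := by unfold Nat.ModEq; rw [h1, h1']
    have hm2 : (a / q) % M = (a' / q) % M := Nat.ModEq.cancel_right_of_coprime hcop hm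
    have e1 := Nat.div_add_mod (a / q) M
    have e2 := Nat.div_add_mod (a' / q) M
    have : a / q = a' / q := by rw [← e1, ← e2, h, hm2]
    rw [← h5, ← h5', this]
  calc _ ≤ ∑ a ∈ (Zs M y).filter (fun a => q ∣ a), (1 : ℝ) / ((M * ((a / q) / M) + 1 : ℕ) : ℝ) / q := by
        refine Finset.sum_le_sum fun a ha => ?_
        obtain ⟨h1, h2, h3, h4, h5, _⟩ := key a ha
        have e1 := Nat.div_add_mod (a / q) M
        rw [div_div]
        refine one_div_le_one_div_of_le (by positivity) ?_
        rw [← Nat.cast_mul]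
        refine Nat.cast_le.mpr ?_
        calc (M * ((a / q) / M) + 1) * q ≤ (a / q) * q := Nat.mul_le_mul_right _ (by omega)
          _ = a := h5
    _ = (∑ a ∈ (Zs M y).filter (fun a => q ∣ a), (1 : ℝ) / ((M * ((a / q) / M) + 1 : ℕ) : ℝ)) / q := by
        rw [Finset.sum_div]
    _ ≤ _ := by
        refine div_le_div_of_nonneg_right ?_ hq0.le
        rw [← Finset.sum_image (f := fun b : ℕ => (1 : ℝ) / b) hinj]
        refine Finset.sum_le_sum_of_subset_of_nonneg ?_ (fun _ _ _ => by positivity)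
        intro b hb
        obtain ⟨a, ha, rfl⟩ := Finset.mem_image.mp hb
        obtain ⟨h1, h2, h3, h4, h5, h6⟩ := key a ha
        have e1 := Nat.div_add_mod (a / q) M
        simp only [Zs, Finset.mem_filter, Finset.mem_Icc]
        refine ⟨⟨by omega, by omega⟩, ?_⟩
        rw [Nat.mul_add_mod, Nat.mod_eq_of_lt (by omega)]

lemma Zs_small (P y q a : ℕ) (hq : 1 < q) (hqP : q ≤ P) (ha : a ∈ Zs (P.factorial) y) : ¬ q ∣ a := by
  intro h
  simp only [Zs, Finset.mem_filter] at ha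
  have h1 : q ∣ P.factorial := Nat.dvd_factorial (by omega) hqP
  have := (Nat.dvd_mod_iff h1).mpr h
  rw [ha.2] at this
  have := Nat.dvd_one.mp this
  omega

lemma Hs_lower (M y : ℕ) (hM : 2 ≤ M) (hy : M ^ 2 ≤ y) :
    1 / (2 * M : ℝ) * Real.log y ≤ Hs (Zs M y) := by
  have hM0 : (0 : ℝ) < M := by exact_mod_cast (by omega : 0 < M)
  have hy0 : 0 < y := lt_of_lt_of_le (by positivity) hy
  have hy0' : (0 : ℝ) < y := by exact_mod_cast hy0
  have hyM : (M : ℝ) ^ 2 ≤ y := by exact_mod_cast hy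
  have hinj : Set.InjOn (fun t => M * t + 1) (Finset.range ((y - 1) / M + 1) : Set ℕ) := by
    intro a _ b _ h
    simp only [add_left_inj] at h
    exact Nat.eq_of_mul_eq_mul_left (by omega) h
  have h1 : ∑ t ∈ Finset.range ((y - 1) / M + 1), (1 : ℝ) / ((M * t + 1 : ℕ) : ℝ) ≤ Hs (Zs M y) := by
    rw [Hs, ← Finset.sum_image (f := fun b : ℕ => (1 : ℝ) / b) hinj]
    refine Finset.sum_le_sum_of_subset_of_nonneg ?_ (fun _ _ _ => by positivity)
    intro b hb
    obtain ⟨t, ht, rfl⟩ := Finset.mem_image.mp hb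
    have ht := Finset.mem_range.mp ht
    have : M * t ≤ M * ((y - 1) / M) := Nat.mul_le_mul_left _ (by omega)
    have := Nat.mul_div_le (y - 1) M
    simp only [Zs, Finset.mem_filter, Finset.mem_Icc]
    refine ⟨⟨by omega, by omega⟩, ?_⟩
    rw [Nat.mul_add_mod, Nat.mod_eq_of_lt (by omega)]
  refine le_trans ?_ h1
  have h2 := log_add_one_le_harmonic ((y - 1) / M + 1)
  have e : ((harmonic ((y - 1) / M + 1) : ℚ) : ℝ) = ∑ h ∈ Finset.range ((y - 1) / M + 1), (1 : ℝ) / (h + 1 : ℕ) := by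
    simp [harmonic]
  rw [e] at h2
  have h3 : 1 / (M : ℝ) * ∑ h ∈ Finset.range ((y - 1) / M + 1), (1 : ℝ) / (h + 1 : ℕ) ≤
      ∑ t ∈ Finset.range ((y - 1) / M + 1), (1 : ℝ) / ((M * t + 1 : ℕ) : ℝ) := by
    rw [Finset.mul_sum]
    refine Finset.sum_le_sum fun t _ => ?_
    rw [div_mul_div_comm, one_mul]
    refine one_div_le_one_div_of_le (by positivity) ?_
    push_cast
    have : (1 : ℝ) ≤ M := by exact_mod_cast (by omega : 1 ≤ M)
    nlinarith
  refine le_trans ?_ h3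
  have h4 : 1 / 2 * Real.log y ≤ Real.log ((y - 1) / M + 1 + 1 : ℕ) := by
    set w := (y - 1) / M + 1 + 1 with hw
    have h5 : y ≤ M * w := by
      have := Nat.lt_mul_div_succ (y - 1) (b := M) (by omega)
      have h6 : M * ((y - 1) / M + 1) ≤ M * w := Nat.mul_le_mul_left _ (by omega)
      omega
    have h5' : (y : ℝ) ≤ M * w := by exact_mod_cast h5
    have h7 : (y : ℝ) ≤ (w : ℝ) ^ 2 := by
      have : (y : ℝ) * y ≤ y * (w : ℝ) ^ 2 := by
        calc (y : ℝ) * y ≤ (M * w) * (M * w) := by gcongr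
          _ = (M : ℝ) ^ 2 * (w : ℝ) ^ 2 := by ring
          _ ≤ _ := by gcongr
      exact le_of_mul_le_mul_left this hy0'
    have h8 := Real.log_le_log hy0' h7
    rw [Real.log_pow] at h8
    push_cast at h8
    linarith
  calc 1 / (2 * M : ℝ) * Real.log y = 1 / M * (1 / 2 * Real.log y) := by field_simp
    _ ≤ _ := by gcongr; exact h4.trans h2

end LBSM

namespace LBSM

variable {ι : Type} [Fintype ι]

noncomputable def ev (q : ℕ) (T0 T1 T : ι) : ℕ := (if T = T0 then q else 1) * (if T = T1 then q else 1)

noncomputable def bad (P y : ℕ) (z : ι → ℕ) : ℝ :=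
  (∑ T0 : ι, ∑ T1 : ι, ∑ q ∈ Finset.Ioc P y, if (∀ T, ev q T0 T1 T ∣ z T) then (1 : ℝ) else 0) +
  4 * ∑ T0 : ι, ∑ q ∈ Finset.Ioc P y, (1 : ℝ) / q * (if (∀ T, (if T = T0 then q else 1) ∣ z T) then 1 else 0)

lemma tuple_sum (s : ι → Finset ℕ) (hs : ∀ T q, 1 ≤ q → ∑ a ∈ (s T).filter (fun a => q ∣ a), (1 : ℝ) / a ≤ Hs (s T) / q)
    (e : ι → ℕ) (he : ∀ T, 1 ≤ e T) :
    ∑ z ∈ Fintype.piFinset s, (∏ T, (1 : ℝ) / z T) * (if (∀ T, e T ∣ z T) then 1 else 0) ≤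
      (∏ T, Hs (s T)) / (∏ T, (e T : ℝ)) := by
  have h1 : ∀ z : ι → ℕ, (∏ T, (1 : ℝ) / z T) * (if (∀ T, e T ∣ z T) then 1 else 0) =
      ∏ T, (if e T ∣ z T then (1 : ℝ) / z T else 0) := by
    intro z
    split_ifs with h
    · rw [mul_one]
      exact Finset.prod_congr rfl fun T _ => (if_pos (h T)).symm
    · push Not at h
      obtain ⟨T, hT⟩ := h
      rw [mul_zero]
      exact (Finset.prod_eq_zero (Finset.mem_univ T) (if_neg hT)).symm
  simp_rw [h1]
  rw [← Finset.prod_univ_sum s (fun T a => if e T ∣ a then (1 : ℝ) / a else 0), ← Finset.prod_div_distrib]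
  refine Finset.prod_le_prod (fun T _ => Finset.sum_nonneg fun a _ => by positivity) fun T _ => ?_
  rw [← Finset.sum_filter]
  exact hs T (e T) (he T)

lemma good_mass (s : ι → Finset ℕ) (hs : ∀ T q, 1 ≤ q → ∑ a ∈ (s T).filter (fun a => q ∣ a), (1 : ℝ) / a ≤ Hs (s T) / q)
    (P y : ℕ) (hP : 1 ≤ P) :
    (1 - ((Fintype.card ι : ℝ) ^ 2 + 4 * Fintype.card ι) / P) * ∏ T, Hs (s T) ≤
      ∑ z ∈ (Fintype.piFinset s).filter (fun z => bad P y z < 1), ∏ T, (1 : ℝ) / z T := by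
  set Pi0 := ∏ T, Hs (s T) with hPi0
  have hH : ∀ T, 0 ≤ Hs (s T) := fun T => Finset.sum_nonneg fun a _ => by positivity
  have hPi00 : 0 ≤ Pi0 := Finset.prod_nonneg fun T _ => hH T
  have hP0 : (0 : ℝ) < P := by exact_mod_cast hP
  have htot : ∑ z ∈ Fintype.piFinset s, ∏ T, (1 : ℝ) / z T = Pi0 := by
    rw [hPi0]; exact (Finset.prod_univ_sum s (fun T a => (1 : ℝ) / a)).symm
  have hq : ∑ q ∈ Finset.Ioc P y, (1 : ℝ) / (q : ℝ) ^ 2 ≤ 1 / P := by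
    rcases le_total P y with h | h
    · have := sum_Ioc_inv_sq_le_sub (α := ℝ) (k := P) (n := y) (by omega) h
      simp only [one_div]
      refine this.trans ?_
      have : (0 : ℝ) ≤ (y : ℝ)⁻¹ := by positivity
      linarith
    · rw [Finset.Ioc_eq_empty (by omega)]; simp
  have hbad : ∑ z ∈ Fintype.piFinset s, (∏ T, (1 : ℝ) / z T) * bad P y z ≤
      ((Fintype.card ι : ℝ) ^ 2 + 4 * Fintype.card ι) / P * Pi0 := by
    unfold bad
    simp_rw [mul_add, Finset.sum_add_distrib]
    have hA : ∑ z ∈ Fintype.piFinset s, (∏ T, (1 : ℝ) / z T) * (∑ T0 : ι, ∑ T1 : ι, ∑ q ∈ Finset.Ioc P y,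
        if (∀ T, ev q T0 T1 T ∣ z T) then (1 : ℝ) else 0) ≤ (Fintype.card ι : ℝ) ^ 2 / P * Pi0 := by
      have : ∑ z ∈ Fintype.piFinset s, (∏ T, (1 : ℝ) / z T) * (∑ T0 : ι, ∑ T1 : ι, ∑ q ∈ Finset.Ioc P y,
        if (∀ T, ev q T0 T1 T ∣ z T) then (1 : ℝ) else 0) = ∑ T0 : ι, ∑ T1 : ι, ∑ q ∈ Finset.Ioc P y,
          ∑ z ∈ Fintype.piFinset s, (∏ T, (1 : ℝ) / z T) * (if (∀ T, ev q T0 T1 T ∣ z T) then (1 : ℝ) else 0) := by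
        simp_rw [Finset.mul_sum]
        rw [Finset.sum_comm]
        refine Finset.sum_congr rfl fun T0 _ => ?_
        rw [Finset.sum_comm]
        refine Finset.sum_congr rfl fun T1 _ => ?_
        rw [Finset.sum_comm]
      rw [this]
      calc _ ≤ ∑ T0 : ι, ∑ T1 : ι, ∑ q ∈ Finset.Ioc P y, Pi0 * (1 / (q : ℝ) ^ 2) := by
            refine Finset.sum_le_sum fun T0 _ => Finset.sum_le_sum fun T1 _ => Finset.sum_le_sum fun q hq => ?_
            have hq1 := (Finset.mem_Ioc.mp hq).1
            refine (tuple_sum s hs (ev q T0 T1) (fun T => ?_)).trans (le_of_eq ?_)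
            · unfold ev; split_ifs <;> nlinarith
            · rw [hPi0, div_eq_mul_one_div]
              congr 2
              unfold ev
              push_cast
              rw [Finset.prod_mul_distrib, Finset.prod_ite_eq', Finset.prod_ite_eq']
              simp [sq]
        _ ≤ ∑ T0 : ι, ∑ T1 : ι, Pi0 * (1 / P) := by
            refine Finset.sum_le_sum fun T0 _ => Finset.sum_le_sum fun T1 _ => ?_
            rw [← Finset.mul_sum]; gcongr
        _ = _ := by
            simp only [Finset.sum_const, Finset.card_univ, nsmul_eq_mul]; ring
    have hB : ∑ z ∈ Fintype.piFinset s, (∏ T, (1 : ℝ) / z T) * (4 * ∑ T0 : ι, ∑ q ∈ Finset.Ioc P y,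
        (1 : ℝ) / q * (if (∀ T, (if T = T0 then q else 1) ∣ z T) then 1 else 0)) ≤ 4 * Fintype.card ι / P * Pi0 := by
      have : ∑ z ∈ Fintype.piFinset s, (∏ T, (1 : ℝ) / z T) * (4 * ∑ T0 : ι, ∑ q ∈ Finset.Ioc P y,
        (1 : ℝ) / q * (if (∀ T, (if T = T0 then q else 1) ∣ z T) then 1 else 0)) =
          4 * ∑ T0 : ι, ∑ q ∈ Finset.Ioc P y, (1 : ℝ) / q *
          ∑ z ∈ Fintype.piFinset s, (∏ T, (1 : ℝ) / z T) * (if (∀ T, (if T = T0 then q else 1) ∣ z T) then (1 : ℝ) else 0) := by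
        simp_rw [Finset.mul_sum]
        rw [Finset.sum_comm]
        refine Finset.sum_congr rfl fun T0 _ => ?_
        rw [Finset.sum_comm]
        refine Finset.sum_congr rfl fun q _ => Finset.sum_congr rfl fun z _ => ?_
        ring
      rw [this]
      calc _ ≤ 4 * ∑ T0 : ι, ∑ q ∈ Finset.Ioc P y, Pi0 * (1 / (q : ℝ) ^ 2) := by
            refine mul_le_mul_of_nonneg_left ?_ (by norm_num)
            refine Finset.sum_le_sum fun T0 _ => Finset.sum_le_sum fun q hq => ?_
            have hq1 := (Finset.mem_Ioc.mp hq).1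
            have := tuple_sum s hs (fun T => if T = T0 then q else 1) (fun T => by split_ifs <;> omega)
            push_cast at this
            rw [Finset.prod_ite_eq', if_pos (Finset.mem_univ _)] at this
            calc _ ≤ (1 : ℝ) / q * (Pi0 / q) := by gcongr
              _ = _ := by ring
        _ ≤ 4 * ∑ T0 : ι, Pi0 * (1 / P) := by
            refine mul_le_mul_of_nonneg_left ?_ (by norm_num)
            refine Finset.sum_le_sum fun T0 _ => ?_
            rw [← Finset.mul_sum]; gcongr
        _ = _ := by
            simp only [Finset.sum_const, Finset.card_univ, nsmul_eq_mul]; ring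
    calc _ ≤ _ := add_le_add hA hB
      _ = _ := by ring
  have hbad0 : ∀ z : ι → ℕ, 0 ≤ bad P y z := by
    intro z; unfold bad
    refine add_nonneg (Finset.sum_nonneg fun _ _ => Finset.sum_nonneg fun _ _ => Finset.sum_nonneg fun _ _ => by positivity) ?_
    refine mul_nonneg (by norm_num) (Finset.sum_nonneg fun _ _ => Finset.sum_nonneg fun _ _ => by positivity)
  rw [Finset.sum_filter]
  calc _ ≤ ∑ z ∈ Fintype.piFinset s, ((∏ T, (1 : ℝ) / z T) - (∏ T, (1 : ℝ) / z T) * bad P y z) := by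
        rw [Finset.sum_sub_distrib, htot]; linarith
    _ ≤ _ := by
        refine Finset.sum_le_sum fun z _ => ?_
        have hw : 0 ≤ ∏ T, (1 : ℝ) / z T := Finset.prod_nonneg fun T _ => by positivity
        split_ifs with h
        · nlinarith [hbad0 z]
        · nlinarith [hbad0 z]

lemma good_props (s : ι → Finset ℕ) (P y : ℕ) (z : ι → ℕ) (hz : z ∈ Fintype.piFinset s)
    (h1 : ∀ T, ∀ a ∈ s T, 1 ≤ a ∧ a ≤ y ∧ ∀ q, 1 < q → q ≤ P → ¬ q ∣ a) (hb : bad P y z < 1) :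
    (∀ T, Squarefree (z T)) ∧ (∀ T T', T ≠ T' → Nat.Coprime (z T) (z T')) ∧
    ∑ T : ι, ∑ q ∈ (Finset.Ioc P y).filter (fun q => q ∣ z T), (1 : ℝ) / q ≤ 1 / 4 := by
  rw [Fintype.mem_piFinset] at hz
  have hA0 : ∀ T0 T1, 0 ≤ ∑ q ∈ Finset.Ioc P y, if (∀ T, ev q T0 T1 T ∣ z T) then (1 : ℝ) else 0 :=
    fun _ _ => Finset.sum_nonneg fun _ _ => by positivity
  have hA1 : ∀ T0, 0 ≤ ∑ T1, ∑ q ∈ Finset.Ioc P y, if (∀ T, ev q T0 T1 T ∣ z T) then (1 : ℝ) else 0 :=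
    fun _ => Finset.sum_nonneg fun _ _ => hA0 _ _
  have hA2 : 0 ≤ ∑ T0, ∑ T1, ∑ q ∈ Finset.Ioc P y, if (∀ T, ev q T0 T1 T ∣ z T) then (1 : ℝ) else 0 :=
    Finset.sum_nonneg fun _ _ => hA1 _
  have hB : 0 ≤ ∑ T0 : ι, ∑ q ∈ Finset.Ioc P y, (1 : ℝ) / q * (if (∀ T, (if T = T0 then q else 1) ∣ z T) then 1 else 0) :=
    Finset.sum_nonneg fun _ _ => Finset.sum_nonneg fun _ _ => by positivity
  have key : ∀ q T0 T1, P < q → q ≤ y → ¬ (∀ T, ev q T0 T1 T ∣ z T) := by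
    intro q T0 T1 hq hqy h
    have e1 : (1 : ℝ) ≤ ∑ q ∈ Finset.Ioc P y, if (∀ T, ev q T0 T1 T ∣ z T) then (1 : ℝ) else 0 := by
      have := Finset.single_le_sum (f := fun q => if (∀ T, ev q T0 T1 T ∣ z T) then (1 : ℝ) else 0) (s := Finset.Ioc P y)
        (fun _ _ => by positivity) (Finset.mem_Ioc.mpr ⟨hq, hqy⟩)
      rwa [if_pos h] at this
    have e2 := Finset.single_le_sum (f := fun T1 => ∑ q ∈ Finset.Ioc P y, if (∀ T, ev q T0 T1 T ∣ z T) then (1 : ℝ) else 0)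
      (fun _ _ => hA0 _ _) (Finset.mem_univ T1)
    have e3 := Finset.single_le_sum (f := fun T0 => ∑ T1, ∑ q ∈ Finset.Ioc P y, if (∀ T, ev q T0 T1 T ∣ z T) then (1 : ℝ) else 0)
      (fun _ _ => hA1 _) (Finset.mem_univ T0)
    unfold bad at hb

    linarith
  have hgt : ∀ T q, 1 < q → q ∣ z T → P < q ∧ q ≤ y := by
    intro T q hq hd
    obtain ⟨a1, a2, a3⟩ := h1 T (z T) (hz T)
    refine ⟨?_, (Nat.le_of_dvd a1 hd).trans a2⟩
    by_contra hc
    exact a3 q hq (by omega) hd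
  refine ⟨fun T q hq => ?_, fun T T' hT => ?_, ?_⟩
  · rw [Nat.isUnit_iff]
    by_contra hc
    have hq0 : q ≠ 0 := by
      rintro rfl
      have := (h1 T (z T) (hz T)).1
      simp at hq; omega
    obtain ⟨b1, b2⟩ := hgt T q (by omega) (dvd_of_mul_left_dvd hq)
    refine key q T T b1 b2 fun T' => ?_
    unfold ev
    split_ifs with h
    · rw [h]; exact hq
    · simp
  · unfold Nat.Coprime
    by_contra hc
    set g := Nat.gcd (z T) (z T') with hg
    have hg0 : 0 < g := Nat.gcd_pos_of_pos_left _ (h1 T (z T) (hz T)).1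
    obtain ⟨b1, b2⟩ := hgt T g (by omega) (Nat.gcd_dvd_left _ _)
    refine key g T T' b1 b2 fun T'' => ?_
    unfold ev
    split_ifs with h h' h'
    · exact absurd (h.symm.trans h') hT
    · rw [h, mul_one]; exact Nat.gcd_dvd_left _ _
    · rw [h', one_mul]; exact Nat.gcd_dvd_right _ _
    · simp
  · have e : ∑ T0 : ι, ∑ q ∈ Finset.Ioc P y, (1 : ℝ) / q * (if (∀ T, (if T = T0 then q else 1) ∣ z T) then 1 else 0) =
      ∑ T : ι, ∑ q ∈ (Finset.Ioc P y).filter (fun q => q ∣ z T), (1 : ℝ) / q := by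
      refine Finset.sum_congr rfl fun T0 _ => ?_
      rw [Finset.sum_filter]
      refine Finset.sum_congr rfl fun q _ => ?_
      have : (∀ T, (if T = T0 then q else 1) ∣ z T) ↔ q ∣ z T0 := by
        constructor
        · intro h; simpa using h T0
        · intro h T; split_ifs with h'
          · rw [h']; exact h
          · exact one_dvd _
      rw [if_congr this rfl rfl]
      split_ifs <;> simp
    unfold bad at hb
    rw [e] at hb
    linarith

end LBSM

namespace LBSM

lemma count_ap (q J : ℕ) (hq : 1 ≤ q) :
    (((Finset.range J).filter (fun j => q ∣ 1 + 8 * j)).card : ℝ) ≤ J * (1 / q) + 1 := by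
  have hnn : (0 : ℝ) ≤ J * (1 / q) + 1 := by positivity
  by_cases hex : ∃ i, q ∣ 1 + 8 * i
  · obtain ⟨i0, hi0⟩ := hex
    have hc : Nat.Coprime q 8 := by
      have h1 : Nat.gcd q 8 ∣ 1 + 8 * i0 := (Nat.gcd_dvd_left _ _).trans hi0
      have h2 : Nat.gcd q 8 ∣ 8 * i0 := Dvd.dvd.mul_right (Nat.gcd_dvd_right _ _) _
      exact Nat.dvd_one.mp ((Nat.dvd_add_left h2).mp h1)
    have hf : (Finset.range J).filter (fun j => q ∣ 1 + 8 * j) = (Finset.range J).filter (fun j => j ≡ i0 [MOD q]) := by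
      apply Finset.filter_congr
      intro i _
      have h1 : (q ∣ 1 + 8 * i) ↔ 1 + 8 * i ≡ 1 + 8 * i0 [MOD q] := by
        unfold Nat.ModEq
        rw [Nat.mod_eq_zero_of_dvd hi0, Nat.dvd_iff_mod_eq_zero]
      rw [h1]
      constructor
      · intro h
        exact Nat.ModEq.cancel_left_of_coprime hc (Nat.ModEq.add_left_cancel' 1 h)
      · intro h
        exact Nat.ModEq.add_left 1 (Nat.ModEq.mul_left 8 h)
    have h2 : ((Finset.range J).filter (fun j => q ∣ 1 + 8 * j)).card ≤ J / q + 1 := by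
      rw [hf, ← Nat.count_eq_card_filter_range, Nat.count_modEq_card _ (by omega)]
      split_ifs <;> omega
    calc (((Finset.range J).filter (fun j => q ∣ 1 + 8 * j)).card : ℝ) ≤ ((J / q + 1 : ℕ) : ℝ) := by exact_mod_cast h2
      _ = ((J / q : ℕ) : ℝ) + 1 := by push_cast; ring
      _ ≤ (J : ℝ) / q + 1 := by gcongr; exact Nat.cast_div_le
      _ = _ := by ring
  · rw [Finset.filter_false_of_mem]
    · simpa using hnn
    · intro i _ h; exact hex ⟨i, h⟩

lemma odd_sq_sum (s : ℕ) : ∑ t ∈ Finset.Icc 1 s, (1 : ℝ) / ((2 * t + 1 : ℕ) : ℝ) ^ 2 ≤ 1 / 4 - 1 / (4 * (s + 1)) := by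
  induction s with
  | zero => norm_num
  | succ n ih =>
    rw [Finset.sum_Icc_succ_top (by omega)]
    have : (1 : ℝ) / ((2 * (n + 1) + 1 : ℕ) : ℝ) ^ 2 ≤ 1 / (4 * (n + 1)) - 1 / (4 * ((n + 1 : ℕ) + 1)) := by
      have e : (1 : ℝ) / (4 * (n + 1)) - 1 / (4 * ((n + 1 : ℕ) + 1)) = 1 / (4 * (n + 1) * (n + 2)) := by
        push_cast; field_simp; ring
      rw [e]
      refine one_div_le_one_div_of_le (by positivity) ?_
      push_cast; nlinarith
    linarith

lemma count_good (J Y : ℕ) (R : Finset ℕ) (hR : ∀ p ∈ R, 1 ≤ p) (hsum : ∑ p ∈ R, (1 : ℝ) / p ≤ 1 / 4) :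
    (J : ℝ) / 2 - Y - R.card - (Nat.sqrt (8 * J) + 1 : ℕ) ≤
      (((Finset.range J).filter (fun j => Squarefree (1 + 8 * j))).filter
        (fun j => Y ≤ 1 + 8 * j ∧ ∀ p ∈ R, ¬ p ∣ 1 + 8 * j)).card := by
  set s := Nat.sqrt (8 * J) + 1 with hs
  set A := ((Finset.range J).filter (fun j => Squarefree (1 + 8 * j))).filter
        (fun j => Y ≤ 1 + 8 * j ∧ ∀ p ∈ R, ¬ p ∣ 1 + 8 * j) with hA
  set B1 := (Finset.Icc 1 s).biUnion (fun t => (Finset.range J).filter (fun j => (2 * t + 1) ^ 2 ∣ 1 + 8 * j)) with hB1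
  set B2 := R.biUnion (fun p => (Finset.range J).filter (fun j => p ∣ 1 + 8 * j)) with hB2
  have hsub : Finset.range J ⊆ A ∪ (Finset.range Y ∪ (B1 ∪ B2)) := by
    intro j hj
    have hj' := Finset.mem_range.mp hj
    by_contra hc
    simp only [Finset.mem_union, not_or, Finset.mem_range, hA, hB1, hB2, Finset.mem_filter, Finset.mem_biUnion,
      not_exists, not_and, Finset.mem_Icc] at hc
    obtain ⟨c1, c2, c3, c4⟩ := hc
    have hsf : Squarefree (1 + 8 * j) := by
      intro q hq
      rw [Nat.isUnit_iff]
      by_contra hq1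
      have hqo : q % 2 = 1 := by
        by_contra he
        have : 2 ∣ q := by omega
        have : 2 ∣ 1 + 8 * j := this.trans ((Dvd.intro _ rfl).trans hq)
        omega
      have hle := Nat.le_of_dvd (by omega) hq
      have h3 : q ≤ Nat.sqrt (8 * J) := Nat.le_sqrt.mpr (by omega)
      refine c3 (q / 2) (by omega) hj' ?_
      rw [show 2 * (q / 2) + 1 = q by omega, sq]
      exact hq
    exact c1 ⟨hj', hsf⟩ (by omega) (fun p hp => c4 p hp hj')
  have hcard := Finset.card_le_card hsub
  have h1 : (B1.card : ℝ) ≤ J * (1 / 4) + s := by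
    calc (B1.card : ℝ) ≤ ∑ t ∈ Finset.Icc 1 s, (((Finset.range J).filter (fun j => (2 * t + 1) ^ 2 ∣ 1 + 8 * j)).card : ℝ) := by
          exact_mod_cast Finset.card_biUnion_le
      _ ≤ ∑ t ∈ Finset.Icc 1 s, (J * ((1 : ℝ) / ((2 * t + 1 : ℕ) : ℝ) ^ 2) + 1) := by
          refine Finset.sum_le_sum fun t _ => ?_
          have := count_ap ((2 * t + 1) ^ 2) J (Nat.one_le_pow _ _ (by omega))
          push_cast at this ⊢
          exact this
      _ = J * ∑ t ∈ Finset.Icc 1 s, ((1 : ℝ) / ((2 * t + 1 : ℕ) : ℝ) ^ 2) + s := by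
          rw [Finset.sum_add_distrib, Finset.mul_sum]; simp
      _ ≤ _ := by
          have := odd_sq_sum s
          have h0 : (0 : ℝ) ≤ 1 / (4 * (s + 1)) := by positivity
          gcongr; linarith
  have h2 : (B2.card : ℝ) ≤ J * (1 / 4) + R.card := by
    calc (B2.card : ℝ) ≤ ∑ p ∈ R, (((Finset.range J).filter (fun j => p ∣ 1 + 8 * j)).card : ℝ) := by
          exact_mod_cast Finset.card_biUnion_le
      _ ≤ ∑ p ∈ R, (J * ((1 : ℝ) / p) + 1) := Finset.sum_le_sum fun p hp => count_ap p J (hR p hp)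
      _ = J * ∑ p ∈ R, (1 : ℝ) / p + R.card := by
          rw [Finset.sum_add_distrib, Finset.mul_sum]; simp
      _ ≤ _ := by gcongr
  have h3 : (J : ℝ) ≤ A.card + (Y + (B1.card + B2.card)) := by
    have e1 := Finset.card_union_le A (Finset.range Y ∪ (B1 ∪ B2))
    have e2 := Finset.card_union_le (Finset.range Y) (B1 ∪ B2)
    have e3 := Finset.card_union_le B1 B2
    rw [Finset.card_range] at hcard e2
    have : J ≤ A.card + (Y + (B1.card + B2.card)) := by omega
    exact_mod_cast this
  linarith

end LBSM

namespace LBSM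

variable {K : ℕ}

noncomputable def nu (z : Finset (Fin K) → ℕ) (i : Fin K) : ℕ := ∏ T ∈ Finset.univ.filter (fun T => i ∈ T), z T

noncomputable def nn (z : Finset (Fin K) → ℕ) : ℕ := z ∅ ^ 2 * ∏ T ∈ Finset.univ.filter (fun T => T.card = 1), z T

lemma prod_nu (z : Finset (Fin K) → ℕ) : ∏ i, nu z i = ∏ T, z T ^ T.card := by
  unfold nu
  rw [Finset.prod_comm' (t' := Finset.univ) (s' := fun T => T)]
  · refine Finset.prod_congr rfl fun T _ => ?_
    rw [Finset.prod_const]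
  · intro i T; simp

lemma enc_prod (z : Finset (Fin K) → ℕ) (hz : ∀ T, 3 ≤ T.card → z T = 1) :
    nn z * ∏ i, nu z i = (∏ T, z T) ^ 2 := by
  have h1 : z ∅ ^ 2 = ∏ T : Finset (Fin K), if T = ∅ then z T ^ 2 else 1 := by
    rw [Finset.prod_ite_eq' Finset.univ ∅ (fun T => z T ^ 2)]; simp
  rw [prod_nu, nn, Finset.prod_filter, h1, ← Finset.prod_mul_distrib, ← Finset.prod_mul_distrib, ← Finset.prod_pow]
  refine Finset.prod_congr rfl fun T _ => ?_
  rcases Nat.lt_or_ge T.card 3 with h | h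
  · by_cases h0 : T = ∅
    · subst h0; simp
    · have : T.card ≠ 0 := by rwa [ne_eq, Finset.card_eq_zero]
      rw [if_neg h0]
      by_cases h1 : T.card = 1
      · rw [if_pos h1, h1]; ring
      · rw [if_neg h1, show T.card = 2 by omega]; ring
  · have : T ≠ ∅ := by rintro rfl; simp at h
    rw [hz T h, if_neg this, if_neg (by omega)]; simp

lemma dvd_iff_set (z : Finset (Fin K) → ℕ) (hc : ∀ T T', T ≠ T' → Nat.Coprime (z T) (z T'))
    (p : ℕ) (hp : p.Prime) (T : Finset (Fin K)) (hT : T.Nonempty) :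
    p ∣ z T ↔ Finset.univ.filter (fun i => p ∣ nu z i) = T := by
  have h1 : ∀ T, p ∣ z T → Finset.univ.filter (fun i => p ∣ nu z i) = T := by
    intro T h
    ext i
    simp only [Finset.mem_filter, Finset.mem_univ, true_and]
    constructor
    · intro hi
      unfold nu at hi
      rw [Prime.dvd_finsetProd_iff hp.prime] at hi
      obtain ⟨T', hT', hd⟩ := hi
      simp only [Finset.mem_filter, Finset.mem_univ, true_and] at hT'
      by_contra hn
      have hne : T ≠ T' := by rintro rfl; exact hn hT'
      exact Nat.not_coprime_of_dvd_of_dvd hp.one_lt h hd (hc T T' hne)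
    · intro hi
      exact h.trans (Finset.dvd_prod_of_mem z (by simpa using hi))
  refine ⟨h1 T, fun h => ?_⟩
  obtain ⟨i, hi⟩ := hT
  rw [← h] at hi
  simp only [Finset.mem_filter, Finset.mem_univ, true_and] at hi
  unfold nu at hi
  rw [Prime.dvd_finsetProd_iff hp.prime] at hi
  obtain ⟨T', hT', hd⟩ := hi
  have := h1 T' hd
  rw [h] at this
  rw [this]; exact hd

lemma enc_inj (z z' : Finset (Fin K) → ℕ) (hs : ∀ T, Squarefree (z T)) (hs' : ∀ T, Squarefree (z' T))
    (hc : ∀ T T', T ≠ T' → Nat.Coprime (z T) (z T')) (hc' : ∀ T T', T ≠ T' → Nat.Coprime (z' T) (z' T'))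
    (h1 : nn z = nn z') (h2 : nu z = nu z') : z = z' := by
  have h3 : ∀ T : Finset (Fin K), T.Nonempty → z T = z' T := by
    intro T hT
    rw [← Nat.prod_primeFactors_of_squarefree (hs T), ← Nat.prod_primeFactors_of_squarefree (hs' T)]
    congr 1
    ext p
    rw [Nat.mem_primeFactors, Nat.mem_primeFactors]
    constructor
    · rintro ⟨hp, hd, -⟩
      refine ⟨hp, ?_, (hs' T).ne_zero⟩
      rw [dvd_iff_set z' hc' p hp T hT, ← h2, ← dvd_iff_set z hc p hp T hT]; exact hd
    · rintro ⟨hp, hd, -⟩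
      refine ⟨hp, ?_, (hs T).ne_zero⟩
      rw [dvd_iff_set z hc p hp T hT, h2, ← dvd_iff_set z' hc' p hp T hT]; exact hd
  funext T
  rcases T.eq_empty_or_nonempty with rfl | hT
  · unfold nn at h1
    have h4 : ∏ T ∈ Finset.univ.filter (fun T : Finset (Fin K) => T.card = 1), z T =
        ∏ T ∈ Finset.univ.filter (fun T : Finset (Fin K) => T.card = 1), z' T := by
      refine Finset.prod_congr rfl fun T hT => h3 T ?_
      simp only [Finset.mem_filter, Finset.mem_univ, true_and] at hT
      rw [← Finset.card_pos]; omega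
    rw [h4] at h1
    have h5 : 0 < ∏ T ∈ Finset.univ.filter (fun T : Finset (Fin K) => T.card = 1), z' T :=
      Finset.prod_pos fun T _ => Nat.pos_of_ne_zero (hs' T).ne_zero
    have h6 := Nat.eq_of_mul_eq_mul_right h5 h1
    exact Nat.pow_left_injective (n := 2) (by norm_num) h6
  · exact h3 T hT

lemma nu_squarefree (z : Finset (Fin K) → ℕ) (hs : ∀ T, Squarefree (z T))
    (hc : ∀ T T', T ≠ T' → Nat.Coprime (z T) (z T')) (i : Fin K) : Squarefree (nu z i) := by
  unfold nu
  refine Finset.squarefree_prod_of_pairwise_isCoprime (fun T _ T' _ h => ?_) (fun T _ => hs T)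
  exact Nat.coprime_iff_isRelPrime.mp (hc T T' h)

lemma nu_le (z : Finset (Fin K) → ℕ) (y : ℕ) (h1 : ∀ T, 1 ≤ z T) (h : ∀ T, z T ≤ y) (i : Fin K) :
    1 ≤ nu z i ∧ nu z i ≤ y ^ (2 ^ K) := by
  refine ⟨Finset.one_le_prod' fun T _ => h1 T, ?_⟩
  have hy : 1 ≤ y := (h1 ∅).trans (h ∅)
  calc nu z i ≤ ∏ T ∈ Finset.univ.filter (fun T => i ∈ T), y := Finset.prod_le_prod' fun T _ => h T
    _ = y ^ (Finset.univ.filter (fun T : Finset (Fin K) => i ∈ T)).card := by rw [Finset.prod_const]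
    _ ≤ _ := by
      refine Nat.pow_le_pow_right hy ?_
      refine (Finset.card_le_univ _).trans ?_
      simp

lemma nn_le (z : Finset (Fin K) → ℕ) (y : ℕ) (h1 : ∀ T, 1 ≤ z T) (h : ∀ T, z T ≤ y) :
    1 ≤ nn z ∧ nn z ≤ y ^ (2 ^ K + 2) := by
  have hy : 1 ≤ y := (h1 ∅).trans (h ∅)
  constructor
  · exact Nat.one_le_iff_ne_zero.mpr (Nat.mul_ne_zero (pow_ne_zero _ (by have := h1 ∅; omega))
      (Finset.prod_ne_zero_iff.mpr fun T _ => by have := h1 T; omega))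
  · unfold nn
    rw [add_comm, pow_add]
    refine Nat.mul_le_mul (Nat.pow_le_pow_left (h ∅) 2) ?_
    calc _ ≤ ∏ T ∈ Finset.univ.filter (fun T : Finset (Fin K) => T.card = 1), y := Finset.prod_le_prod' fun T _ => h T
    _ = y ^ (Finset.univ.filter (fun T : Finset (Fin K) => T.card = 1)).card := by rw [Finset.prod_const]
    _ ≤ _ := by
      refine Nat.pow_le_pow_right hy ?_
      refine (Finset.card_le_univ _).trans ?_
      simp

lemma nu_odd (z : Finset (Fin K) → ℕ) (h : ∀ T, ¬ 2 ∣ z T) (i : Fin K) : nu z i % 2 = 1 := by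
  have : ¬ 2 ∣ nu z i := by
    unfold nu
    rw [Prime.dvd_finsetProd_iff Nat.prime_two.prime]
    rintro ⟨T, -, hT⟩
    exact h T hT
  omega

end LBSM

namespace LBSM

noncomputable def Sx (x : ℕ) : Finset ℕ := (Finset.Icc 1 x).filter (fun n => n % 2 = 1 ∧ Squarefree n)

noncomputable def Ax (x d : ℕ) : ℝ := ∑ n ∈ Sx x, (n : ℝ) ^ (-(1 / 2) : ℝ) * jacobiSym n d

noncomputable def Fd (d : ℕ) : ℝ := c0 * ∑' n : ℕ, (jacobiSym n d : ℝ) * U d n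

noncomputable def sf (J : ℕ) : Finset ℕ := (Finset.range J).filter (fun j => Squarefree (1 + 8 * j))

noncomputable def wt {K : ℕ} (ν : Fin K → ℕ) : ℝ := ∏ i, (ν i : ℝ) ^ (-(1 / 2) : ℝ)

noncomputable def Dn {K : ℕ} (J n : ℕ) (ν : Fin K → ℕ) : ℝ :=
  ∑ j ∈ sf J, (jacobiSym (n * ∏ i, ν i : ℕ) (1 + 8 * j) : ℝ) * U ((1 + 8 * j : ℕ) : ℝ) n

lemma jac_prod {ι : Type} (s : Finset ι) (f : ι → ℕ) (d : ℕ) :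
    jacobiSym ((∏ i ∈ s, f i : ℕ) : ℤ) d = ∏ i ∈ s, jacobiSym (f i) d := by
  induction s using Finset.induction_on with
  | empty => simp [jacobiSym.one_left]
  | insert a s ha ih =>
    rw [Finset.prod_insert ha, Finset.prod_insert ha, ← ih]
    push_cast
    rw [jacobiSym.mul_left]

lemma Ax_pow (x d K : ℕ) : Ax x d ^ K =
    ∑ ν ∈ Fintype.piFinset (fun _ : Fin K => Sx x), wt ν * jacobiSym (∏ i, ν i : ℕ) d := by
  have h1 : Ax x d ^ K = ∏ _i : Fin K, ∑ n ∈ Sx x, (n : ℝ) ^ (-(1 / 2) : ℝ) * jacobiSym n d := by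
    rw [Finset.prod_const, Finset.card_univ, Fintype.card_fin]; rfl
  rw [h1, Finset.prod_univ_sum]
  refine Finset.sum_congr rfl fun ν _ => ?_
  rw [Finset.prod_mul_distrib, jac_prod, wt]
  push_cast; rfl

lemma term_summable (j : ℕ) : Summable (fun n : ℕ => (jacobiSym n (1 + 8 * j) : ℝ) * U ((1 + 8 * j : ℕ) : ℝ) n) := by
  refine Summable.of_norm_bounded (U_summable ((1 + 8 * j : ℕ) : ℝ) (by positivity)) fun n => ?_
  rw [norm_mul, Real.norm_eq_abs, Real.norm_eq_abs, abs_of_nonneg (U_nonneg _ (by positivity) _)]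
  exact mul_le_of_le_one_left (U_nonneg _ (by positivity) _) (jac_abs_le _ _)

lemma S1_eq (x K J : ℕ) :
    HasSum (fun n => ∑ ν ∈ Fintype.piFinset (fun _ : Fin K => Sx x), wt ν * Dn J n ν)
      ((∑ j ∈ sf J, Fd (1 + 8 * j) * Ax x (1 + 8 * j) ^ K) / c0) := by
  have h1 : ∀ j ∈ sf J, HasSum (fun n : ℕ => (jacobiSym n (1 + 8 * j) : ℝ) * U ((1 + 8 * j : ℕ) : ℝ) n * Ax x (1 + 8 * j) ^ K)
      (Fd (1 + 8 * j) * Ax x (1 + 8 * j) ^ K / c0) := by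
    intro j _
    have h := (term_summable j).hasSum.mul_right (Ax x (1 + 8 * j) ^ K)
    have e : Fd (1 + 8 * j) * Ax x (1 + 8 * j) ^ K / c0 =
        (∑' n : ℕ, (jacobiSym n (1 + 8 * j) : ℝ) * U ((1 + 8 * j : ℕ) : ℝ) n) * Ax x (1 + 8 * j) ^ K := by
      unfold Fd
      have := c0_pos
      field_simp
    rw [e]
    exact h
  have h2 := hasSum_sum h1
  rw [← Finset.sum_div] at h2
  have e2 : (fun n => ∑ ν ∈ Fintype.piFinset (fun _ : Fin K => Sx x), wt ν * Dn J n ν) =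
      fun n : ℕ => ∑ j ∈ sf J, (jacobiSym n (1 + 8 * j) : ℝ) * U ((1 + 8 * j : ℕ) : ℝ) n * Ax x (1 + 8 * j) ^ K := by
    funext n
    unfold Dn
    simp_rw [Ax_pow, Finset.mul_sum]
    rw [Finset.sum_comm]
    refine Finset.sum_congr rfl fun j _ => Finset.sum_congr rfl fun ν _ => ?_
    push_cast
    rw [jacobiSym.mul_left]
    push_cast
    ring
  rw [e2]
  exact h2

lemma jac_sq_nonneg (N d : ℕ) : (0 : ℝ) ≤ jacobiSym (N ^ 2 : ℕ) d := by
  push_cast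
  rw [jacobiSym.pow_left]
  push_cast
  positivity

lemma Dn_lower : ∃ C : ℝ, 0 < C ∧ ∀ (K J n : ℕ) (ν : Fin K → ℕ), 1 ≤ J → (∀ i, 1 ≤ ν i) →
    0 ≤ Dn J n ν + C * (J : ℝ) ^ (99 / 100 : ℝ) * ((∏ i, ν i : ℕ) : ℝ) ^ (1 / 4 : ℝ) * (n : ℝ) ^ (-(103 / 100) : ℝ) := by
  obtain ⟨C, hC, h⟩ := err_bound
  refine ⟨C, hC, fun K J n ν hJ hν => ?_⟩
  have hm : 1 ≤ ∏ i, ν i := Finset.one_le_prod' fun i _ => hν i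
  have hE : 0 ≤ C * (J : ℝ) ^ (99 / 100 : ℝ) * ((∏ i, ν i : ℕ) : ℝ) ^ (1 / 4 : ℝ) * (n : ℝ) ^ (-(103 / 100) : ℝ) := by positivity
  rcases Nat.eq_zero_or_pos n with rfl | hn
  · refine add_nonneg (Finset.sum_nonneg fun j _ => mul_nonneg ?_ (U_nonneg _ (by positivity) _)) hE
    rw [zero_mul]
    exact jac_sq_nonneg 0 _
  by_cases hsq : IsSquare (ordCompl[2] (n * ∏ i, ν i))
  · refine add_nonneg (Finset.sum_nonneg fun j _ => mul_nonneg ?_ (U_nonneg _ (by positivity) _)) hE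
    rw [jac_flip _ _ (Nat.mul_pos hn hm) (by omega)]
    obtain ⟨r, hr⟩ := hsq
    have hr0 : r ≠ 0 := by
      rintro rfl
      have := Nat.ordCompl_pos 2 (n := n * ∏ i, ν i) (Nat.mul_pos hn hm).ne'
      omega
    have : NeZero r := ⟨hr0⟩
    rw [hr, jacobiSym.mul_right]
    push_cast
    exact mul_self_nonneg _
  · have := h n _ J hn hm hJ hsq
    have := (abs_le.mp this).1
    unfold Dn sf
    linarith

end LBSM

namespace LBSM

lemma Dn_good : ∃ c : ℝ, 0 < c ∧ ∀ (K J n W : ℕ) (ν : Fin K → ℕ) (R : Finset ℕ), 1 ≤ n →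
    n * ∏ i, ν i = W ^ 2 → (∀ p ∈ R, 1 ≤ p) → (∑ p ∈ R, (1 : ℝ) / p ≤ 1 / 4) →
    (∀ d : ℕ, (∀ p ∈ R, ¬ p ∣ d) → d % 8 = 1 → Nat.Coprime W d) →
    ((n ^ 2 : ℕ) : ℝ) + R.card + (Nat.sqrt (8 * J) + 1 : ℕ) ≤ J / 4 →
    c * J * (n : ℝ) ^ (-(1 / 2) : ℝ) ≤ Dn J n ν := by
  obtain ⟨c, hc, hU⟩ := U_lower
  refine ⟨c / 4, by positivity, fun K J n W ν R hn hW hR hsum hcop hsize => ?_⟩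
  have hcount := count_good J (n ^ 2) R hR hsum
  set G := ((Finset.range J).filter (fun j => Squarefree (1 + 8 * j))).filter
    (fun j => n ^ 2 ≤ 1 + 8 * j ∧ ∀ p ∈ R, ¬ p ∣ 1 + 8 * j) with hG
  have hGs : G ⊆ sf J := Finset.filter_subset _ _
  have h1 : ∑ j ∈ G, (jacobiSym (n * ∏ i, ν i : ℕ) (1 + 8 * j) : ℝ) * U ((1 + 8 * j : ℕ) : ℝ) n ≤ Dn J n ν := by
    unfold Dn
    refine Finset.sum_le_sum_of_subset_of_nonneg hGs fun j _ _ => ?_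
    rw [hW]
    exact mul_nonneg (jac_sq_nonneg _ _) (U_nonneg _ (by positivity) _)
  have h2 : ∀ j ∈ G, c * (n : ℝ) ^ (-(1 / 2) : ℝ) ≤ (jacobiSym (n * ∏ i, ν i : ℕ) (1 + 8 * j) : ℝ) * U ((1 + 8 * j : ℕ) : ℝ) n := by
    intro j hj
    rw [hG, Finset.mem_filter] at hj
    have hcp := hcop (1 + 8 * j) hj.2.2 (by omega)
    have : jacobiSym (n * ∏ i, ν i : ℕ) (1 + 8 * j) = 1 := by
      rw [hW]
      push_cast
      exact jacobiSym.sq_one' (by rw [Int.gcd_natCast_natCast]; exact hcp)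
    rw [this]
    push_cast
    rw [one_mul]
    refine (hU _ n hn ?_).trans_eq (by push_cast; rfl)
    exact_mod_cast hj.2.1
  have h3 := Finset.card_nsmul_le_sum G _ _ h2
  rw [nsmul_eq_mul] at h3
  have hn0 : 0 ≤ c * (n : ℝ) ^ (-(1 / 2) : ℝ) := by positivity
  have h4 : (J : ℝ) / 4 ≤ G.card := by
    push_cast at hcount hsize ⊢
    linarith
  calc c / 4 * J * (n : ℝ) ^ (-(1 / 2) : ℝ) = (J : ℝ) / 4 * (c * (n : ℝ) ^ (-(1 / 2) : ℝ)) := by ring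
    _ ≤ G.card * (c * (n : ℝ) ^ (-(1 / 2) : ℝ)) := by gcongr
    _ ≤ _ := h3.trans h1

/-- Choice of supports. -/
noncomputable def sT (K M y : ℕ) (T : Finset (Fin K)) : Finset ℕ := if T.card ≤ 2 then Zs M y else {1}

lemma sT_hs (K M y : ℕ) (hM : 2 ≤ M) (T : Finset (Fin K)) (q : ℕ) (hq : 1 ≤ q) :
    ∑ a ∈ (sT K M y T).filter (fun a => q ∣ a), (1 : ℝ) / a ≤ Hs (sT K M y T) / q := by
  unfold sT
  split_ifs
  · exact Zs_div M y q hM hq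
  · unfold Hs
    rw [Finset.sum_filter]
    simp only [Finset.sum_singleton, Nat.dvd_one]
    split_ifs with h
    · subst h; simp
    · push_cast; positivity

lemma sT_prod (K M y : ℕ) : ∏ T, Hs (sT K M y T) =
    Hs (Zs M y) ^ (Finset.univ.filter (fun T : Finset (Fin K) => T.card ≤ 2)).card := by
  have : ∀ T, Hs (sT K M y T) = if T.card ≤ 2 then Hs (Zs M y) else 1 := by
    intro T; unfold sT; split_ifs
    · rfl
    · simp [Hs]
  simp_rw [this]
  rw [Finset.prod_ite]; simp

lemma card_le_two (K : ℕ) : (Finset.univ.filter (fun T : Finset (Fin K) => T.card ≤ 2)).card = 1 + K + K.choose 2 := by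
  have : (Finset.univ.filter (fun T : Finset (Fin K) => T.card ≤ 2)) =
      (Finset.range 3).biUnion (fun r => Finset.powersetCard r Finset.univ) := by
    ext T
    simp [Finset.mem_powersetCard]
    omega
  rw [this, Finset.card_biUnion]
  · simp [Finset.sum_range_succ]
  · intro a _ b _ hab
    exact Finset.pairwise_disjoint_powersetCard _ hab

end LBSM

namespace LBSM

lemma wt_le_one {K : ℕ} (ν : Fin K → ℕ) (h : ∀ i, 1 ≤ ν i) : wt ν ≤ 1 := by
  unfold wt
  refine Finset.prod_le_one (fun i _ => by positivity) fun i _ => ?_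
  exact Real.rpow_le_one_of_one_le_of_nonpos (by exact_mod_cast h i) (by norm_num)

lemma wt_nonneg {K : ℕ} (ν : Fin K → ℕ) : 0 ≤ wt ν := Finset.prod_nonneg (fun i _ => by positivity)

lemma Sx_card (x : ℕ) : (Sx x).card ≤ x := by
  unfold Sx
  refine (Finset.card_filter_le _ _).trans ?_
  simp

lemma pi_card (K x : ℕ) : (Fintype.piFinset (fun _ : Fin K => Sx x)).card ≤ x ^ K := by
  rw [Fintype.card_piFinset, Finset.prod_const, Finset.card_univ, Fintype.card_fin]
  exact Nat.pow_le_pow_left (Sx_card x) K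

lemma mem_Sx {x n : ℕ} (h : n ∈ Sx x) : 1 ≤ n ∧ n ≤ x ∧ n % 2 = 1 ∧ Squarefree n := by
  unfold Sx at h
  simp only [Finset.mem_filter, Finset.mem_Icc] at h
  tauto

lemma prod_le_pow {K x : ℕ} (ν : Fin K → ℕ) (h : ∀ i, ν i ≤ x) : ∏ i, ν i ≤ x ^ K := by
  calc ∏ i, ν i ≤ ∏ _i : Fin K, x := Finset.prod_le_prod' fun i _ => h i
    _ = x ^ K := by simp

lemma err_total (C : ℝ) (hC : 0 < C) (K x J : ℕ) (hx : 1 ≤ x) :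
    ∑ ν ∈ Fintype.piFinset (fun _ : Fin K => Sx x),
      wt ν * (C * (J : ℝ) ^ (99 / 100 : ℝ) * ((∏ i, ν i : ℕ) : ℝ) ^ (1 / 4 : ℝ)) ≤
      C * (J : ℝ) ^ (99 / 100 : ℝ) * (x : ℝ) ^ (2 * K) := by
  have h : ∀ ν ∈ Fintype.piFinset (fun _ : Fin K => Sx x),
      wt ν * (C * (J : ℝ) ^ (99 / 100 : ℝ) * ((∏ i, ν i : ℕ) : ℝ) ^ (1 / 4 : ℝ)) ≤
      C * (J : ℝ) ^ (99 / 100 : ℝ) * (x : ℝ) ^ K := by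
    intro ν hν
    rw [Fintype.mem_piFinset] at hν
    have h1 : 1 ≤ ∏ i, ν i := Finset.one_le_prod' fun i _ => (mem_Sx (hν i)).1
    have h2 : ((∏ i, ν i : ℕ) : ℝ) ^ (1 / 4 : ℝ) ≤ (x : ℝ) ^ K := by
      calc ((∏ i, ν i : ℕ) : ℝ) ^ (1 / 4 : ℝ) ≤ ((∏ i, ν i : ℕ) : ℝ) ^ (1 : ℝ) :=
            Real.rpow_le_rpow_of_exponent_le (by exact_mod_cast h1) (by norm_num)
        _ = ((∏ i, ν i : ℕ) : ℝ) := Real.rpow_one _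
        _ ≤ (x : ℝ) ^ K := by exact_mod_cast prod_le_pow ν fun i => (mem_Sx (hν i)).2.1
    calc _ ≤ (C * (J : ℝ) ^ (99 / 100 : ℝ) * ((∏ i, ν i : ℕ) : ℝ) ^ (1 / 4 : ℝ)) :=
          mul_le_of_le_one_left (by positivity) (wt_le_one ν fun i => (mem_Sx (hν i)).1)
      _ ≤ _ := by gcongr
  refine (Finset.sum_le_card_nsmul _ _ _ h).trans ?_
  rw [nsmul_eq_mul]
  have : ((Fintype.piFinset (fun _ : Fin K => Sx x)).card : ℝ) ≤ (x : ℝ) ^ K := by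
    exact_mod_cast pi_card K x
  calc _ ≤ (x : ℝ) ^ K * (C * (J : ℝ) ^ (99 / 100 : ℝ) * (x : ℝ) ^ K) := by gcongr
    _ = _ := by ring

lemma wt_nn {K : ℕ} (z : Finset (Fin K) → ℕ) (h1 : ∀ T, 1 ≤ z T) (hz : ∀ T, 3 ≤ T.card → z T = 1) :
    wt (nu z) * (nn z : ℝ) ^ (-(1 / 2) : ℝ) = ∏ T, (1 : ℝ) / z T := by
  have e := enc_prod z hz
  have e' : (nn z : ℝ) * ∏ i, (nu z i : ℝ) = (∏ T, (z T : ℝ)) ^ 2 := by exact_mod_cast e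
  unfold wt
  rw [Real.finsetProd_rpow _ _ (fun i _ => by positivity), mul_comm, ← Real.mul_rpow (by positivity)
    (Finset.prod_nonneg fun i _ => by positivity), e', ← Real.rpow_natCast, ← Real.rpow_mul
    (Finset.prod_nonneg fun i _ => by positivity)]
  norm_num
  rw [Real.rpow_neg_one]

lemma sum_biUnion_le' {ι : Type} (s : Finset ι) (t : ι → Finset ℕ) (f : ℕ → ℝ) (hf : ∀ q, 0 ≤ f q) :
    ∑ q ∈ s.biUnion t, f q ≤ ∑ i ∈ s, ∑ q ∈ t i, f q := by
  induction s using Finset.induction_on with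
  | empty => simp
  | insert a s ha ih =>
    rw [Finset.biUnion_insert, Finset.sum_insert ha]
    have := Finset.sum_union_inter (s₁ := t a) (s₂ := s.biUnion t) (f := f)
    have h2 : 0 ≤ ∑ q ∈ t a ∩ s.biUnion t, f q := Finset.sum_nonneg fun q _ => hf q
    linarith

lemma S1_lower (K : ℕ) : ∃ c C : ℝ, 0 < c ∧ 0 < C ∧ ∃ M : ℕ, 2 ≤ M ∧ ∀ y J : ℕ, M ^ 2 ≤ y → 1 ≤ J →
    (((y ^ (2 ^ K + 2)) ^ 2 : ℕ) : ℝ) + y + (Nat.sqrt (8 * J) + 1 : ℕ) ≤ J / 4 →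
    c * J * Real.log y ^ (1 + K + K.choose 2) - C * (J : ℝ) ^ (99 / 100 : ℝ) * ((y ^ 2 ^ K : ℕ) : ℝ) ^ (2 * K) ≤
      ∑ j ∈ sf J, Fd (1 + 8 * j) * Ax (y ^ 2 ^ K) (1 + 8 * j) ^ K := by
  obtain ⟨c, hc, hgood⟩ := Dn_good
  obtain ⟨C, hC, hlow⟩ := Dn_lower
  set c2 : ℕ := 2 ^ K with hc2
  have hc2' : 1 ≤ c2 := Nat.one_le_two_pow
  set P : ℕ := 2 * (c2 ^ 2 + 4 * c2) with hP
  have hP2 : 2 ≤ P := by nlinarith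
  set M := P.factorial with hM
  have hM2 : 2 ≤ M := hP2.trans (Nat.self_le_factorial P)
  set Z := ∑' n : ℕ, (n : ℝ) ^ (-(103 / 100) : ℝ) with hZ
  have hZs : HasSum (fun n : ℕ => (n : ℝ) ^ (-(103 / 100) : ℝ)) Z :=
    (Real.summable_nat_rpow.mpr (by norm_num)).hasSum
  have hZ0 : 0 ≤ Z := tsum_nonneg fun n => by positivity
  have hc0 := c0_pos
  set e := 1 + K + K.choose 2 with he
  refine ⟨c0 * (c / 2 * (1 / (2 * M : ℝ)) ^ e), c0 * (C * (Z + 1)), by positivity, by positivity, M, hM2, fun y J hy hJ hsize => ?_⟩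
  set x := y ^ c2 with hx
  have hy1 : 1 ≤ y := le_trans (by nlinarith) hy
  have hx1 : 1 ≤ x := Nat.one_le_pow _ _ hy1
  set E : ℕ → (Fin K → ℕ) → ℝ := fun n ν => C * (J : ℝ) ^ (99 / 100 : ℝ) * ((∏ i, ν i : ℕ) : ℝ) ^ (1 / 4 : ℝ) * (n : ℝ) ^ (-(103 / 100) : ℝ) with hE
  set pi := Fintype.piFinset (fun _ : Fin K => Sx x) with hpi
  set ET := ∑ ν ∈ pi, wt ν * (C * (J : ℝ) ^ (99 / 100 : ℝ) * ((∏ i, ν i : ℕ) : ℝ) ^ (1 / 4 : ℝ)) with hET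
  have hET' : ET ≤ C * (J : ℝ) ^ (99 / 100 : ℝ) * (x : ℝ) ^ (2 * K) := err_total C hC K x J hx1
  set S := ∑ j ∈ sf J, Fd (1 + 8 * j) * Ax x (1 + 8 * j) ^ K with hS
  have hs1 : HasSum (fun n => ∑ ν ∈ pi, wt ν * (Dn J n ν + E n ν)) (S / c0 + ET * Z) := by
    have h := (S1_eq x K J).add (hZs.mul_left ET)
    have e1 : (fun n => ∑ ν ∈ pi, wt ν * (Dn J n ν + E n ν)) = fun n : ℕ =>
        ∑ ν ∈ pi, wt ν * Dn J n ν + ET * (n : ℝ) ^ (-(103 / 100) : ℝ) := by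
      funext n
      rw [hET, Finset.sum_mul, ← Finset.sum_add_distrib]
      refine Finset.sum_congr rfl fun ν _ => ?_
      simp only [hE]; ring
    rw [e1]; exact h
  have hpos : ∀ n, ∀ ν ∈ pi, 0 ≤ wt ν * (Dn J n ν + E n ν) := by
    intro n ν hν
    rw [hpi, Fintype.mem_piFinset] at hν
    exact mul_nonneg (wt_nonneg ν) (hlow K J n ν hJ fun i => (mem_Sx (hν i)).1)
  set good := (Fintype.piFinset (sT K M y)).filter (fun z => bad P y z < 1) with hgd
  have hsT : ∀ T, ∀ a ∈ sT K M y T, 1 ≤ a ∧ a ≤ y ∧ ∀ q, 1 < q → q ≤ P → ¬ q ∣ a := by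
    intro T a ha
    unfold sT at ha
    split_ifs at ha with h
    · have ha' := ha
      unfold Zs at ha'
      rw [Finset.mem_filter, Finset.mem_Icc] at ha'
      exact ⟨ha'.1.1, ha'.1.2, fun q h1 h2 => Zs_small P y q a h1 h2 ha⟩
    · rw [Finset.mem_singleton] at ha
      subst ha
      refine ⟨le_rfl, hy1, fun q h1 _ hd => ?_⟩
      rw [Nat.dvd_one] at hd
      omega
  have hgp : ∀ z ∈ good, (∀ T, Squarefree (z T)) ∧ (∀ T T', T ≠ T' → Nat.Coprime (z T) (z T')) ∧
      ∑ T : Finset (Fin K), ∑ q ∈ (Finset.Ioc P y).filter (fun q => q ∣ z T), (1 : ℝ) / q ≤ 1 / 4 := by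
    intro z hz
    rw [hgd, Finset.mem_filter] at hz
    exact good_props (sT K M y) P y z (by convert hz.1) hsT hz.2
  have hgz : ∀ z ∈ good, ∀ T, 1 ≤ z T ∧ z T ≤ y ∧ ∀ q, 1 < q → q ≤ P → ¬ q ∣ z T := by
    intro z hz T
    rw [hgd, Finset.mem_filter, Fintype.mem_piFinset] at hz
    exact hsT T _ (hz.1 T)
  have hg3 : ∀ z ∈ good, ∀ T, 3 ≤ T.card → z T = 1 := by
    intro z hz T hT
    rw [hgd, Finset.mem_filter, Fintype.mem_piFinset] at hz
    have := hz.1 T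
    unfold sT at this
    rw [if_neg (by omega), Finset.mem_singleton] at this
    exact this
  -- lower bound of each good term
  have hterm : ∀ z ∈ good, c * J * ∏ T, (1 : ℝ) / z T ≤ wt (nu z) * (Dn J (nn z) (nu z) + E (nn z) (nu z)) := by
    intro z hz
    obtain ⟨g1, g2, g3⟩ := hgp z hz
    have gz := hgz z hz
    obtain ⟨n1, n2⟩ := nn_le z y (fun T => (gz T).1) (fun T => (gz T).2.1)
    set R := Finset.univ.biUnion (fun T => (Finset.Ioc P y).filter (fun q => q ∣ z T)) with hR
    have hRs : R ⊆ Finset.Ioc P y := by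
      rw [hR]
      exact Finset.biUnion_subset.mpr fun T _ => Finset.filter_subset _ _
    have hRc : (R.card : ℝ) ≤ y := by
      have : R.card ≤ y := (Finset.card_le_card hRs).trans (by simp)
      exact_mod_cast this
    have hD := hgood K J (nn z) (∏ T, z T) (nu z) R n1 (enc_prod z (hg3 z hz))
      (fun p hp => by have := hRs hp; rw [Finset.mem_Ioc] at this; omega)
      ((sum_biUnion_le' _ _ _ (fun q => by positivity)).trans g3) ?_ ?_
    · rw [← wt_nn z (fun T => (gz T).1) (hg3 z hz)]
      have hEn : 0 ≤ E (nn z) (nu z) := by simp only [hE]; positivity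
      calc c * J * (wt (nu z) * (nn z : ℝ) ^ (-(1 / 2) : ℝ)) = wt (nu z) * (c * J * (nn z : ℝ) ^ (-(1 / 2) : ℝ)) := by ring
        _ ≤ wt (nu z) * (Dn J (nn z) (nu z) + E (nn z) (nu z)) :=
          mul_le_mul_of_nonneg_left (by linarith) (wt_nonneg _)
    · intro d hd _
      refine Nat.Coprime.prod_left fun T _ => ?_
      refine Nat.coprime_of_dvd fun p hp hpz hpd => ?_
      have hpP : P < p := by
        by_contra hcon
        exact (gz T).2.2 p hp.one_lt (by omega) hpz
      have hpy : p ≤ y := (Nat.le_of_dvd (gz T).1 hpz).trans (gz T).2.1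
      refine hd p ?_ hpd
      rw [hR, Finset.mem_biUnion]
      exact ⟨T, Finset.mem_univ _, by simp [hpP, hpy, hpz]⟩
    · have : (((nn z) ^ 2 : ℕ) : ℝ) ≤ (((y ^ (c2 + 2)) ^ 2 : ℕ) : ℝ) := by
        exact_mod_cast Nat.pow_le_pow_left n2 2
      linarith
  have hinj : Set.InjOn (fun z : Finset (Fin K) → ℕ => (nn z, nu z)) good := by
    intro z hz z' hz' h
    simp only [Prod.mk.injEq] at h
    exact enc_inj z z' (hgp z hz).1 (hgp z' hz').1 (hgp z hz).2.1 (hgp z' hz').2.1 h.1 h.2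
  have hmain : c * J * ∑ z ∈ good, ∏ T, (1 : ℝ) / z T ≤ S / c0 + ET * Z := by
    have h1 : ∑ n ∈ good.image nn, ∑ ν ∈ pi, wt ν * (Dn J n ν + E n ν) ≤ S / c0 + ET * Z :=
      sum_le_hasSum _ (fun n _ => Finset.sum_nonneg fun ν hν => hpos n ν hν) hs1
    refine le_trans ?_ h1
    rw [← Finset.sum_product', Finset.mul_sum]
    refine (Finset.sum_le_sum hterm).trans ?_
    rw [← Finset.sum_image (f := fun q : ℕ × (Fin K → ℕ) => wt q.2 * (Dn J q.1 q.2 + E q.1 q.2)) (g := fun z : Finset (Fin K) → ℕ => (nn z, nu z)) hinj]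
    refine Finset.sum_le_sum_of_subset_of_nonneg ?_ ?_
    · intro q hq
      rw [Finset.mem_image] at hq
      obtain ⟨z, hz, rfl⟩ := hq
      have gz := hgz z hz
      rw [Finset.mem_product]
      refine ⟨Finset.mem_image_of_mem _ hz, ?_⟩
      rw [hpi, Fintype.mem_piFinset]
      intro i
      unfold Sx
      have := nu_le z y (fun T => (gz T).1) (fun T => (gz T).2.1) i
      simp only [Finset.mem_filter, Finset.mem_Icc]
      exact ⟨this, nu_odd z (fun T => (gz T).2.2 2 (by norm_num) hP2) i, nu_squarefree z (hgp z hz).1 (hgp z hz).2.1 i⟩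
    · intro q hq _
      rw [Finset.mem_product] at hq
      exact hpos q.1 q.2 hq.2
  have hmass := good_mass (sT K M y) (fun T q hq => sT_hs K M y hM2 T q hq) P y (by omega)
  have hcard : (Fintype.card (Finset (Fin K)) : ℝ) = c2 := by
    rw [Fintype.card_finset, Fintype.card_fin]
  have hhalf : (1 - ((Fintype.card (Finset (Fin K)) : ℝ) ^ 2 + 4 * Fintype.card (Finset (Fin K))) / P) = 1 / 2 := by
    rw [hcard, hP]
    push_cast
    have : (1 : ℝ) ≤ c2 := by exact_mod_cast hc2'
    field_simp
    ring
  rw [hhalf, sT_prod, card_le_two, ← he] at hmass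
  have hmass' : 1 / 2 * Hs (Zs M y) ^ e ≤ ∑ z ∈ good, ∏ T, (1 : ℝ) / z T := by
    rw [hgd]; convert hmass
  have hH := Hs_lower M y hM2 hy
  have hly : 0 ≤ Real.log y := Real.log_nonneg (by exact_mod_cast hy1)
  have hHe : (1 / (2 * M : ℝ) * Real.log y) ^ e ≤ Hs (Zs M y) ^ e := by gcongr
  have hfin : c * J * (1 / 2 * (1 / (2 * M : ℝ) * Real.log y) ^ e) ≤ S / c0 + C * (J : ℝ) ^ (99 / 100 : ℝ) * (x : ℝ) ^ (2 * K) * (Z + 1) := by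
    calc _ ≤ c * J * (1 / 2 * Hs (Zs M y) ^ e) := by gcongr
      _ ≤ c * J * ∑ z ∈ good, ∏ T, (1 : ℝ) / z T := by gcongr
      _ ≤ S / c0 + ET * Z := hmain
      _ ≤ S / c0 + C * (J : ℝ) ^ (99 / 100 : ℝ) * (x : ℝ) ^ (2 * K) * Z := by gcongr
      _ ≤ _ := by
        have : 0 ≤ C * (J : ℝ) ^ (99 / 100 : ℝ) * (x : ℝ) ^ (2 * K) := by positivity
        linarith
  have h5 := mul_le_mul_of_nonneg_left hfin hc0.le
  rw [mul_add, mul_div_cancel₀ _ hc0.ne'] at h5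
  rw [mul_pow] at h5
  linarith

end LBSM

namespace LBSM

noncomputable def dset {K : ℕ} (ν : Fin K → ℕ) (p : ℕ) : Finset (Fin K) := Finset.univ.filter (fun i => p ∣ ν i)

noncomputable def dec {K : ℕ} (ν : Fin K → ℕ) (T : Finset (Fin K)) : ℕ :=
  ∏ p ∈ (∏ i, ν i).primeFactors.filter (fun p => dset ν p = T), p

lemma nu_dec {K : ℕ} (ν : Fin K → ℕ) (h1 : ∀ i, 1 ≤ ν i) (hs : ∀ i, Squarefree (ν i)) : nu (dec ν) = ν := by
  funext i
  unfold nu dec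
  have h2 : (∏ i, ν i) ≠ 0 := Finset.prod_ne_zero_iff.mpr fun i _ => by have := h1 i; omega
  rw [← Nat.prod_primeFactors_of_squarefree (hs i)]
  have h3 : (ν i).primeFactors = (Finset.univ.filter (fun T : Finset (Fin K) => i ∈ T)).biUnion
      (fun T => (∏ i, ν i).primeFactors.filter (fun p => dset ν p = T)) := by
    ext p
    simp only [Finset.mem_biUnion, Finset.mem_filter, Finset.mem_univ, true_and, Nat.mem_primeFactors]
    constructor
    · rintro ⟨hp, hd, h0⟩
      refine ⟨dset ν p, ?_, ⟨hp, hd.trans (Finset.dvd_prod_of_mem ν (Finset.mem_univ i)), h2⟩, rfl⟩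
      simp [dset, hd]
    · rintro ⟨T, hi, ⟨hp, hd, -⟩, rfl⟩
      have := h1 i
      refine ⟨hp, ?_, by omega⟩
      simpa [dset] using hi
  rw [h3, Finset.prod_biUnion]
  intro T _ T' _ hTT
  rw [Function.onFun, Finset.disjoint_left]
  intro p hp hp'
  rw [Finset.mem_filter] at hp hp'
  exact hTT (hp.2.symm.trans hp'.2)

lemma dec_pos {K : ℕ} (ν : Fin K → ℕ) (T : Finset (Fin K)) : 1 ≤ dec ν T := by
  unfold dec
  refine Finset.one_le_prod' fun p hp => ?_
  rw [Finset.mem_filter] at hp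
  exact (Nat.prime_of_mem_primeFactors hp.1).one_le

lemma dec_le {K x : ℕ} (ν : Fin K → ℕ) (h1 : ∀ i, 1 ≤ ν i) (hs : ∀ i, Squarefree (ν i)) (hx : ∀ i, ν i ≤ x)
    (T : Finset (Fin K)) (hT : T.Nonempty) : dec ν T ≤ x := by
  obtain ⟨i, hi⟩ := hT
  have h : dec ν T ∣ nu (dec ν) i := by
    unfold nu
    exact Finset.dvd_prod_of_mem (dec ν) (by simpa using hi)
  rw [nu_dec ν h1 hs] at h
  exact (Nat.le_of_dvd (h1 i) h).trans (hx i)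

lemma dec_one {K : ℕ} (ν : Fin K → ℕ) (h1 : ∀ i, 1 ≤ ν i) (hs : ∀ i, Squarefree (ν i)) (hsq : IsSquare (∏ i, ν i))
    (T : Finset (Fin K)) (hT : T = ∅ ∨ ¬ Even T.card) : dec ν T = 1 := by
  unfold dec
  rw [Finset.filter_false_of_mem, Finset.prod_empty]
  rintro p hp rfl
  rw [Nat.mem_primeFactors] at hp
  obtain ⟨hp, hd, h0⟩ := hp
  rcases hT with hT | hT
  · obtain ⟨i, -, hi⟩ := (Prime.dvd_finsetProd_iff hp.prime ν).mp hd
    have : i ∈ dset ν p := by simp [dset, hi]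
    rw [hT] at this
    simp at this
  · apply hT
    have e1 : (∏ i, ν i).factorization p = (dset ν p).card := by
      rw [Nat.factorization_prod (fun i _ => by have := h1 i; omega), Finsupp.finsetSum_apply, dset, Finset.card_filter]
      refine Finset.sum_congr rfl fun i _ => ?_
      split_ifs with h
      · have := (hs i).natFactorization_le_one p
        have h3 := hp.factorization_pos_of_dvd (by have := h1 i; omega) h
        omega
      · exact Nat.factorization_eq_zero_of_not_dvd h
    obtain ⟨r, hr⟩ := hsq
    have hr0 : r ≠ 0 := by rintro rfl; exact h0 (by simpa using hr)
    rw [hr, Nat.factorization_mul hr0 hr0, Finsupp.add_apply] at e1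
    exact ⟨_, e1.symm⟩

lemma inv_sq_sum (x : ℕ) : ∑ a ∈ Finset.Icc 1 x, (1 : ℝ) / (a : ℝ) ^ 2 ≤ 2 - 1 / (x : ℝ) := by
  induction x with
  | zero => norm_num
  | succ n ih =>
    rw [Finset.sum_Icc_succ_top (by omega)]
    push_cast
    rcases Nat.eq_zero_or_pos n with rfl | hn
    · norm_num
    · have hn' : (0 : ℝ) < n := by exact_mod_cast hn
      have : (1 : ℝ) / ((n : ℝ) + 1) ^ 2 ≤ 1 / n - 1 / (n + 1) := by
        rw [div_sub_div _ _ hn'.ne' (by positivity), div_le_div_iff₀ (by positivity) (by positivity)]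
        nlinarith
      linarith

noncomputable def tT (k x : ℕ) (T : Finset (Fin k)) : Finset ℕ := if T.Nonempty ∧ Even T.card then Finset.Icc 1 x else {1}

noncomputable def sqs (k x : ℕ) : Finset (Fin k → ℕ) :=
  (Fintype.piFinset (fun _ : Fin k => Sx x)).filter (fun ν => IsSquare (∏ i, ν i))

lemma tT_sum (k x : ℕ) (hx : 1 ≤ x) (T : Finset (Fin k)) : ∑ a ∈ tT k x T, ((a : ℝ) ^ T.card) ^ (-(1 / 2) : ℝ) ≤
    2 * (if T.card = 2 then 1 + Real.log x else 1) := by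
  have hlx : 0 ≤ Real.log x := Real.log_nonneg (by exact_mod_cast hx)
  unfold tT
  by_cases h : T.Nonempty ∧ Even T.card
  · rw [if_pos h]
    obtain ⟨hn, r, hr⟩ := h
    have hc := Finset.card_pos.mpr hn
    have e : ∀ a ∈ Finset.Icc 1 x, ((a : ℝ) ^ T.card) ^ (-(1 / 2) : ℝ) = 1 / (a : ℝ) ^ r := by
      intro a ha
      have ha1 := (Finset.mem_Icc.mp ha).1
      rw [hr, pow_add, ← pow_two, ← Real.rpow_natCast ((a : ℝ) ^ r), ← Real.rpow_mul (by positivity)]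
      norm_num
      rw [Real.rpow_neg_one]
    rw [Finset.sum_congr rfl e]
    by_cases h2 : T.card = 2
    · rw [if_pos h2]
      have : r = 1 := by omega
      subst this
      have := harmonic_le_one_add_log x
      rw [harmonic_eq_sum_Icc] at this
      push_cast at this
      simp only [pow_one, one_div]
      linarith
    · rw [if_neg h2]
      have hr2 : 2 ≤ r := by omega
      have h3 := inv_sq_sum x
      have h4 : (0 : ℝ) ≤ 1 / (x : ℝ) := by positivity
      refine le_trans (Finset.sum_le_sum fun a ha => ?_) (h3.trans (by linarith))
      have ha1 : (1 : ℝ) ≤ a := by exact_mod_cast (Finset.mem_Icc.mp ha).1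
      exact one_div_le_one_div_of_le (by positivity) (pow_le_pow_right₀ ha1 hr2)
  · rw [if_neg h]
    simp only [Finset.sum_singleton, Nat.cast_one, one_pow, Real.one_rpow]
    split_ifs <;> linarith

lemma sq_sum (k x : ℕ) (hx : 1 ≤ x) : ∑ ν ∈ sqs k x, wt ν ≤ 2 ^ 2 ^ k * (1 + Real.log x) ^ k.choose 2 := by
  have hlx : 0 ≤ Real.log x := Real.log_nonneg (by exact_mod_cast hx)
  have hm : ∀ ν ∈ sqs k x, (∀ i, 1 ≤ ν i) ∧ (∀ i, ν i ≤ x) ∧ (∀ i, Squarefree (ν i)) ∧ IsSquare (∏ i, ν i) := by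
    intro ν hν
    unfold sqs at hν
    rw [Finset.mem_filter, Fintype.mem_piFinset] at hν
    exact ⟨fun i => (mem_Sx (hν.1 i)).1, fun i => (mem_Sx (hν.1 i)).2.1, fun i => (mem_Sx (hν.1 i)).2.2.2, hν.2⟩
  have e1 : ∀ ν ∈ sqs k x, wt ν = ∏ T, ((dec ν T : ℝ) ^ T.card) ^ (-(1 / 2) : ℝ) := by
    intro ν hν
    obtain ⟨h1, -, hs, -⟩ := hm ν hν
    unfold wt
    rw [Real.finsetProd_rpow _ _ (fun i _ => by positivity), Real.finsetProd_rpow _ _ (fun i _ => by positivity)]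
    congr 1
    have := prod_nu (dec ν)
    rw [nu_dec ν h1 hs] at this
    exact_mod_cast this
  rw [Finset.sum_congr rfl e1]
  have hinj : Set.InjOn (dec : (Fin k → ℕ) → _) (sqs k x) := by
    intro ν hν ν' hν' h
    rw [← nu_dec ν (hm ν hν).1 (hm ν hν).2.2.1, ← nu_dec ν' (hm ν' hν').1 (hm ν' hν').2.2.1, h]
  rw [← Finset.sum_image (f := fun z : Finset (Fin k) → ℕ => ∏ T, ((z T : ℝ) ^ T.card) ^ (-(1 / 2) : ℝ)) hinj]
  have hsub : (sqs k x).image dec ⊆ Fintype.piFinset (tT k x) := by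
    intro z hz
    rw [Finset.mem_image] at hz
    obtain ⟨ν, hν, rfl⟩ := hz
    obtain ⟨h1, hle, hs, hsq⟩ := hm ν hν
    rw [Fintype.mem_piFinset]
    intro T
    unfold tT
    split_ifs with h
    · exact Finset.mem_Icc.mpr ⟨dec_pos ν T, dec_le ν h1 hs hle T h.1⟩
    · rw [Finset.mem_singleton]
      refine dec_one ν h1 hs hsq T ?_
      by_cases h0 : T = ∅
      · exact Or.inl h0
      · exact Or.inr fun he => h ⟨Finset.nonempty_iff_ne_empty.mpr h0, he⟩
  refine (Finset.sum_le_sum_of_subset_of_nonneg hsub fun z _ _ => Finset.prod_nonneg fun T _ => by positivity).trans ?_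
  have e2 := Finset.prod_univ_sum (t := tT k x) (f := fun T a => ((a : ℝ) ^ T.card) ^ (-(1 / 2) : ℝ))
  rw [← e2]
  refine (Finset.prod_le_prod (fun T _ => Finset.sum_nonneg fun a _ => by positivity) (fun T _ => tT_sum k x hx T)).trans ?_
  rw [Finset.prod_mul_distrib, Finset.prod_const, Finset.prod_ite]
  simp only [Finset.prod_const, one_pow, mul_one, Finset.card_univ, Fintype.card_finset, Fintype.card_fin]
  have : (Finset.univ.filter (fun T : Finset (Fin k) => T.card = 2)) = Finset.powersetCard 2 Finset.univ := by
    ext T; simp [Finset.mem_powersetCard]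
  rw [this, Finset.card_powersetCard, Finset.card_univ, Fintype.card_fin]

lemma S2_upper (k x J : ℕ) (hx : 1 ≤ x) :
    ∑ j ∈ Finset.range J, Ax x (1 + 8 * j) ^ k ≤
      J * (2 ^ 2 ^ k * (1 + Real.log x) ^ k.choose 2) + 9 * (x : ℝ) ^ (2 * k) := by
  simp_rw [Ax_pow]
  rw [Finset.sum_comm]
  simp_rw [← Finset.mul_sum]
  set pi := Fintype.piFinset (fun _ : Fin k => Sx x) with hpi
  have hb : ∀ ν ∈ pi, wt ν * ∑ j ∈ Finset.range J, (jacobiSym (∏ i, ν i : ℕ) (1 + 8 * j) : ℝ) ≤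
      (if IsSquare (∏ i, ν i) then wt ν * J else 0) + 9 * (x : ℝ) ^ k := by
    intro ν hν
    rw [hpi, Fintype.mem_piFinset] at hν
    have hN1 : 1 ≤ ∏ i, ν i := Finset.one_le_prod' fun i _ => (mem_Sx (hν i)).1
    have hNx : ((∏ i, ν i : ℕ) : ℝ) ≤ (x : ℝ) ^ k := by
      exact_mod_cast prod_le_pow ν fun i => (mem_Sx (hν i)).2.1
    have hw1 := wt_le_one ν fun i => (mem_Sx (hν i)).1
    have hw0 := wt_nonneg ν
    split_ifs with h
    · have : ∑ j ∈ Finset.range J, (jacobiSym (∏ i, ν i : ℕ) (1 + 8 * j) : ℝ) ≤ J := by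
        refine (Finset.sum_le_card_nsmul _ _ 1 fun j _ => (le_abs_self _).trans (jac_abs_le _ _)).trans ?_
        simp
      have h9 : (0 : ℝ) ≤ 9 * (x : ℝ) ^ k := by positivity
      have := mul_le_mul_of_nonneg_left this hw0
      linarith
    · rw [zero_add]
      have hodd : (∏ i, ν i) % 2 = 1 := by
        have : ¬ 2 ∣ ∏ i, ν i := by
          rw [Prime.dvd_finsetProd_iff Nat.prime_two.prime]
          rintro ⟨i, -, hi⟩
          have := (mem_Sx (hν i)).2.2.1
          omega
        omega
      have hord : ordCompl[2] (∏ i, ν i) = ∏ i, ν i := by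
        rw [Nat.factorization_eq_zero_of_not_dvd (by omega)]; simp
      have h3 := pv_N _ hodd h 1 8 J ((Nat.coprime_pow_left_iff (n := 3) (by norm_num) 2 _).mpr
        (Nat.coprime_two_left.mpr (Nat.odd_iff.mpr hodd)))
      have e3 : ∑ j ∈ Finset.range J, (jacobiSym (∏ i, ν i : ℕ) (1 + 8 * j) : ℝ) =
          ∑ i ∈ Finset.range J, (jacobiSym (1 + 8 * i : ℕ) (∏ i, ν i) : ℝ) := by
        refine Finset.sum_congr rfl fun j _ => ?_
        rw [jac_flip _ _ hN1 (by omega), hord]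
      rw [e3]
      have h4 : ((∏ i, ν i : ℕ) : ℝ) ^ (5 / 8 : ℝ) ≤ (x : ℝ) ^ k := by
        calc ((∏ i, ν i : ℕ) : ℝ) ^ (5 / 8 : ℝ) ≤ ((∏ i, ν i : ℕ) : ℝ) ^ (1 : ℝ) :=
            Real.rpow_le_rpow_of_exponent_le (by exact_mod_cast hN1) (by norm_num)
          _ = ((∏ i, ν i : ℕ) : ℝ) := Real.rpow_one _
          _ ≤ _ := hNx
      have h5 := (le_abs_self _).trans h3
      have h9 : (0 : ℝ) ≤ 9 * (x : ℝ) ^ k := by positivity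
      calc _ ≤ wt ν * (9 * (x : ℝ) ^ k) := mul_le_mul_of_nonneg_left (by linarith) hw0
        _ ≤ _ := mul_le_of_le_one_left h9 hw1
  refine (Finset.sum_le_sum hb).trans ?_
  rw [Finset.sum_add_distrib, ← Finset.sum_filter, ← Finset.sum_mul]
  have h1 := sq_sum k x hx
  unfold sqs at h1
  have hJ : (0 : ℝ) ≤ J := by positivity
  have h2 := mul_le_mul_of_nonneg_right h1 hJ
  have hc : (pi.card : ℝ) ≤ (x : ℝ) ^ k := by exact_mod_cast pi_card k x
  have h3 : ∑ ν ∈ pi, 9 * (x : ℝ) ^ k ≤ 9 * (x : ℝ) ^ (2 * k) := by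
    rw [Finset.sum_const, nsmul_eq_mul]
    calc _ ≤ (x : ℝ) ^ k * (9 * (x : ℝ) ^ k) := by gcongr
      _ = _ := by ring
  linarith

end LBSM

namespace LBSM

lemma tangent (K : ℕ) (hk : Even (K + 1)) (F B : ℝ) :
    ((K : ℝ) + 1) * (F * B ^ K) - K * B ^ (K + 1) ≤ F ^ (K + 1) := by
  have h1 : F * B ^ K ≤ |F| * |B| ^ K := by
    rw [← abs_pow, ← abs_mul]; exact le_abs_self _
  rw [← hk.pow_abs F, ← hk.pow_abs B]
  have hf := abs_nonneg F
  have hb := abs_nonneg B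
  set f := |F|
  set b := |B|
  have h2 : ((K : ℝ) + 1) * (f * b ^ K) - K * b ^ (K + 1) ≤ f ^ (K + 1) := by
    rcases hb.eq_or_lt with hb0 | hb0
    · rw [← hb0]
      have hK : K ≠ 0 := by rintro rfl; simp at hk
      rw [zero_pow hK, zero_pow (by omega)]
      simp; positivity
    · have h3 := one_add_mul_le_pow (a := f / b - 1) (by have : 0 ≤ f / b := by positivity
                                                         linarith) (K + 1)
      rw [add_sub_cancel, div_pow, le_div_iff₀ (by positivity)] at h3
      push_cast at h3
      have e : (1 + ((K : ℝ) + 1) * (f / b - 1)) * b ^ (K + 1) = ((K : ℝ) + 1) * (f * b ^ K) - K * b ^ (K + 1) := by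
        field_simp
        ring
      linarith
  have hK : (0 : ℝ) ≤ (K : ℝ) + 1 := by positivity
  have := mul_le_mul_of_nonneg_left h1 hK
  linarith

lemma holder_step (K : ℕ) (hk : Even (K + 1)) {ι : Type} (s : Finset ι) (F A : ι → ℝ) (c C ℓ J : ℝ) (e : ℕ)
    (hc : 0 < c) (hC : 0 < C) (hℓ : 0 < ℓ) (hJ : 0 < J)
    (h1 : c * J * ℓ ^ (e + 1) ≤ ∑ j ∈ s, F j * A j ^ K) (h2 : ∑ j ∈ s, A j ^ (K + 1) ≤ C * J * ℓ ^ e) :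
    c * (c / C) ^ K * J * ℓ ^ (e + 1 + K) ≤ ∑ j ∈ s, F j ^ (K + 1) := by
  set l := c / C * ℓ with hl
  have hl0 : 0 < l := by positivity
  have h3 : ∑ j ∈ s, (((K : ℝ) + 1) * (F j * (l * A j) ^ K) - K * (l * A j) ^ (K + 1)) ≤ ∑ j ∈ s, F j ^ (K + 1) :=
    Finset.sum_le_sum fun j _ => tangent K hk _ _
  refine le_trans ?_ h3
  have e3 : ∑ j ∈ s, (((K : ℝ) + 1) * (F j * (l * A j) ^ K) - K * (l * A j) ^ (K + 1)) =
      l ^ K * (((K : ℝ) + 1) * ∑ j ∈ s, F j * A j ^ K - K * l * ∑ j ∈ s, A j ^ (K + 1)) := by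
    rw [Finset.mul_sum, Finset.mul_sum, ← Finset.sum_sub_distrib, Finset.mul_sum]
    refine Finset.sum_congr rfl fun j _ => ?_
    rw [mul_pow, mul_pow]; ring
  rw [e3]
  have h4 : c * J * ℓ ^ (e + 1) ≤ ((K : ℝ) + 1) * ∑ j ∈ s, F j * A j ^ K - K * l * ∑ j ∈ s, A j ^ (K + 1) := by
    have a1 := mul_le_mul_of_nonneg_left h1 (by positivity : (0 : ℝ) ≤ (K : ℝ) + 1)
    have a2 := mul_le_mul_of_nonneg_left h2 (by positivity : (0 : ℝ) ≤ (K : ℝ) * l)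
    have e4 : (K : ℝ) * l * (C * J * ℓ ^ e) = K * (c * J * ℓ ^ (e + 1)) := by
      rw [hl]; field_simp; ring
    linarith
  calc c * (c / C) ^ K * J * ℓ ^ (e + 1 + K) = l ^ K * (c * J * ℓ ^ (e + 1)) := by
        rw [hl, mul_pow]; ring
    _ ≤ _ := mul_le_mul_of_nonneg_left h4 (by positivity)

lemma choose_id (K : ℕ) : 1 + K + K.choose 2 = (K + 1).choose 2 + 1 := by
  rw [Nat.choose_succ_succ' K 1, Nat.choose_one_right]; ring

lemma exp_id (K : ℕ) : (K + 1).choose 2 + 1 + K = (K + 1) * (K + 1 + 1) / 2 := by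
  have h := Nat.choose_two_right (K + 1 + 1)
  rw [show K + 1 + 1 - 1 = K + 1 by omega, Nat.choose_succ_succ' (K + 1) 1, Nat.choose_one_right, mul_comm] at h
  rw [← h]; ring

lemma y_pow_le (J Q y m : ℕ) (θ : ℝ) (hJ : 1 ≤ J) (hQ : 0 < Q) (hy : (y : ℝ) ≤ (J : ℝ) ^ (1 / (Q : ℝ))) (hm : (m : ℝ) ≤ θ * Q) :
    (y : ℝ) ^ m ≤ (J : ℝ) ^ θ := by
  have hQ' : (0 : ℝ) < Q := by exact_mod_cast hQ
  calc (y : ℝ) ^ m ≤ ((J : ℝ) ^ (1 / (Q : ℝ))) ^ m := by gcongr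
    _ = (J : ℝ) ^ (1 / (Q : ℝ) * m) := by rw [← Real.rpow_natCast, ← Real.rpow_mul (by positivity)]
    _ ≤ (J : ℝ) ^ θ := by
      refine Real.rpow_le_rpow_of_exponent_le (by exact_mod_cast hJ) ?_
      rw [one_div, inv_mul_le_iff₀ hQ']; linarith

set_option maxHeartbeats 2000000 in
lemma moment_lower (K : ℕ) (hk : Even (K + 1)) : ∃ c : ℝ, 0 < c ∧ ∃ J₀ : ℕ, ∀ J : ℕ, J₀ ≤ J →
    c * J * Real.log J ^ ((K + 1) * (K + 1 + 1) / 2) ≤ ∑ j ∈ sf J, Fd (1 + 8 * j) ^ (K + 1) := by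
  obtain ⟨c1, C1, hc1, hC1, M, hM, hS1⟩ := S1_lower K
  set e := (K + 1).choose 2 with he
  set Q : ℕ := 1000 * (K + 1) * 2 ^ K with hQ
  have hQ0 : 0 < Q := by positivity
  have hQ' : (0 : ℝ) < Q := by exact_mod_cast hQ0
  set C2 : ℝ := 2 ^ 2 ^ (K + 1) * (1 + 2 ^ K) ^ e + 9 with hC2
  have hC20 : 0 < C2 := by positivity
  have ev1 : ∀ᶠ J : ℕ in atTop, (C1 / (c1 / 2)) ≤ (J : ℝ) ^ (5 / 1000 : ℝ) :=
    ((tendsto_rpow_atTop (by norm_num)).comp tendsto_natCast_atTop_atTop).eventually_ge_atTop _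
  have ev2 : ∀ᶠ J : ℕ in atTop, ((M : ℝ) ^ 2 + 3) ≤ (J : ℝ) ^ (1 / (2 * Q : ℝ)) :=
    ((tendsto_rpow_atTop (by positivity)).comp tendsto_natCast_atTop_atTop).eventually_ge_atTop _
  have ev3 : ∀ᶠ J : ℕ in atTop, (24 : ℝ) ≤ (J : ℝ) ^ (1 / 2 : ℝ) :=
    ((tendsto_rpow_atTop (by positivity)).comp tendsto_natCast_atTop_atTop).eventually_ge_atTop _
  obtain ⟨J₀, hJ₀⟩ := (ev1.and (ev2.and (ev3.and (eventually_ge_atTop 1)))).exists_forall_of_atTop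
  refine ⟨c1 / 2 * ((c1 / 2) / C2) ^ K * (1 / (2 * Q : ℝ)) ^ (e + 1 + K), by positivity, J₀, fun J hJ => ?_⟩
  obtain ⟨b1, b2, b3, hJ1⟩ := hJ₀ J hJ
  have hJr : (1 : ℝ) ≤ J := by exact_mod_cast hJ1
  set r : ℝ := (J : ℝ) ^ (1 / (Q : ℝ)) with hr
  have hr2 : r = ((J : ℝ) ^ (1 / (2 * Q : ℝ))) ^ 2 := by
    rw [← Real.rpow_natCast, ← Real.rpow_mul (by positivity), hr]
    congr 1
    push_cast
    field_simp
  set w := (J : ℝ) ^ (1 / (2 * Q : ℝ)) with hw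
  set y : ℕ := ⌊r⌋₊ with hy
  have hM0 : (0 : ℝ) ≤ (M : ℝ) ^ 2 := by positivity
  have hyr : (y : ℝ) ≤ r := Nat.floor_le (by positivity)
  have hyw : w ≤ y := by
    have : r < y + 1 := Nat.lt_floor_add_one r
    nlinarith
  have hyM : M ^ 2 ≤ y := by
    have : ((M ^ 2 : ℕ) : ℝ) ≤ y := by push_cast; linarith
    exact_mod_cast this
  have hy3 : (3 : ℝ) ≤ y := by linarith
  set ℓ := Real.log y with hl
  have hl1 : 1 ≤ ℓ := by
    rw [hl, Real.le_log_iff_exp_le (by linarith)]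
    have := Real.exp_one_lt_d9
    linarith
  have hlJ : 1 / (2 * Q : ℝ) * Real.log J ≤ ℓ := by
    rw [← Real.log_rpow (by linarith)]
    exact Real.log_le_log (by positivity) hyw
  have hpow : ∀ (m : ℕ) (θ : ℝ), (m : ℝ) ≤ θ * Q → (y : ℝ) ^ m ≤ (J : ℝ) ^ θ :=
    fun m θ hm => y_pow_le J Q y m θ hJ1 hQ0 hyr hm
  have hQr : (Q : ℝ) = 1000 * ((K : ℝ) + 1) * 2 ^ K := by rw [hQ]; push_cast; ring
  have h2K : (1 : ℝ) ≤ 2 ^ K := one_le_pow₀ (by norm_num)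
  have hK0 : (0 : ℝ) ≤ K := by positivity
  have hK2 : (0 : ℝ) ≤ K * 2 ^ K := by positivity
  have hsqrt : ((Nat.sqrt (8 * J) : ℕ) : ℝ) ≤ 3 * (J : ℝ) ^ (1 / 2 : ℝ) := by
    rw [← Real.sqrt_eq_rpow]
    refine (Real.nat_sqrt_le_real_sqrt).trans ?_
    rw [Real.sqrt_le_left (by positivity), mul_pow, Real.sq_sqrt (by positivity)]
    push_cast
    linarith
  have hJJ : (J : ℝ) = (J : ℝ) ^ (1 / 2 : ℝ) * (J : ℝ) ^ (1 / 2 : ℝ) := by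
    rw [← Real.rpow_add (by linarith)]; norm_num
  have hsize : (((y ^ (2 ^ K + 2)) ^ 2 : ℕ) : ℝ) + y + (Nat.sqrt (8 * J) + 1 : ℕ) ≤ J / 4 := by
    have a1 := hpow ((2 ^ K + 2) * 2) (1 / 2) (by push_cast; rw [hQr]; nlinarith)
    have a2 := hpow 1 (1 / 2) (by push_cast; rw [hQr]; nlinarith)
    rw [pow_one] at a2
    rw [pow_mul] at a1
    push_cast
    nlinarith
  have h1 := hS1 y J hyM hJ1 hsize
  rw [choose_id, ← he] at h1
  have hle : (1 : ℝ) ≤ ℓ ^ e := one_le_pow₀ hl1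
  have hle1 : (1 : ℝ) ≤ ℓ ^ (e + 1) := one_le_pow₀ hl1
  have herr : C1 * (J : ℝ) ^ (99 / 100 : ℝ) * ((y ^ 2 ^ K : ℕ) : ℝ) ^ (2 * K) ≤ c1 / 2 * J * ℓ ^ (e + 1) := by
    have a1 := hpow (2 ^ K * (2 * K)) (5 / 1000) (by push_cast; rw [hQr]; nlinarith)
    have a2 : ((y ^ 2 ^ K : ℕ) : ℝ) ^ (2 * K) ≤ (J : ℝ) ^ (5 / 1000 : ℝ) := by
      push_cast; rw [← pow_mul]; exact a1
    have a3 : (J : ℝ) ^ (99 / 100 : ℝ) * (J : ℝ) ^ (5 / 1000 : ℝ) * (J : ℝ) ^ (5 / 1000 : ℝ) = J := by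
      rw [← Real.rpow_add (by linarith), ← Real.rpow_add (by linarith)]; norm_num
    rw [div_le_iff₀ (by positivity)] at b1
    calc C1 * (J : ℝ) ^ (99 / 100 : ℝ) * ((y ^ 2 ^ K : ℕ) : ℝ) ^ (2 * K)
        ≤ ((J : ℝ) ^ (5 / 1000 : ℝ) * (c1 / 2)) * (J : ℝ) ^ (99 / 100 : ℝ) * (J : ℝ) ^ (5 / 1000 : ℝ) := by gcongr
      _ = c1 / 2 * ((J : ℝ) ^ (99 / 100 : ℝ) * (J : ℝ) ^ (5 / 1000 : ℝ) * (J : ℝ) ^ (5 / 1000 : ℝ)) := by ring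
      _ = c1 / 2 * J := by rw [a3]
      _ ≤ c1 / 2 * J * ℓ ^ (e + 1) := le_mul_of_one_le_right (by positivity) hle1
  have h1' : c1 / 2 * J * ℓ ^ (e + 1) ≤ ∑ j ∈ sf J, Fd (1 + 8 * j) * Ax (y ^ 2 ^ K) (1 + 8 * j) ^ K := by linarith
  have hy1 : 1 ≤ y := by
    have : (1 : ℝ) ≤ y := by linarith
    exact_mod_cast this
  have h2 := S2_upper (K + 1) (y ^ 2 ^ K) J (Nat.one_le_pow _ _ hy1)
  have h2' : ∑ j ∈ sf J, Ax (y ^ 2 ^ K) (1 + 8 * j) ^ (K + 1) ≤ C2 * J * ℓ ^ e := by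
    have a0 : ∑ j ∈ sf J, Ax (y ^ 2 ^ K) (1 + 8 * j) ^ (K + 1) ≤ ∑ j ∈ Finset.range J, Ax (y ^ 2 ^ K) (1 + 8 * j) ^ (K + 1) :=
      Finset.sum_le_sum_of_subset_of_nonneg (Finset.filter_subset _ _) fun j _ _ => hk.pow_nonneg _
    refine (a0.trans h2).trans ?_
    have a1 := hpow (2 ^ K * (2 * (K + 1))) 1 (by push_cast; rw [hQr]; nlinarith)
    rw [Real.rpow_one] at a1
    have a2 : ((y ^ 2 ^ K : ℕ) : ℝ) ^ (2 * (K + 1)) ≤ J := by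
      push_cast; rw [← pow_mul]; exact a1
    have a3 : 1 + Real.log ((y ^ 2 ^ K : ℕ) : ℝ) ≤ (1 + 2 ^ K) * ℓ := by
      push_cast
      rw [Real.log_pow]
      push_cast
      linarith
    have a4 : 0 ≤ 1 + Real.log ((y ^ 2 ^ K : ℕ) : ℝ) := by
      have := Real.log_natCast_nonneg (y ^ 2 ^ K)
      linarith
    have a5 : (1 + Real.log ((y ^ 2 ^ K : ℕ) : ℝ)) ^ e ≤ (1 + 2 ^ K) ^ e * ℓ ^ e := by
      rw [← mul_pow]; gcongr
    have a6 : (J : ℝ) ≤ J * ℓ ^ e := le_mul_of_one_le_right (by positivity) hle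
    calc (J : ℝ) * (2 ^ 2 ^ (K + 1) * (1 + Real.log ((y ^ 2 ^ K : ℕ) : ℝ)) ^ e) + 9 * ((y ^ 2 ^ K : ℕ) : ℝ) ^ (2 * (K + 1))
        ≤ (J : ℝ) * (2 ^ 2 ^ (K + 1) * ((1 + 2 ^ K) ^ e * ℓ ^ e)) + 9 * (J * ℓ ^ e) := by
          gcongr
          linarith
      _ = C2 * J * ℓ ^ e := by rw [hC2]; ring
  have h3 := holder_step K hk (sf J) (fun j => Fd (1 + 8 * j)) (fun j => Ax (y ^ 2 ^ K) (1 + 8 * j)) (c1 / 2) C2 ℓ J e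
    (by positivity) hC20 (by linarith) (by linarith) h1' h2'
  refine le_trans ?_ h3
  rw [← exp_id, ← he]
  have hlogJ : 0 ≤ Real.log J := Real.log_nonneg hJr
  calc _ = c1 / 2 * (c1 / 2 / C2) ^ K * J * (1 / (2 * Q : ℝ) * Real.log J) ^ (e + 1 + K) := by rw [mul_pow]; ring
    _ ≤ _ := by gcongr

end LBSM

namespace LBSM

lemma L_val (m n : ℕ) (hmn : m = n) (inst : NeZero m) (χ : DirichletCharacter ℂ m) (hp : χ.IsPrimitive) (h2 : χ ^ 2 = 1)
    (hn : n % 4 = 1) (hs : Squarefree n) (h1 : 1 < n) :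
    @DirichletCharacter.LFunction m inst χ (1 / 2) = ((Fd n : ℝ) : ℂ) := by
  subst hmn
  have e : χ = jchar m := eq_of_primitive hs χ (jchar m) hp (jchar_primitive m (by omega) hs) h2 (jchar_sq m)
  rw [e]
  exact L_formula m hn hs h1

lemma char_real {N : ℕ} (χ : DirichletCharacter ℂ N) (h2 : χ ^ 2 = 1) (a : ZMod N) :
    (starRingEnd ℂ) (χ a) = χ a := by
  by_cases h : IsUnit a
  · obtain ⟨u, rfl⟩ := h
    have h3 : χ u * χ u = 1 := by
      have : (χ ^ 2) u = 1 := by rw [h2, MulChar.one_apply_coe]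
      rwa [MulChar.pow_apply_coe, pow_two] at this
    rcases mul_self_eq_one_iff.mp h3 with h4 | h4 <;> simp [h4]
  · rw [MulChar.map_nonunit _ h]; simp

lemma L_real {N : ℕ} [NeZero N] (χ : DirichletCharacter ℂ N) (h2 : χ ^ 2 = 1) (hne : χ ≠ 1) :
    ∃ v : ℝ, χ.LFunction (1 / 2) = v := by
  have hd := DirichletCharacter.differentiable_LFunction hne
  have hd2 : Differentiable ℂ (fun s => (starRingEnd ℂ) (χ.LFunction ((starRingEnd ℂ) s))) := by
    intro s
    rw [← Complex.conj_conj s]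
    exact (hd _).conj_conj
  have ha := Complex.analyticOnNhd_univ_iff_differentiable.mpr hd
  have ha2 := Complex.analyticOnNhd_univ_iff_differentiable.mpr hd2
  have hopen : IsOpen {s : ℂ | 1 < s.re} := isOpen_lt continuous_const Complex.continuous_re
  have hev : χ.LFunction =ᶠ[nhds (2 : ℂ)] (fun s => (starRingEnd ℂ) (χ.LFunction ((starRingEnd ℂ) s))) := by
    filter_upwards [hopen.mem_nhds (show (1 : ℝ) < (2 : ℂ).re by norm_num)] with s hs
    have hs' : 1 < s.re := hs
    rw [DirichletCharacter.LFunction_eq_LSeries χ hs', DirichletCharacter.LFunction_eq_LSeries χ (by simpa using hs')]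
    unfold LSeries
    rw [Complex.conj_tsum]
    refine tsum_congr fun n => ?_
    rw [LSeries.term_def, LSeries.term_def]
    split_ifs with h
    · simp
    · rw [map_div₀, char_real χ h2, Complex.cpow_conj _ _ (by rw [Complex.natCast_arg]; exact Real.pi_pos.ne)]
      simp
  have heq := AnalyticOnNhd.eq_of_eventuallyEq ha ha2 hev
  have h3 := congrFun heq (1 / 2)
  have h4 : (starRingEnd ℂ) (χ.LFunction (1 / 2)) = χ.LFunction (1 / 2) := by
    conv_rhs => rw [h3]
    simp [map_ofNat]
  obtain ⟨v, hv⟩ := Complex.conj_eq_iff_real.mp h4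
  exact ⟨v, hv⟩

end LBSM

namespace LBSM

lemma fund_real (d : ℤ) (h : IsFundamentalDiscriminant d) (χ : DirichletCharacter ℂ d.natAbs) (hp : χ.IsPrimitive)
    (h2 : χ ^ 2 = 1) : ∃ v : ℝ, @DirichletCharacter.LFunction d.natAbs h.natAbs_ne_zero χ (1 / 2) = v := by
  have := h.natAbs_ne_zero
  refine L_real χ h2 ?_
  rintro rfl
  rw [DirichletCharacter.isPrimitive_def, DirichletCharacter.conductor_one] at hp
  obtain ⟨h1, h3 | h3⟩ := h <;> omega

lemma final_ineq (c B : ℝ) (hc : 0 < c) (e J₀ : ℕ) (f : ℕ → ℝ)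
    (h : ∀ J : ℕ, J₀ ≤ J → c * J * Real.log J ^ e ≤ f J) :
    ∃ c' : ℝ, 0 < c' ∧ ∃ X₀ : ℕ, ∀ X : ℕ, X₀ ≤ X → 1 ≤ X / 8 ∧ c' * X * Real.log X ^ e ≤ f (X / 8) - B := by
  obtain ⟨n, hn⟩ := exists_nat_ge (32 * B / c)
  refine ⟨c / 2 / 16 * (1 / 2) ^ e, by positivity, 256 + 16 * J₀ + n, fun X hX => ⟨by omega, ?_⟩⟩
  set J := X / 8 with hJ
  have hXr : (256 : ℝ) ≤ X := by
    have : 256 ≤ X := by omega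
    exact_mod_cast this
  have hJX : (X : ℝ) / 16 ≤ J := by
    have : X ≤ 16 * J := by omega
    have : (X : ℝ) ≤ 16 * J := by exact_mod_cast this
    linarith
  have hJ16 : (16 : ℝ) ≤ J := by linarith
  have hl : 1 / 2 * Real.log X ≤ Real.log J := by
    rw [← Real.log_rpow (by linarith), ← Real.sqrt_eq_rpow]
    refine Real.log_le_log (Real.sqrt_pos.mpr (by linarith)) (le_trans ?_ hJX)
    rw [Real.sqrt_le_left (by linarith)]
    nlinarith
  have hl1 : 1 ≤ Real.log J := by
    rw [Real.le_log_iff_exp_le (by linarith)]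
    have := Real.exp_one_lt_d9
    linarith
  have hlX : 0 ≤ Real.log X := Real.log_nonneg (by linarith)
  have h1 := h J (by omega)
  have hle : 1 ≤ Real.log J ^ e := one_le_pow₀ hl1
  have hB : B ≤ c / 2 * J * Real.log J ^ e := by
    have hnX : (n : ℝ) ≤ X := by
      have : n ≤ X := by omega
      exact_mod_cast this
    have h3 : 32 * B ≤ X * c := by
      rw [div_le_iff₀ hc] at hn
      nlinarith
    calc B ≤ c / 2 * J := by nlinarith
      _ ≤ _ := le_mul_of_one_le_right (by positivity) hle
  have h2 : c / 2 / 16 * (1 / 2) ^ e * X * Real.log X ^ e ≤ c / 2 * J * Real.log J ^ e := by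
    calc _ = c / 2 * (X / 16) * (1 / 2 * Real.log X) ^ e := by rw [mul_pow]; ring
      _ ≤ _ := by gcongr
  linarith

end LBSM

/-- Theorem 2: for every even natural number `k`,
`∑'_{|d| ≤ X} L(1/2, χ_d)^k ≫_k X (log X)^{k(k+1)/2}`, the sum being over fundamental
discriminants `d` with `|d| ≤ X`, where `χ_d` is the real primitive quadratic
character modulo `|d|` attached to `d` (the unique primitive quadratic character
modulo `|d|` with `χ_d(-1) = sign d`). -/
theorem lower_bound_symplectic_moments
    (k : ℕ) (hk : Even k) (hk0 : 0 < k)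
    (χ : (d : ℤ) → DirichletCharacter ℂ d.natAbs)
    (hχ : ∀ d : ℤ, IsFundamentalDiscriminant d →
      (χ d).IsPrimitive ∧ (χ d) ^ 2 = 1 ∧
        (χ d) (-1) = (if 0 < d then 1 else -1)) :
    ∃ c : ℝ, 0 < c ∧ ∃ X₀ : ℕ, ∀ X : ℕ, X₀ ≤ X →
      c * X * Real.log X ^ (k * (k + 1) / 2) ≤
        (∑ d ∈ Finset.Icc (-(X : ℤ)) (X : ℤ),
          if h : IsFundamentalDiscriminant d then
            (@DirichletCharacter.LFunction d.natAbs h.natAbs_ne_zero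
              (χ d) (1 / 2)) ^ k
          else 0).re := by
  obtain ⟨K, rfl⟩ : ∃ K, k = K + 1 := ⟨k - 1, by omega⟩
  obtain ⟨c, hc, J₀, hm⟩ := LBSM.moment_lower K hk
  obtain ⟨c', hc', X₀, hX₀⟩ := LBSM.final_ineq c (LBSM.Fd 1 ^ (K + 1)) hc _ J₀ _ hm
  refine ⟨c', hc', X₀, fun X hX => ?_⟩
  obtain ⟨hJ1, hfin⟩ := hX₀ X hX
  refine hfin.trans ?_
  set J := X / 8 with hJ
  have h0 : 0 ∈ LBSM.sf J := by
    unfold LBSM.sf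
    simp
    omega
  rw [← Finset.add_sum_erase _ _ h0]
  simp only [Nat.mul_zero, Nat.add_zero, add_sub_cancel_left]
  rw [Complex.re_sum]
  obtain ⟨G, hG⟩ : ∃ G : ℤ → ℝ, G = (fun d : ℤ => (if h : IsFundamentalDiscriminant d then
            (@DirichletCharacter.LFunction d.natAbs h.natAbs_ne_zero
              (χ d) (1 / 2)) ^ (K + 1)
          else 0).re) := ⟨_, rfl⟩
  have hinj : Set.InjOn (fun j : ℕ => ((1 + 8 * j : ℕ) : ℤ)) ((LBSM.sf J).erase 0) := by
    intro a _ b _ h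
    simp only at h
    omega
  have hval : ∀ j ∈ (LBSM.sf J).erase 0, LBSM.Fd (1 + 8 * j) ^ (K + 1) =
      G ((1 + 8 * j : ℕ) : ℤ) := by
    intro j hj
    rw [Finset.mem_erase, LBSM.sf, Finset.mem_filter] at hj
    have hf : IsFundamentalDiscriminant ((1 + 8 * j : ℕ) : ℤ) := by
      refine ⟨by omega, Or.inl ⟨by omega, ?_⟩⟩
      rw [Int.squarefree_natCast]
      exact hj.2.2
    obtain ⟨g1, g2, -⟩ := hχ _ hf
    rw [hG]
    simp only [dif_pos hf]
    rw [LBSM.L_val _ (1 + 8 * j) (Int.natAbs_natCast _) hf.natAbs_ne_zero _ g1 g2 (by omega) hj.2.2 (by omega)]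
    rw [← Complex.ofReal_pow, Complex.ofReal_re]
  rw [Finset.sum_congr rfl hval, ← Finset.sum_image (f := G) (g := fun j : ℕ => ((1 + 8 * j : ℕ) : ℤ)) hinj, hG]
  refine Finset.sum_le_sum_of_subset_of_nonneg ?_ ?_
  · intro d hd
    rw [Finset.mem_image] at hd
    obtain ⟨j, hj, rfl⟩ := hd
    rw [Finset.mem_erase, LBSM.sf, Finset.mem_filter, Finset.mem_range] at hj
    rw [Finset.mem_Icc]
    omega
  · intro d _ _
    split_ifs with h
    · obtain ⟨g1, g2, -⟩ := hχ _ h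
      obtain ⟨v, hv⟩ := LBSM.fund_real d h (χ d) g1 g2
      rw [hv, ← Complex.ofReal_pow, Complex.ofReal_re]
      exact hk.pow_nonneg v
    · simp
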